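/- arXiv:1205.2803 — 6 statements merged into one kernel-verified Lean document; each statement's English description precedes it below -/
import Mathlib

section
/- Energy balance for the 1D Wigner–BGK equation: let ħ > 0, τ > 0, let V : ℝ → ℝ be a Schwartz function, and let t ↦ f(t) be a continuously differentiable curve in the Schwartz space S(ℝ^2) of real-valued functions of (x,v), such that for all t, x, v: ∂f/∂t + v ∂f/∂x + (Θ[V] f(t,x,·))(v) = (f_eq - f)/τ, where ρ(t,x) = ∫_ℝ f(t,x,v) dv > 0, ρ u = ∫_ℝ v f dv, ρ T = ∫_ℝ (v-u)^2 f dv with T(t,x) > 0, and f_eq(t,x,v) = ρ (2π T)^{-1/2} exp(-(v-u)^2/(2T)). Then d/dt ∫_ℝ ∫_ℝ v^2 f(t,x,v) dx dv = -2 ∫_ℝ ρ(t,x) u(t,x) V'(x) dx. -/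
open MeasureTheory Complex

/-- The one-dimensional nonlocal Wigner potential operator
`(Θ[V]f)(x,v) = (-i)/(2πℏ²) ∫ [V(x+y/2) - V(x-y/2)] e^{iyv/ℏ} (∫ f(w) e^{-iyw/ℏ} dw) dy`. -/
noncomputable def wignerTheta (ℏ : ℝ) (V : ℝ → ℝ) (f : ℝ → ℂ) (x v : ℝ) : ℂ :=
  (-Complex.I) / (2 * Real.pi * ℏ ^ 2) *
    ∫ y : ℝ, ((V (x + y / 2) - V (x - y / 2) : ℝ) : ℂ) *
      Complex.exp (Complex.I * y * v / ℏ) *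
      ∫ w : ℝ, f w * Complex.exp (-Complex.I * y * w / ℏ)

/-!
Formally, multiply the equation by `v²` and integrate: free transport drops out after integration
in `x`, the Maxwellian has the mass and energy of `f`, so that relaxation drops out, and `Θ[V]` is
convolution in `v` with an odd kernel whose first moment is `V'(x)`, so that it contributes
`2 ρ u V'`.

The difficulty is that time regularity is only pointwise in `(x, v)`, with no bound uniform in time
to justify differentiating under the integral sign. The remedy is the norm of `L¹((1 + v²) dx dv)`.
The free flow `(x, v) ↦ (x + tv, v)` preserves it, and by the equation the derivative of `f` along
that flow is at most a constant times `f` in this norm, uniformly in time. Hence on a short time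
interval where the mild (Duhamel) form of the transport equation holds, the norm at most doubles.

Let `F` be the closed set of times near which the mild form, with bounded norm, fails. If `F` were
nonempty, then by Baire the norm and the regularity in `x` would be uniformly controlled on some
portion of `F`. By the doubling bound the norm would stay bounded across the complementary gaps of
that portion, so the fundamental theorem of calculus along the closed set, with the mild form on the
gaps, would yield the mild form near the whole portion: a contradiction. So the mild form holds
between any two times, and integrating it against `v²` justifies the formal computation.
-/

namespace WignerBGK

open Set Filter Topology Convolution SchwartzMap FourierTransform
open scoped ENNReal NNReal

section ClosedSets

/-- The pairs `(a, b)` of points of `F` bounding a bounded connected component of the complement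
of `F`. -/
def gaps (F : Set ℝ) : Set (ℝ × ℝ) :=
  {p | p.1 ∈ F ∧ p.2 ∈ F ∧ p.1 < p.2 ∧ Disjoint (Ioo p.1 p.2) F}

lemma countable_gaps (F : Set ℝ) : (gaps F).Countable := by
  refine PairwiseDisjoint.countable_of_isOpen (s := fun p : ℝ × ℝ => Ioo p.1 p.2) ?_
    (fun _ _ => isOpen_Ioo) fun p hp => nonempty_Ioo.2 hp.2.2.1
  rintro ⟨a, b⟩ ⟨ha, hb, hab, habF⟩ ⟨a', b'⟩ ⟨ha', hb', hab', habF'⟩ hne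
  simp only [Function.onFun, Ioo_disjoint_Ioo]
  by_contra! hlt
  have haa' : a = a' := by
    by_contra hne
    rcases lt_or_gt_of_ne hne with h | h
    · exact disjoint_left.1 habF ⟨h, by simp_all⟩ ha'
    · exact disjoint_left.1 habF' ⟨h, by simp_all⟩ ha
  have hbb' : b = b' := by
    by_contra hne
    rcases lt_or_gt_of_ne hne with h | h
    · exact disjoint_left.1 habF' ⟨by simp_all, h⟩ hb
    · exact disjoint_left.1 habF ⟨by simp_all, h⟩ hb'
  exact hne (Prod.ext haa' hbb')

lemma exists_mem_gaps_of_eventually_notMem {F : Set ℝ} (hF : IsClosed F) {a d : ℝ} (ha : a ∈ F)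
    (hd : d ∈ F) (had : a < d) (hev : ∀ᶠ s in 𝓝[>] a, s ∉ F) : ∃ b, (a, b) ∈ gaps F := by
  obtain ⟨e, hae, hsub⟩ := mem_nhdsGT_iff_exists_Ioo_subset.1 hev
  have hed : e ≤ d := not_lt.1 fun h => hsub ⟨had, h⟩ hd
  have hbdd : BddBelow (F ∩ Ici e) := ⟨e, fun _ hs => hs.2⟩
  have hb := (hF.inter isClosed_Ici).csInf_mem ⟨d, hd, hed⟩ hbdd
  refine ⟨sInf (F ∩ Ici e), ha, hb.1, lt_of_lt_of_le hae hb.2, disjoint_left.2 fun s hs hsF => ?_⟩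
  rcases lt_or_ge s e with h | h
  · exact hsub ⟨hs.1, h⟩ hsF
  · exact (csInf_le hbdd ⟨hsF, h⟩).not_gt hs.2

lemma exists_mem_inter_uIcc_forall_notMem {F : Set ℝ} (hF : IsClosed F) {t₀ : ℝ} (ht₀ : t₀ ∈ F)
    (t : ℝ) : ∃ a ∈ F ∩ uIcc t₀ t, ∀ s ∈ uIcc a t, s ≠ a → s ∉ F := by
  obtain ⟨a, ha, hmin⟩ := (isCompact_uIcc.inter_left hF).exists_isMinOn ⟨t₀, ht₀, left_mem_uIcc⟩
    (f := fun s => |t - s|) (by fun_prop)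
  refine ⟨a, ha, fun s hs hsa hsF => hsa ?_⟩
  have hle : |t - a| ≤ |t - s| :=
    hmin ⟨hsF, uIcc_subset_uIcc ha.2 right_mem_uIcc hs⟩
  rcases mem_uIcc.1 hs with h | h
  · rw [abs_of_nonneg (by linarith), abs_of_nonneg (by linarith)] at hle
    linarith
  · rw [abs_of_nonpos (by linarith), abs_of_nonpos (by linarith)] at hle
    linarith

lemma le_of_forall_gaps_of_frequently {α : Type*} [LinearOrder α] [TopologicalSpace α]
    [OrderClosedTopology α] {K : Set ℝ} {c d : ℝ} (hK : IsCompact K) (hc : c ∈ K)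
    (hd : IsGreatest K d) {φ : ℝ → α} (hφ : ContinuousOn φ K)
    (hgap : ∀ p ∈ gaps K, φ p.2 ≤ φ p.1)
    (hacc : ∀ t ∈ K, (∃ᶠ s in 𝓝[>] t, s ∈ K) → ∃ᶠ s in 𝓝[>] t, s ∈ K ∧ φ s ≤ φ t) :
    φ d ≤ φ c := by
  have hcpt : IsCompact (K ∩ φ ⁻¹' Iic (φ c)) :=
    hK.of_isClosed_subset (hφ.preimage_isClosed_of_isClosed hK.isClosed isClosed_Iic)
      inter_subset_left
  obtain ⟨m, ⟨hmK, hmc⟩, hmax⟩ := hcpt.exists_isGreatest ⟨c, hc, le_rfl⟩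
  have hnot : ∀ s ∈ K, m < s → ¬ φ s ≤ φ m := fun s hs hms hle =>
    (hmax ⟨hs, hle.trans hmc⟩).not_gt hms
  rcases (hd.2 hmK).eq_or_lt with rfl | hmd
  · exact hmc
  by_cases hfreq : ∃ᶠ s in 𝓝[>] m, s ∈ K
  · obtain ⟨s, ⟨hsK, hle⟩, hms⟩ := ((hacc m hmK hfreq).and_eventually self_mem_nhdsWithin).exists
    exact absurd hle (hnot s hsK hms)
  · obtain ⟨b, hb⟩ := exists_mem_gaps_of_eventually_notMem hK.isClosed hmK hd.1 hmd
      (not_frequently.1 hfreq)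
    exact absurd (hgap _ hb) (hnot b hb.2.1 hb.2.2.1)

end ClosedSets

section FundamentalTheorem

lemma eventually_sub_le_mul_of_hasDerivWithinAt {h : ℝ → ℝ} {h' y m : ℝ} {K : Set ℝ}
    (hder : HasDerivWithinAt h h' K m) (hy : h' < y) :
    ∀ᶠ s in 𝓝[>] m, s ∈ K → h s - h m ≤ (s - m) * y := by
  have hslope := (hder.mono inter_subset_left).limsup_slope_le' (s := K ∩ Ioi m)
    (fun hm => lt_irrefl m hm.2) hy
  rw [inter_comm, nhdsWithin_inter', eventually_inf_principal] at hslope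
  filter_upwards [hslope, self_mem_nhdsWithin] with s hs hms hsK
  have := mul_le_mul_of_nonneg_left (hs hsK).le (sub_pos.2 hms.out).le
  rwa [← smul_eq_mul, sub_smul_slope] at this

lemma eventually_mul_le_integral_of_lowerSemicontinuous {g : ℝ → EReal} {m d y : ℝ}
    (hg : LowerSemicontinuous g) (hint : IntegrableOn (fun r => (g r).toReal) (Icc m d))
    (htop : ∀ᵐ r ∂volume.restrict (Icc m d), g r < ⊤) (hmd : m < d) (hy : (y : EReal) < g m) :
    ∀ᶠ s in 𝓝[>] m, (s - m) * y ≤ ∫ r in m..s, (g r).toReal := by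
  obtain ⟨e, hme, hsub⟩ := mem_nhdsGE_iff_exists_Icc_subset.1
    (mem_nhdsWithin_of_mem_nhds (hg.lowerSemicontinuousAt _ _ hy))
  filter_upwards [Ioo_mem_nhdsGT (lt_min hme hmd)] with s hs
  have hIcc : Icc m s ⊆ Icc m d := Icc_subset_Icc_right (hs.2.le.trans (min_le_right _ _))
  have hsI : IntervalIntegrable (fun r => (g r).toReal) volume m s :=
    (intervalIntegrable_iff_integrableOn_Icc_of_le hs.1.le).2 (hint.mono_set hIcc)
  calc (s - m) * y = ∫ _ in m..s, y := by simp
    _ ≤ ∫ r in m..s, (g r).toReal := by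
      refine intervalIntegral.integral_mono_ae_restrict hs.1.le intervalIntegrable_const hsI ?_
      filter_upwards [ae_mono (Measure.restrict_mono hIcc le_rfl) htop,
        ae_restrict_mem measurableSet_Icc] with r hr hrs
      have hyr : (y : EReal) < g r := hsub ⟨hrs.1, hrs.2.trans (hs.2.le.trans (min_le_left _ _))⟩
      simpa using EReal.toReal_le_toReal hyr.le (EReal.coe_ne_bot y) hr.ne

lemma sub_le_integral_of_lowerSemicontinuous {K : Set ℝ} {c d : ℝ} (hK : IsClosed K)
    (hc : IsLeast K c) (hd : IsGreatest K d) {h g : ℝ → ℝ} {G : ℝ → EReal}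
    (hgG : ∀ t, (g t : EReal) < G t) (hG : LowerSemicontinuous G)
    (hint : IntegrableOn (fun r => (G r).toReal) (Icc c d))
    (htop : ∀ᵐ r ∂volume.restrict (Icc c d), G r < ⊤)
    (hder : ∀ t ∈ K, HasDerivWithinAt h (g t) K t)
    (hgap : ∀ p ∈ gaps K, h p.2 - h p.1 ≤ ∫ r in p.1..p.2, (G r).toReal) :
    h d - h c ≤ ∫ r in c..d, (G r).toReal := by
  have hcd : c ≤ d := hc.2 hd.1
  have hKI : K ⊆ Icc c d := fun t ht => ⟨hc.2 ht, hd.2 ht⟩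
  have hinterval : ∀ {a b}, a ∈ Icc c d → b ∈ Icc c d →
      IntervalIntegrable (fun r => (G r).toReal) volume a b := fun ha hb =>
    (hint.mono_set (ordConnected_Icc.uIcc_subset ha hb)).intervalIntegrable
  have hsub : ∀ {a b}, a ∈ Icc c d → b ∈ Icc c d →
      (∫ r in c..b, (G r).toReal) - ∫ r in c..a, (G r).toReal = ∫ r in a..b, (G r).toReal :=
    fun ha hb => intervalIntegral.integral_interval_sub_left
      (hinterval (left_mem_Icc.2 hcd) hb) (hinterval (left_mem_Icc.2 hcd) ha)
  suffices h d - (∫ r in c..d, (G r).toReal) ≤ h c - ∫ r in c..c, (G r).toReal by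
    rw [intervalIntegral.integral_same] at this
    linarith
  refine le_of_forall_gaps_of_frequently (isCompact_Icc.of_isClosed_subset hK hKI) hc.1 hd
    (φ := fun t => h t - ∫ r in c..t, (G r).toReal) ?_ ?_ fun t ht hfreq => ?_
  · refine ContinuousOn.sub (fun t ht => (hder t ht).continuousWithinAt) (ContinuousOn.mono ?_ hKI)
    rw [← uIcc_of_le hcd] at hint ⊢
    exact intervalIntegral.continuousOn_primitive_interval hint
  · intro p hp
    linarith [hgap p hp, hsub (hKI hp.1) (hKI hp.2.1)]
  · obtain ⟨s, hs, hts⟩ := (hfreq.and_eventually self_mem_nhdsWithin).exists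
    have htd : t < d := lt_of_lt_of_le hts (hd.2 hs)
    have hIcc : Icc t d ⊆ Icc c d := Icc_subset_Icc_left (hc.2 ht)
    obtain ⟨y, hgy, hyG⟩ := EReal.lt_iff_exists_real_btwn.1 (hgG t)
    have hlower := eventually_mul_le_integral_of_lowerSemicontinuous hG (hint.mono_set hIcc)
      (ae_mono (Measure.restrict_mono hIcc le_rfl) htop) htd hyG
    have hupper := eventually_sub_le_mul_of_hasDerivWithinAt (hder t ht)
      (EReal.coe_lt_coe_iff.1 hgy)
    refine (hfreq.and_eventually (hlower.and hupper)).mono fun s ⟨hs, _, hu⟩ => ⟨hs, ?_⟩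
    linarith [hsub (hKI ht) (hKI hs), hu hs]

lemma sub_le_integral_of_hasDerivWithinAt_of_gaps {K : Set ℝ} {c d : ℝ} (hK : IsClosed K)
    (hc : IsLeast K c) (hd : IsGreatest K d) {h g : ℝ → ℝ} (hg : IntegrableOn g (Icc c d))
    (hder : ∀ t ∈ K, HasDerivWithinAt h (g t) K t)
    (hgap : ∀ p ∈ gaps K, h p.2 - h p.1 = ∫ r in p.1..p.2, g r) :
    h d - h c ≤ ∫ r in c..d, g r := by
  have hcd : c ≤ d := hc.2 hd.1
  refine le_of_forall_pos_le_add fun ε hε => ?_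
  obtain ⟨G, hgG, hGlsc, hGint, hGtop, hGε⟩ := exists_lt_lowerSemicontinuous_integral_lt g hg hε
  refine (sub_le_integral_of_lowerSemicontinuous hK hc hd hgG hGlsc hGint hGtop hder
    fun p hp => ?_).trans ?_
  · obtain ⟨ha, hb, hab, -⟩ := id hp
    have hIcc : Icc p.1 p.2 ⊆ Icc c d := Icc_subset_Icc (hc.2 ha) (hd.2 hb)
    rw [hgap p hp]
    refine intervalIntegral.integral_mono_ae_restrict hab.le
      ((intervalIntegrable_iff_integrableOn_Icc_of_le hab.le).2 (hg.mono_set hIcc))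
      ((intervalIntegrable_iff_integrableOn_Icc_of_le hab.le).2
        (IntegrableOn.mono_set hGint hIcc)) ?_
    filter_upwards [ae_mono (Measure.restrict_mono hIcc le_rfl) hGtop] with r hr
    simpa using EReal.toReal_le_toReal (hgG r).le (EReal.coe_ne_bot _) hr.ne
  · simpa only [intervalIntegral.integral_of_le hcd, integral_Icc_eq_integral_Ioc] using hGε.le

theorem sub_eq_integral_of_hasDerivWithinAt_of_gaps {K : Set ℝ} {c d : ℝ} (hK : IsClosed K)
    (hc : IsLeast K c) (hd : IsGreatest K d) {h g : ℝ → ℝ} (hg : IntegrableOn g (Icc c d))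
    (hder : ∀ t ∈ K, HasDerivWithinAt h (g t) K t)
    (hgap : ∀ p ∈ gaps K, h p.2 - h p.1 = ∫ r in p.1..p.2, g r) :
    h d - h c = ∫ r in c..d, g r := by
  refine le_antisymm (sub_le_integral_of_hasDerivWithinAt_of_gaps hK hc hd hg hder hgap) ?_
  have hneg := sub_le_integral_of_hasDerivWithinAt_of_gaps (h := fun t => -h t)
    (g := fun t => -g t) hK hc hd hg.neg (fun t ht => (hder t ht).neg) fun p hp => by
      rw [intervalIntegral.integral_neg, ← hgap p hp]
      ring
  rw [intervalIntegral.integral_neg] at hneg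
  linarith

end FundamentalTheorem

section DifferenceQuotients

/-- The difference quotients of `g` at each base point are Lipschitz with constant `n` up to
absolute values of the increments: a bound on second derivatives that makes sense for every
function and is preserved by pointwise limits. -/
def LipschitzSlopes (n : ℝ) (g : ℝ → ℝ) : Prop :=
  ∀ x a b : ℝ, a ≠ 0 → b ≠ 0 →
    |(g (x + a) - g x) / a - (g (x + b) - g x) / b| ≤ n * (|a| + |b|)

lemma LipschitzSlopes.mono {n m : ℝ} {g : ℝ → ℝ} (h : LipschitzSlopes n g) (hnm : n ≤ m) :
    LipschitzSlopes m g := fun x a b ha hb =>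
  (h x a b ha hb).trans (by gcongr)

lemma isClosed_setOf_lipschitzSlopes {ι : Type*} [TopologicalSpace ι] {φ : ι → ℝ → ℝ}
    (hφ : ∀ x, Continuous fun i => φ i x) (n : ℝ) : IsClosed {i | LipschitzSlopes n (φ i)} := by
  simp only [LipschitzSlopes, ofPred_forall]
  refine isClosed_iInter fun x => isClosed_iInter fun a => isClosed_iInter fun b =>
    isClosed_iInter fun _ => isClosed_iInter fun _ => isClosed_le ?_ continuous_const
  have := hφ x
  have := hφ (x + a)
  have := hφ (x + b)
  fun_prop

lemma tendsto_slope_of_lipschitzSlopes {ι : Type*} {l : Filter ι} {φ : ι → ℝ → ℝ} {g : ℝ → ℝ}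
    {n q y : ℝ} {a : ι → ℝ} (hφ : ∀ᶠ i in l, LipschitzSlopes n (φ i))
    (hg : ∀ x, Tendsto (fun i => φ i x) l (𝓝 (g x))) (hq : HasDerivAt g q y)
    (ha : Tendsto a l (𝓝[≠] 0)) :
    Tendsto (fun i => (φ i (y + a i) - φ i y) / a i) l (𝓝 q) := by
  refine Metric.tendsto_nhds.2 fun ε hε => ?_
  have hsmall : ∀ᶠ b in 𝓝[≠] (0 : ℝ), n * |b| < ε / 4 := by
    have hlim : Tendsto (fun b : ℝ => n * |b|) (𝓝[≠] 0) (𝓝 (n * |0|)) :=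
      (Continuous.tendsto (by fun_prop) 0).mono_left nhdsWithin_le_nhds
    rw [abs_zero, mul_zero] at hlim
    exact hlim.eventually_lt_const (by positivity)
  have hslope : ∀ᶠ b in 𝓝[≠] (0 : ℝ), |(g (y + b) - g y) / b - q| < ε / 4 := by
    filter_upwards [Metric.tendsto_nhds.1 hq.tendsto_slope_zero (ε / 4) (by positivity)] with b hb
    rwa [Real.dist_eq, smul_eq_mul, ← div_eq_inv_mul] at hb
  obtain ⟨b, hbq, hbn, hb0⟩ := (hslope.and (hsmall.and self_mem_nhdsWithin)).exists
  have hconv : ∀ᶠ i in l, |(φ i (y + b) - φ i y) / b - (g (y + b) - g y) / b| < ε / 4 :=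
    Metric.tendsto_nhds.1 (((hg _).sub (hg _)).div_const b) (ε / 4) (by positivity)
  filter_upwards [hφ, hconv, ha.eventually hsmall, ha.eventually self_mem_nhdsWithin]
    with i hi hib hain hai
  have hab := hi y (a i) b hai hb0
  rw [Real.dist_eq]
  rw [abs_lt] at *
  rw [abs_le] at hab
  constructor <;> linarith

lemma hasDerivWithinAt_comp_of_lipschitzSlopes {φ : ℝ → ℝ → ℝ} {K : Set ℝ} {n q t y : ℝ}
    (hφ : ∀ s ∈ K, LipschitzSlopes n (φ s)) (hcont : ∀ x, ContinuousAt (fun s => φ s x) t)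
    (hq : HasDerivAt (φ t) q y) (v : ℝ) :
    HasDerivWithinAt (fun s => φ s (y + (s - t) * v) - φ s y) (v * q) K t := by
  rcases eq_or_ne v 0 with rfl | hv
  · simpa using hasDerivWithinAt_const t K (0 : ℝ)
  have hincr : Tendsto (fun s => (s - t) * v) (𝓝[K \ {t}] t) (𝓝[≠] 0) := by
    refine tendsto_nhdsWithin_iff.2 ⟨?_, eventually_mem_nhdsWithin.mono fun s hs =>
      mul_ne_zero (sub_ne_zero.2 hs.2) hv⟩
    have : Continuous fun s : ℝ => (s - t) * v := by fun_prop
    simpa using (this.tendsto t).mono_left nhdsWithin_le_nhds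
  have hlim := tendsto_slope_of_lipschitzSlopes
    (eventually_mem_nhdsWithin.mono fun s (hs : s ∈ K \ {t}) => hφ s hs.1)
    (fun x => (hcont x).tendsto.mono_left nhdsWithin_le_nhds) hq hincr
  refine hasDerivWithinAt_iff_tendsto_slope.2 ((hlim.const_mul v).congr' ?_)
  filter_upwards [self_mem_nhdsWithin] with s hs
  have hst : s - t ≠ 0 := sub_ne_zero.2 hs.2
  simp only [slope_def_field, sub_self, zero_mul, add_zero, sub_zero]
  field_simp

lemma measurable_of_hasDerivAt {α : Type*} [MeasurableSpace α] {φ : ℝ → α → ℝ} {φ' : α → ℝ}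
    (hφ : ∀ h, Measurable (φ h)) (hφ' : ∀ a, HasDerivAt (fun h => φ h a) (φ' a) 0) :
    Measurable φ' := by
  have hseq : Tendsto (fun k : ℕ => 1 / ((k : ℝ) + 1)) atTop (𝓝[≠] 0) :=
    tendsto_nhdsWithin_iff.2 ⟨tendsto_one_div_add_atTop_nhds_zero_nat,
      Eventually.of_forall fun k => (Nat.one_div_pos_of_nat (n := k)).ne'⟩
  refine measurable_of_tendsto_metrizable
    (f := fun k : ℕ => fun a => (1 / ((k : ℝ) + 1))⁻¹ * (φ (1 / ((k : ℝ) + 1)) a - φ 0 a))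
    (fun k => ((hφ _).sub (hφ 0)).const_mul _) (tendsto_pi_nhds.2 fun a => ?_)
  simpa only [zero_add, smul_eq_mul, Function.comp_def] using
    (hφ' a).tendsto_slope_zero.comp hseq

end DifferenceQuotients

section MeasurePreserving

lemma ae_eq_zero_of_tendsto_comp_measurePreserving {E : Type*} [NormedAddCommGroup E]
    [NormedSpace ℝ E] [FiniteDimensional ℝ E] [MeasurableSpace E] [BorelSpace E] {μ : Measure E}
    [μ.IsAddHaarMeasure] {D : ℕ → E → ℝ} {S : ℕ → E → E} {L : E → ℝ} {S' : E → E}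
    (hD : ∀ k, Measurable (D k)) (hD0 : ∀ᵐ z ∂μ, Tendsto (fun k => D k z) atTop (𝓝 0))
    (hS : ∀ k, MeasurePreserving (S k) μ μ)
    (hS' : ∀ᵐ z ∂μ, Tendsto (fun k => S k z) atTop (𝓝 (S' z)))
    (hL : ∀ᵐ z ∂μ, Tendsto (fun k => D k (S k z)) atTop (𝓝 (L z))) : L =ᵐ[μ] 0 := by
  set χ : E → ℝ≥0∞ := fun z => ENNReal.ofReal ((1 + ‖z‖) ^ (-(Module.finrank ℝ E + 1 : ℝ)))
  have hχ : Continuous χ := ENNReal.continuous_ofReal.comp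
    ((continuous_const.add continuous_norm).rpow_const fun z =>
      Or.inl (by positivity : 0 < 1 + ‖z‖).ne')
  have hχ0 : ∀ z, χ z ≠ 0 := fun z => by
    simp only [χ, ne_eq, ENNReal.ofReal_eq_zero, not_le]
    positivity
  set F : ℕ → E → ℝ≥0∞ := fun k z => min 1 ‖D k z‖ₑ * χ z
  have hF : ∀ k, Measurable (F k) := fun k =>
    (measurable_const.min (hD k).enorm).mul hχ.measurable
  have hF0 : Tendsto (fun k => ∫⁻ z, F k (S k z) ∂μ) atTop (𝓝 0) := by
    simp only [(hS _).lintegral_comp (hF _)]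
    rw [← lintegral_zero (μ := μ)]
    refine tendsto_lintegral_of_dominated_convergence χ hF
      (fun k => Eventually.of_forall fun z => mul_le_of_le_one_left zero_le (min_le_left _ _))
      (finite_integral_one_add_norm (by simp)).ne ?_
    filter_upwards [hD0] with z hz
    simpa using ENNReal.Tendsto.mul_const (b := χ z) (tendsto_const_nhds.min hz.enorm)
      (Or.inr ENNReal.ofReal_ne_top)
  have hliminf : ∫⁻ z, liminf (fun k => F k (S k z)) atTop ∂μ = 0 :=
    le_antisymm ((lintegral_liminf_le fun k => (hF k).comp (hS k).measurable).trans
      hF0.liminf_eq.le) zero_le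
  filter_upwards [(lintegral_eq_zero_iff
    (Measurable.liminf fun k => (hF k).comp (hS k).measurable)).1 hliminf, hS', hL]
    with z hz hSz hLz
  have hlim : Tendsto (fun k => F k (S k z)) atTop (𝓝 (min 1 ‖L z‖ₑ * χ (S' z))) :=
    ENNReal.Tendsto.mul (tendsto_const_nhds.min hLz.enorm) (Or.inr ENNReal.ofReal_ne_top)
      ((hχ.tendsto _).comp hSz) (Or.inr (ne_top_of_le_ne_top ENNReal.one_ne_top (min_le_left _ _)))
  have hmin : min 1 ‖L z‖ₑ = 0 :=
    (mul_eq_zero.1 (hlim.liminf_eq.symm.trans hz)).resolve_right (hχ0 _)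
  simpa using hmin

end MeasurePreserving

section BaireCategory

/-- The set of points near which `R` fails has, by Baire, a portion on which the closed
conditions `S n` hold uniformly in `n`. -/
lemma forall_rel_of_baire {X : Type*} [MetricSpace X] [CompleteSpace X] [PreconnectedSpace X]
    {R : X → X → Prop} (hR : Equivalence R) {S : ℕ → Set X} (hS : ∀ n, IsClosed (S n))
    (hcover : ⋃ n, S n = univ)
    (hstep : ∀ (F : Set X), IsClosed F →
      (∀ A : Set X, IsPreconnected A → Disjoint A F → ∀ c ∈ A, ∀ d ∈ A, R c d) →
      ∀ t ∈ F, ∀ n, (∀ᶠ s in 𝓝[F] t, s ∈ S n) → ∀ᶠ p in 𝓝 (t, t), R p.1 p.2)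
    (c d : X) : R c d := by
  set A : Set X := {t | ∀ᶠ p in 𝓝 (t, t), R p.1 p.2}
  have hAopen : IsOpen A := by
    refine isOpen_iff_mem_nhds.2 fun t ht => ?_
    exact (continuous_id.prodMk continuous_id).continuousAt.eventually ht.eventually_nhds
  have hpre : ∀ B : Set X, IsPreconnected B → B ⊆ A → ∀ c ∈ B, ∀ d ∈ B, R c d := by
    refine fun B hB hBA c hc d hd => hB.induction₂ R (fun t ht => mem_nhdsWithin_of_mem_nhds ?_)
      (fun _ _ _ _ _ _ => hR.trans) (fun _ _ _ _ => hR.symm) hc hd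
    exact (Continuous.prodMk_right t).continuousAt.eventually (hBA ht)
  suffices A = univ from hpre univ isPreconnected_univ this.ge c (mem_univ c) d (mem_univ d)
  by_contra hne
  have : Nonempty ↥Aᶜ := (nonempty_compl.2 hne).to_subtype
  have : CompleteSpace ↥Aᶜ := hAopen.isClosed_compl.completeSpace_coe
  obtain ⟨n, ⟨t, htA⟩, ht⟩ := nonempty_interior_of_iUnion_of_closed
    (f := fun n => ((↑) : ↥Aᶜ → X) ⁻¹' S n) (fun n => (hS n).preimage continuous_subtype_val)
    (by rw [← preimage_iUnion, hcover, preimage_univ])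
  refine htA (hstep Aᶜ hAopen.isClosed_compl (fun B hB hBA => hpre B hB
    (disjoint_compl_right_iff_subset.1 hBA)) t htA n ?_)
  exact eventually_nhds_subtype_iff _ ⟨t, htA⟩ (· ∈ S n) |>.1 (mem_interior_iff_mem_nhds.1 ht)

end BaireCategory

section FreeTransport

/-- The free flow `(x, v) ↦ (x + tv, v)` on phase space. -/
def shear (t : ℝ) (z : ℝ × ℝ) : ℝ × ℝ := (z.1 + t * z.2, z.2)

lemma continuous_uncurry_shear : Continuous fun p : ℝ × ℝ × ℝ => shear p.1 p.2 := by
  unfold shear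
  fun_prop

lemma continuous_shear (t : ℝ) : Continuous (shear t) :=
  continuous_uncurry_shear.comp (Continuous.prodMk_right t)

lemma continuous_shear_left (z : ℝ × ℝ) : Continuous fun t => shear t z :=
  continuous_uncurry_shear.comp (Continuous.prodMk_left z)

lemma measurePreserving_shear (t : ℝ) : MeasurePreserving (shear t) := by
  have hskew : MeasurePreserving (fun z : ℝ × ℝ => (z.1, z.2 + t * z.1)) :=
    (MeasurePreserving.id volume).skew_product (g := fun v x => x + t * v) (by fun_prop)
      (Eventually.of_forall fun v => (measurePreserving_add_right volume (t * v)).map_eq)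
  exact Measure.measurePreserving_swap.comp (hskew.comp Measure.measurePreserving_swap)

lemma integral_comp_shear (t : ℝ) {g : ℝ × ℝ → ℝ} (hg : Measurable g) :
    ∫ z, g (shear t z) = ∫ z, g z := by
  rw [← integral_map (measurePreserving_shear t).aemeasurable hg.aestronglyMeasurable,
    (measurePreserving_shear t).map_eq]

/-- The weight `1 + v²`, measuring mass and kinetic energy together. -/
noncomputable def velocityWeight (v : ℝ) : ℝ≥0∞ := ENNReal.ofReal (1 + v ^ 2)

lemma measurable_velocityWeight : Measurable velocityWeight := by
  unfold velocityWeight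
  fun_prop

lemma velocityWeight_ne_zero (v : ℝ) : velocityWeight v ≠ 0 :=
  (ENNReal.ofReal_pos.2 (by positivity)).ne'

lemma enorm_le_mul_velocityWeight {B : ℝ≥0} {k v : ℝ} (hk : |k| ≤ B * (1 + v ^ 2)) :
    ‖k‖ₑ ≤ B * velocityWeight v := by
  rw [Real.enorm_eq_ofReal_abs, velocityWeight, ← ENNReal.ofReal_coe_nnreal,
    ← ENNReal.ofReal_mul B.coe_nonneg]
  exact ENNReal.ofReal_le_ofReal hk

/-- The norm of `g` in `L¹((1 + v²) dx dv)`. -/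
noncomputable def weightedNorm (g : ℝ × ℝ → ℝ) : ℝ≥0∞ := ∫⁻ z, velocityWeight z.2 * ‖g z‖ₑ

lemma measurable_weight_mul_enorm {g : ℝ × ℝ → ℝ} (hg : Measurable g) :
    Measurable fun z : ℝ × ℝ => velocityWeight z.2 * ‖g z‖ₑ :=
  (measurable_velocityWeight.comp measurable_snd).mul hg.enorm

lemma weightedNorm_comp_shear (t : ℝ) {g : ℝ × ℝ → ℝ} (hg : Measurable g) :
    weightedNorm (g ∘ shear t) = weightedNorm g :=
  (measurePreserving_shear t).lintegral_comp (measurable_weight_mul_enorm hg)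

lemma weightedNorm_add_le {g : ℝ × ℝ → ℝ} (hg : Measurable g) (h : ℝ × ℝ → ℝ) :
    weightedNorm (g + h) ≤ weightedNorm g + weightedNorm h := by
  simp only [weightedNorm]
  rw [← lintegral_add_left (measurable_weight_mul_enorm hg)]
  refine lintegral_mono fun z => ?_
  rw [← mul_add]
  gcongr
  exact enorm_add_le _ _

lemma lintegral_enorm_mul_le {B : ℝ≥0} {g k : ℝ × ℝ → ℝ} (hk : ∀ z, |k z| ≤ B * (1 + z.2 ^ 2))
    (hg : Measurable g) : ∫⁻ z, ‖k z * g z‖ₑ ≤ B * weightedNorm g := by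
  rw [weightedNorm, ← lintegral_const_mul _ (measurable_weight_mul_enorm hg)]
  refine lintegral_mono fun z => ?_
  rw [enorm_mul, ← mul_assoc]
  gcongr
  exact enorm_le_mul_velocityWeight (hk z)

lemma integrable_mul_of_weightedNorm_lt_top {B : ℝ≥0} {g k : ℝ × ℝ → ℝ}
    (hk : ∀ z, |k z| ≤ B * (1 + z.2 ^ 2)) (hkm : Measurable k) (hg : Measurable g)
    (hgt : weightedNorm g < ⊤) : Integrable fun z => k z * g z :=
  ⟨(hkm.mul hg).aestronglyMeasurable,
    (lintegral_enorm_mul_le hk hg).trans_lt (ENNReal.mul_lt_top ENNReal.coe_lt_top hgt)⟩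

lemma isClosed_setOf_weightedNorm_le {f : ℝ → ℝ × ℝ → ℝ} (hf : ∀ t, Measurable (f t))
    (hft : ∀ z, Continuous fun t => f t z) (a : ℝ≥0∞) : IsClosed {t | weightedNorm (f t) ≤ a} := by
  refine IsSeqClosed.isClosed fun s t hs hlim => ?_
  have hliminf : ∀ z : ℝ × ℝ, liminf (fun k => velocityWeight z.2 * ‖f (s k) z‖ₑ) atTop =
      velocityWeight z.2 * ‖f t z‖ₑ := fun z =>
    (ENNReal.Tendsto.const_mul (((hft z).tendsto t).comp hlim).enorm
      (Or.inr ENNReal.ofReal_ne_top)).liminf_eq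
  calc weightedNorm (f t)
      = ∫⁻ z, liminf (fun k => velocityWeight z.2 * ‖f (s k) z‖ₑ) atTop := by
        simp only [hliminf, weightedNorm]
    _ ≤ liminf (fun k => weightedNorm (f (s k))) atTop :=
        lintegral_liminf_le fun k => measurable_weight_mul_enorm (hf (s k))
    _ ≤ liminf (fun _ : ℕ => a) atTop := liminf_le_liminf (Eventually.of_forall hs)
    _ = a := liminf_const a

/-- The derivative `∂f/∂t + v ∂f/∂x` along the free flow. -/
noncomputable def materialDeriv (f : ℝ → ℝ × ℝ → ℝ) (t : ℝ) (z : ℝ × ℝ) : ℝ :=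
  deriv (fun s => f s z) t + z.2 * deriv (fun x => f t (x, z.2)) z.1

/-- Curves of densities on phase space, pointwise differentiable in time and regular in position,
whose derivative along the free flow is bounded by `C` in weighted norm relative to the density
itself. No uniformity in time is imposed on the weighted norm or on the regularity in position. -/
structure ControlledTransport (f : ℝ → ℝ × ℝ → ℝ) (C : ℝ≥0) : Prop where
  continuous : ∀ t, Continuous (f t)
  differentiable_time : ∀ z, Differentiable ℝ fun t => f t z
  differentiable_position : ∀ t v, Differentiable ℝ fun x => f t (x, v)
  exists_lipschitzSlopes : ∀ t, ∃ n : ℕ, ∀ v, LipschitzSlopes n fun x => f t (x, v)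
  weightedNorm_lt_top : ∀ t, weightedNorm (f t) < ⊤
  weightedNorm_materialDeriv_le : ∀ t, weightedNorm (materialDeriv f t) ≤ C * weightedNorm (f t)

/-- The mild (Duhamel) form of the transport equation between the times `c` and `d`, almost
everywhere in phase space. -/
def IsMild (f : ℝ → ℝ × ℝ → ℝ) (c d : ℝ) : Prop :=
  ∀ᵐ z, f d (shear d z) - f c (shear c z) = ∫ r in c..d, materialDeriv f r (shear r z)

/-- The mild form of the transport equation between `c` and `d`, along a time interval on which the
weighted norm is bounded. -/
def IsBoundedMild (f : ℝ → ℝ × ℝ → ℝ) (c d : ℝ) : Prop :=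
  (∃ M : ℝ≥0, ∀ r ∈ uIcc c d, weightedNorm (f r) ≤ M) ∧ IsMild f c d

variable {f : ℝ → ℝ × ℝ → ℝ} {C M : ℝ≥0} {a c d : ℝ}

lemma IsMild.symm (h : IsMild f c d) : IsMild f d c := by
  filter_upwards [h] with z hz
  rw [intervalIntegral.integral_symm, ← hz, neg_sub]

lemma mul_ofReal_abs_sub_le_of_uIcc_subset (k : ℝ≥0∞) {s t : ℝ} (h : uIcc s t ⊆ uIcc c d) :
    k * ENNReal.ofReal |t - s| ≤ k * ENNReal.ofReal |d - c| :=
  mul_le_mul_right (ENNReal.ofReal_le_ofReal (abs_sub_le_of_uIcc_subset_uIcc h)) k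

namespace ControlledTransport

lemma measurable_uncurry (H : ControlledTransport f C) : Measurable (Function.uncurry f) :=
  (stronglyMeasurable_uncurry_of_continuous_of_stronglyMeasurable
    (u := f) (fun z => (H.differentiable_time z).continuous)
    fun t => (H.continuous t).stronglyMeasurable).measurable

lemma measurable_materialDeriv (H : ControlledTransport f C) :
    Measurable (Function.uncurry (materialDeriv f)) := by
  have htime : Measurable fun p : ℝ × ℝ × ℝ => deriv (fun s => f s p.2) p.1 := by
    refine measurable_of_hasDerivAt (φ := fun h p => f (p.1 + h) p.2)
      (fun h => H.measurable_uncurry.comp (f := fun p : ℝ × ℝ × ℝ => (p.1 + h, p.2))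
        (by fun_prop)) fun p => ?_
    simpa using (H.differentiable_time p.2 (p.1 + 0)).hasDerivAt.comp_const_add p.1 0
  have hposition : Measurable fun p : ℝ × ℝ × ℝ => deriv (fun x => f p.1 (x, p.2.2)) p.2.1 := by
    refine measurable_of_hasDerivAt (φ := fun h p => f p.1 (p.2.1 + h, p.2.2))
      (fun h => H.measurable_uncurry.comp
        (f := fun p : ℝ × ℝ × ℝ => (p.1, p.2.1 + h, p.2.2)) (by fun_prop)) fun p => ?_
    simpa using (H.differentiable_position p.1 p.2.2 (p.2.1 + 0)).hasDerivAt.comp_const_add p.2.1 0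
  exact htime.add (measurable_snd.snd.mul hposition)

lemma measurable_materialDeriv_shear (H : ControlledTransport f C) :
    Measurable fun p : ℝ × ℝ × ℝ => materialDeriv f p.1 (shear p.1 p.2) :=
  H.measurable_materialDeriv.comp (measurable_fst.prodMk continuous_uncurry_shear.measurable)

lemma measurable_shear (H : ControlledTransport f C) (t : ℝ) : Measurable (f t ∘ shear t) :=
  ((H.continuous t).comp (continuous_shear t)).measurable

lemma lintegral_lintegral_materialDeriv_le (H : ControlledTransport f C)
    (hM : ∀ r ∈ uIcc c d, weightedNorm (f r) ≤ M) :
    ∫⁻ z : ℝ × ℝ, velocityWeight z.2 * ∫⁻ r in uIoc c d, ‖materialDeriv f r (shear r z)‖ₑ ≤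
      C * M * ENNReal.ofReal |d - c| := by
  have hm : Measurable fun p : (ℝ × ℝ) × ℝ => ‖materialDeriv f p.2 (shear p.2 p.1)‖ₑ :=
    (H.measurable_materialDeriv_shear.comp measurable_swap).enorm
  calc ∫⁻ z : ℝ × ℝ, velocityWeight z.2 * ∫⁻ r in uIoc c d, ‖materialDeriv f r (shear r z)‖ₑ
      = ∫⁻ z : ℝ × ℝ, ∫⁻ r in uIoc c d, velocityWeight z.2 * ‖materialDeriv f r (shear r z)‖ₑ :=
        lintegral_congr fun z => (lintegral_const_mul _ (hm.comp measurable_prodMk_left)).symm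
    _ = ∫⁻ r in uIoc c d, weightedNorm (materialDeriv f r ∘ shear r) :=
        lintegral_lintegral_swap
          (((measurable_velocityWeight.comp measurable_fst.snd).mul hm).aemeasurable)
    _ ≤ ∫⁻ _ in uIoc c d, C * M := by
        refine setLIntegral_mono measurable_const fun r hr => ?_
        rw [weightedNorm_comp_shear r (H.measurable_materialDeriv.of_uncurry_left)]
        exact (H.weightedNorm_materialDeriv_le r).trans
          (by gcongr; exact hM r (uIoc_subset_uIcc hr))
    _ = C * M * ENNReal.ofReal |d - c| := by rw [setLIntegral_const, Real.volume_uIoc]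

lemma ae_intervalIntegrable_materialDeriv (H : ControlledTransport f C)
    (hM : ∀ r ∈ uIcc c d, weightedNorm (f r) ≤ M) :
    ∀ᵐ z, IntervalIntegrable (fun r => materialDeriv f r (shear r z)) volume c d := by
  have hm : Measurable fun p : (ℝ × ℝ) × ℝ => ‖materialDeriv f p.2 (shear p.2 p.1)‖ₑ :=
    (H.measurable_materialDeriv_shear.comp measurable_swap).enorm
  have hfinite := ae_lt_top
    ((measurable_velocityWeight.comp measurable_snd).mul hm.lintegral_prod_right')
    (ne_top_of_le_ne_top (by finiteness) (H.lintegral_lintegral_materialDeriv_le hM))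
  filter_upwards [hfinite] with z hz
  refine intervalIntegrable_iff.2
    ⟨(H.measurable_materialDeriv_shear.comp measurable_prodMk_right).aestronglyMeasurable, ?_⟩
  exact (ENNReal.mul_lt_top_iff.1 hz).elim (fun h => h.2) fun h =>
    h.elim (fun h => absurd h (velocityWeight_ne_zero _)) fun h => h.trans_lt ENNReal.zero_lt_top

lemma isBoundedMild_equivalence (H : ControlledTransport f C) : Equivalence (IsBoundedMild f) where
  refl c := ⟨⟨(weightedNorm (f c)).toNNReal, by simp [(H.weightedNorm_lt_top c).ne]⟩,
    Eventually.of_forall fun z => by simp⟩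
  symm h := ⟨by simpa only [uIcc_comm] using h.1, h.2.symm⟩
  trans := by
    rintro a b c ⟨⟨M, hM⟩, hab⟩ ⟨⟨N, hN⟩, hbc⟩
    refine ⟨⟨max M N, fun r hr => ?_⟩, ?_⟩
    · rw [ENNReal.coe_max]
      exact (uIcc_subset_uIcc_union_uIcc (b := b) hr).elim
        (fun h => (hM r h).trans (le_max_left _ _)) fun h => (hN r h).trans (le_max_right _ _)
    · filter_upwards [hab, hbc, H.ae_intervalIntegrable_materialDeriv hM,
        H.ae_intervalIntegrable_materialDeriv hN] with z hab hbc hiab hibc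
      rw [← intervalIntegral.integral_add_adjacent_intervals hiab hibc, ← hab, ← hbc]
      ring

lemma weightedNorm_comp_shear_sub_le (H : ControlledTransport f C)
    (hM : ∀ r ∈ uIcc c d, weightedNorm (f r) ≤ M) (h : IsMild f c d) :
    weightedNorm (f d ∘ shear d - f c ∘ shear c) ≤ C * M * ENNReal.ofReal |d - c| := by
  refine le_trans (lintegral_mono_ae ?_) (H.lintegral_lintegral_materialDeriv_le hM)
  filter_upwards [h] with z hz
  simp only [Pi.sub_apply, Function.comp_apply, hz]
  gcongr
  rw [← enorm_norm, intervalIntegral.norm_intervalIntegral_eq, enorm_norm]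
  exact enorm_integral_le_lintegral_enorm _

lemma weightedNorm_le_add (H : ControlledTransport f C)
    (hM : ∀ r ∈ uIcc c d, weightedNorm (f r) ≤ M) (h : IsMild f c d) :
    weightedNorm (f d) ≤ weightedNorm (f c) + C * M * ENNReal.ofReal |d - c| := by
  rw [← weightedNorm_comp_shear d (H.continuous d).measurable,
    ← weightedNorm_comp_shear c (H.continuous c).measurable,
    ← add_sub_cancel (f c ∘ shear c) (f d ∘ shear d)]
  exact (weightedNorm_add_le (H.measurable_shear c) _).trans
    (add_le_add_right (H.weightedNorm_comp_shear_sub_le hM h) _)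

lemma weightedNorm_le_two_mul (H : ControlledTransport f C)
    (hshort : C * ENNReal.ofReal |d - c| ≤ 1 / 2) (h : ∀ s ∈ uIcc c d, IsBoundedMild f s d)
    {s t : ℝ} (hs : s ∈ uIcc c d) (ht : t ∈ uIcc c d) :
    weightedNorm (f s) ≤ 2 * weightedNorm (f t) := by
  obtain ⟨⟨M₀, hM₀⟩, -⟩ := h c left_mem_uIcc
  obtain ⟨M, hM⟩ : ∃ M : ℝ≥0, (M : ℝ≥0∞) = ⨆ r ∈ uIcc c d, weightedNorm (f r) :=
    WithTop.ne_top_iff_exists.1 (ne_top_of_le_ne_top ENNReal.coe_ne_top (iSup₂_le hM₀))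
  have hle : ∀ r ∈ uIcc c d, weightedNorm (f r) ≤ M := fun r hr =>
    hM ▸ le_iSup₂_of_le r hr le_rfl
  have habsorb : (M : ℝ≥0∞) ≤ weightedNorm (f t) + M / 2 := by
    rw [hM]
    refine iSup₂_le fun r hr => ?_
    have hsub : uIcc t r ⊆ uIcc c d := uIcc_subset_uIcc ht hr
    have hmild := H.isBoundedMild_equivalence.trans (h t ht)
      (H.isBoundedMild_equivalence.symm (h r hr))
    refine (H.weightedNorm_le_add (fun q hq => hle q (hsub hq)) hmild.2).trans ?_
    rw [← hM]
    gcongr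
    calc C * M * ENNReal.ofReal |r - t| ≤ C * ENNReal.ofReal |d - c| * M := by
          rw [mul_right_comm]
          gcongr ?_ * _
          exact mul_ofReal_abs_sub_le_of_uIcc_subset C hsub
      _ ≤ 1 / 2 * M := by gcongr
      _ = M / 2 := by rw [one_div, ENNReal.div_eq_inv_mul]
  have hhalf : (M : ℝ≥0∞) / 2 ≤ weightedNorm (f t) := by
    rw [← ENNReal.add_le_add_iff_right (a := (M : ℝ≥0∞) / 2) (by finiteness), ENNReal.add_halves]
    exact habsorb
  rw [ENNReal.div_le_iff two_ne_zero ENNReal.ofNat_ne_top, mul_comm] at hhalf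
  exact (hle s hs).trans hhalf

lemma isMild_of_mem_closure (H : ControlledTransport f C)
    (hM : ∀ r ∈ uIcc a d, weightedNorm (f r) ≤ M)
    (ha : a ∈ closure {s ∈ uIcc a d | IsMild f s d}) : IsMild f a d := by
  obtain ⟨s, hs, hlim⟩ := mem_closure_iff_seq_limit.1 ha
  have hconst : Tendsto (fun k => f (s k) - f a) atTop (𝓝 0) := tendsto_pi_nhds.2 fun z => by
    simpa using (((H.differentiable_time z).continuous.tendsto a).comp hlim).sub_const (f a z)
  have hae := ae_eq_zero_of_tendsto_comp_measurePreserving (D := fun k => f (s k) - f a)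
    (S := fun k => shear (s k)) (S' := shear a) (μ := volume)
    (L := fun z => f d (shear d z) - (∫ r in a..d, materialDeriv f r (shear r z)) - f a (shear a z))
    (fun k => (H.continuous (s k)).measurable.sub (H.continuous a).measurable)
    (Eventually.of_forall fun z => (continuous_apply z).tendsto _ |>.comp hconst)
    (fun k => measurePreserving_shear (s k))
    (Eventually.of_forall fun z => ((continuous_shear_left z).tendsto a).comp hlim) ?_
  · filter_upwards [hae] with z hz
    simp only [Pi.zero_apply] at hz
    linarith
  filter_upwards [H.ae_intervalIntegrable_materialDeriv hM, ae_all_iff.2 fun k => (hs k).2]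
    with z hint hmild
  have hprim : Tendsto (fun k => ∫ r in s k..d, materialDeriv f r (shear r z)) atTop
      (𝓝 (∫ r in a..d, materialDeriv f r (shear r z))) :=
    ((intervalIntegral.continuousOn_primitive_interval_left
      ((intervalIntegrable_iff' (by simp)).1 hint)).continuousWithinAt
      left_mem_uIcc).tendsto.comp
      (tendsto_nhdsWithin_iff.2 ⟨hlim, Eventually.of_forall fun k => (hs k).1⟩)
  refine ((hprim.const_sub (f d (shear d z))).sub (((H.continuous a).tendsto _).comp
    (((continuous_shear_left z).tendsto a).comp hlim))).congr fun k => ?_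
  simp only [← hmild k, Pi.sub_apply, Function.comp_apply]
  ring

lemma isBoundedMild_of_forall_ne (H : ControlledTransport f C)
    (hshort : C * ENNReal.ofReal |d - a| ≤ 1 / 2)
    (h : ∀ s ∈ uIcc a d, s ≠ a → IsBoundedMild f s d) : IsBoundedMild f a d := by
  rcases eq_or_ne a d with rfl | had
  · exact H.isBoundedMild_equivalence.refl a
  have hbound : ∀ s ∈ uIcc a d,
      weightedNorm (f s) ≤ max (2 * weightedNorm (f d)) (weightedNorm (f a)) := by
    intro s hs
    rcases eq_or_ne s a with rfl | hsa
    · exact le_max_right _ _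
    have hsub : uIcc s d ⊆ uIcc a d := uIcc_subset_uIcc hs right_mem_uIcc
    have hshort' : C * ENNReal.ofReal |d - s| ≤ 1 / 2 :=
      (mul_ofReal_abs_sub_le_of_uIcc_subset C hsub).trans hshort
    refine (H.weightedNorm_le_two_mul hshort' (fun r hr => h r (hsub hr) ?_)
      left_mem_uIcc right_mem_uIcc).trans (le_max_left _ _)
    rintro rfl
    exact hsa (eq_of_mem_uIcc_of_mem_uIcc hs hr)
  obtain ⟨M, hM⟩ : ∃ M : ℝ≥0, (M : ℝ≥0∞) = max (2 * weightedNorm (f d)) (weightedNorm (f a)) :=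
    WithTop.ne_top_iff_exists.1 (max_lt (ENNReal.mul_lt_top ENNReal.ofNat_lt_top
      (H.weightedNorm_lt_top d)) (H.weightedNorm_lt_top a)).ne
  rw [← hM] at hbound
  refine ⟨⟨M, hbound⟩, H.isMild_of_mem_closure hbound ?_⟩
  have hacc : AccPt a (𝓟 (uIcc a d)) := isPreconnected_uIcc.preperfect_of_nontrivial
    ⟨a, left_mem_uIcc, d, right_mem_uIcc, had⟩ a left_mem_uIcc
  rw [accPt_iff_clusterPt, inf_principal, ← mem_closure_iff_clusterPt] at hacc
  refine mem_of_mem_of_subset hacc (closure_mono fun s hs => ?_)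
  exact ⟨hs.2, (h s hs.2 hs.1).2⟩

lemma isBoundedMild_of_notMem (H : ControlledTransport f C) {F : Set ℝ}
    (hF : ∀ A : Set ℝ, IsPreconnected A → Disjoint A F → ∀ c ∈ A, ∀ d ∈ A, IsBoundedMild f c d)
    (hshort : C * ENNReal.ofReal |d - a| ≤ 1 / 2) (had : ∀ s ∈ uIcc a d, s ≠ a → s ∉ F) :
    IsBoundedMild f a d ∧ weightedNorm (f d) ≤ 2 * weightedNorm (f a) := by
  have hne : ∀ s ∈ uIcc a d, s ≠ a → IsBoundedMild f s d := fun s hs hsa => by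
    refine hF (uIcc s d) isPreconnected_uIcc (disjoint_left.2 fun r hr => had r ?_ ?_) s
      left_mem_uIcc d right_mem_uIcc
    · exact uIcc_subset_uIcc hs right_mem_uIcc hr
    · rintro rfl
      exact hsa (eq_of_mem_uIcc_of_mem_uIcc hs hr)
  have hmild := H.isBoundedMild_of_forall_ne hshort hne
  refine ⟨hmild, H.weightedNorm_le_two_mul hshort (fun s hs => ?_) right_mem_uIcc left_mem_uIcc⟩
  rcases eq_or_ne s a with rfl | hsa
  exacts [hmild, hne s hs hsa]

lemma isBoundedMild_of_mem_gaps (H : ControlledTransport f C) {F : Set ℝ}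
    (hF : ∀ A : Set ℝ, IsPreconnected A → Disjoint A F → ∀ c ∈ A, ∀ d ∈ A, IsBoundedMild f c d)
    {p : ℝ × ℝ} (hp : p ∈ gaps F) (hshort : C * ENNReal.ofReal |p.2 - p.1| ≤ 1 / 2) :
    IsBoundedMild f p.1 p.2 := by
  obtain ⟨m, hm⟩ := nonempty_Ioo.2 hp.2.2.1
  have hF' : ∀ s ∈ Ioo p.1 p.2, s ∉ F := fun s hs => disjoint_left.1 hp.2.2.2 hs
  have hhalf : ∀ a ∈ Icc p.1 p.2, C * ENNReal.ofReal |m - a| ≤ 1 / 2 := fun a ha =>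
    (mul_ofReal_abs_sub_le_of_uIcc_subset C
      ((uIcc_subset_Icc ha ⟨hm.1.le, hm.2.le⟩).trans Icc_subset_uIcc)).trans hshort
  refine H.isBoundedMild_equivalence.trans (y := m)
    (H.isBoundedMild_of_notMem hF (hhalf _ ⟨le_rfl, hp.2.2.1.le⟩) fun s hs hs' => hF' s ?_).1
    (H.isBoundedMild_equivalence.symm
      (H.isBoundedMild_of_notMem hF (hhalf _ ⟨hp.2.2.1.le, le_rfl⟩) fun s hs hs' => hF' s ?_).1)
  · rw [uIcc_of_le hm.1.le] at hs
    exact ⟨lt_of_le_of_ne hs.1 hs'.symm, hs.2.trans_lt hm.2⟩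
  · rw [uIcc_of_ge hm.2.le] at hs
    exact ⟨hm.1.trans_le hs.1, lt_of_le_of_ne hs.2 hs'⟩

lemma hasDerivWithinAt_comp_shear (H : ControlledTransport f C) {K : Set ℝ} {n t : ℝ}
    (hK : ∀ s ∈ K, ∀ v, LipschitzSlopes n fun x => f s (x, v)) (z : ℝ × ℝ) :
    HasDerivWithinAt (fun s => f s (shear s z)) (materialDeriv f t (shear t z)) K t := by
  have hposition := hasDerivWithinAt_comp_of_lipschitzSlopes (φ := fun s x => f s (x, z.2))
    (fun s hs => hK s hs z.2) (fun x => (H.differentiable_time (x, z.2)).continuous.continuousAt)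
    (H.differentiable_position t z.2 (shear t z).1).hasDerivAt z.2
  refine (((H.differentiable_time (shear t z) t).hasDerivAt.hasDerivWithinAt).add
    hposition).congr_of_eventuallyEq (Eventually.of_forall fun s => ?_) ?_
  · have hshear : shear s z = ((shear t z).1 + (s - t) * z.2, z.2) := by
      simp only [shear, Prod.mk.injEq, and_true]
      ring
    have hshear' : shear t z = ((shear t z).1, z.2) := rfl
    simp only [Pi.add_apply, hshear]
    rw [hshear']
    ring
  · simp [shear]

lemma isMild_of_isClosed (H : ControlledTransport f C) {F : Set ℝ} (hF : IsClosed F) {n : ℝ}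
    (hcd : c ≤ d) (hc : c ∈ F) (hd : d ∈ F) (hM : ∀ r ∈ Icc c d, weightedNorm (f r) ≤ M)
    (hn : ∀ s ∈ F ∩ Icc c d, ∀ v, LipschitzSlopes n fun x => f s (x, v))
    (hgap : ∀ p ∈ gaps F, p.1 ∈ Icc c d → p.2 ∈ Icc c d → IsMild f p.1 p.2) : IsMild f c d := by
  have hgaps : ∀ p ∈ gaps (F ∩ Icc c d), IsMild f p.1 p.2 := by
    rintro p ⟨h₁, h₂, hlt, hdisj⟩
    refine hgap p ⟨h₁.1, h₂.1, hlt, disjoint_left.2 fun s hs hsF => ?_⟩ h₁.2 h₂.2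
    exact disjoint_left.1 hdisj hs ⟨hsF, h₁.2.1.trans hs.1.le, hs.2.le.trans h₂.2.2⟩
  filter_upwards [(ae_ball_iff (countable_gaps _)).2 hgaps,
    H.ae_intervalIntegrable_materialDeriv (by rwa [uIcc_of_le hcd])] with z hz hint
  exact sub_eq_integral_of_hasDerivWithinAt_of_gaps (hF.inter isClosed_Icc)
    (h := fun s => f s (shear s z))
    ⟨⟨hc, left_mem_Icc.2 hcd⟩, fun s hs => hs.2.1⟩ ⟨⟨hd, right_mem_Icc.2 hcd⟩, fun s hs => hs.2.2⟩
    ((intervalIntegrable_iff_integrableOn_Icc_of_le hcd).1 hint)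
    (fun t _ => H.hasDerivWithinAt_comp_shear hn z) hz

lemma isBoundedMild_of_ordConnected (H : ControlledTransport f C) {F I : Set ℝ} {n : ℝ}
    (hFc : IsClosed F)
    (hF : ∀ A : Set ℝ, IsPreconnected A → Disjoint A F → ∀ c ∈ A, ∀ d ∈ A, IsBoundedMild f c d)
    (hI : OrdConnected I) (hshort : ∀ c ∈ I, ∀ d ∈ I, C * ENNReal.ofReal |d - c| ≤ 1 / 2)
    (hne : (F ∩ I).Nonempty) (hM : ∀ s ∈ F ∩ I, weightedNorm (f s) ≤ M)
    (hn : ∀ s ∈ F ∩ I, ∀ v, LipschitzSlopes n fun x => f s (x, v)) (hc : c ∈ I) (hd : d ∈ I) :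
    IsBoundedMild f c d := by
  obtain ⟨t₀, ht₀F, ht₀I⟩ := hne
  have hnear : ∀ t ∈ I, ∃ a ∈ F ∩ I, IsBoundedMild f a t ∧ weightedNorm (f t) ≤ (2 * M : ℝ≥0) := by
    intro t ht
    obtain ⟨a, ⟨haF, ha⟩, hat⟩ := exists_mem_inter_uIcc_forall_notMem hFc ht₀F t
    have haI : a ∈ I := hI.uIcc_subset ht₀I ht ha
    obtain ⟨hmild, hdouble⟩ := H.isBoundedMild_of_notMem hF (hshort a haI t ht) hat
    refine ⟨a, ⟨haF, haI⟩, hmild, hdouble.trans ?_⟩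
    rw [ENNReal.coe_mul, ENNReal.coe_ofNat]
    gcongr
    exact hM a ⟨haF, haI⟩
  have hclosed : ∀ a ∈ F ∩ I, ∀ b ∈ F ∩ I, a ≤ b → IsBoundedMild f a b := by
    intro a ha b hb hab
    have hsub : Icc a b ⊆ I := hI.out ha.2 hb.2
    have hbound : ∀ r ∈ Icc a b, weightedNorm (f r) ≤ (2 * M : ℝ≥0) := fun r hr =>
      (hnear r (hsub hr)).choose_spec.2.2
    exact ⟨⟨2 * M, by rwa [uIcc_of_le hab]⟩, H.isMild_of_isClosed hFc hab ha.1 hb.1 hbound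
      (fun s hs => hn s ⟨hs.1, hsub hs.2⟩) fun p hp h₁ h₂ =>
        (H.isBoundedMild_of_mem_gaps hF hp (hshort _ (hsub h₁) _ (hsub h₂))).2⟩
  have hR := H.isBoundedMild_equivalence
  obtain ⟨a, ha, hac, -⟩ := hnear c hc
  obtain ⟨b, hb, hbd, -⟩ := hnear d hd
  refine hR.trans (hR.symm hac) (hR.trans ?_ hbd)
  exact (le_total a b).elim (hclosed a ha b hb) fun h => hR.symm (hclosed b hb a ha h)

theorem isBoundedMild (H : ControlledTransport f C) (c d : ℝ) : IsBoundedMild f c d := by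
  have hcont : ∀ z, Continuous fun t => f t z := fun z => (H.differentiable_time z).continuous
  refine forall_rel_of_baire H.isBoundedMild_equivalence
    (S := fun n : ℕ => {t | weightedNorm (f t) ≤ n} ∩
      {t | ∀ v, LipschitzSlopes n fun x => f t (x, v)}) (fun n => ?_) ?_ ?_ c d
  · refine (isClosed_setOf_weightedNorm_le (fun t => (H.continuous t).measurable) hcont _).inter ?_
    simp only [ofPred_forall]
    exact isClosed_iInter fun v => isClosed_setOf_lipschitzSlopes (fun x => hcont (x, v)) _
  · refine eq_univ_of_forall fun t => mem_iUnion.2 ?_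
    obtain ⟨n, hn⟩ := H.exists_lipschitzSlopes t
    obtain ⟨m, hm⟩ := ENNReal.exists_nat_gt (H.weightedNorm_lt_top t).ne
    exact ⟨max n m, hm.le.trans (by exact_mod_cast le_max_right n m),
      fun v => (hn v).mono (by exact_mod_cast le_max_left n m)⟩
  · intro F hFc hF t ht n hn
    have hshort : ∀ᶠ p : ℝ × ℝ in 𝓝 (t, t), C * ENNReal.ofReal |p.2 - p.1| < 1 / 2 := by
      have hlim : Continuous fun p : ℝ × ℝ => (C : ℝ≥0∞) * ENNReal.ofReal |p.2 - p.1| :=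
        (ENNReal.continuous_const_mul ENNReal.coe_ne_top).comp
          (ENNReal.continuous_ofReal.comp (by fun_prop))
      exact (hlim.tendsto (t, t)).eventually_lt_const (by simp)
    rw [nhds_prod_eq] at hshort ⊢
    obtain ⟨U, hU, hUshort⟩ := (eventually_prod_self_iff
      (r := fun c d => C * ENNReal.ofReal |d - c| < 1 / 2)).1 hshort
    obtain ⟨ε, hε, hball⟩ := Metric.mem_nhds_iff.1
      (inter_mem hU (mem_nhdsWithin_iff_eventually.1 hn))
    have hF' : ∀ s ∈ F ∩ Metric.ball t ε, s ∈ {t | weightedNorm (f t) ≤ n} ∩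
        {t | ∀ v, LipschitzSlopes n fun x => f t (x, v)} := fun s hs => (hball hs.2).2 hs.1
    refine (eventually_prod_self_iff (r := IsBoundedMild f)).2
      ⟨Metric.ball t ε, Metric.ball_mem_nhds t hε, fun c hc d hd => ?_⟩
    exact H.isBoundedMild_of_ordConnected (M := n) hFc hF (convex_ball t ε).ordConnected
      (fun c hc d hd => (hUshort c (hball hc).1 d (hball hd).1).le)
      ⟨t, ht, Metric.mem_ball_self hε⟩ (fun s hs => by simpa using (hF' s hs).1)
      (fun s hs => (hF' s hs).2) hc hd

lemma tendsto_integral_mul_comp_shear_sub (H : ControlledTransport f C) {B : ℝ≥0}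
    {k : ℝ × ℝ → ℝ} (hk : ∀ z, |k z| ≤ B * (1 + z.2 ^ 2)) (s : ℝ) :
    Tendsto (fun t => ∫ z, k (shear t z) * (f t ∘ shear t - f s ∘ shear s) z) (𝓝 s) (𝓝 0) := by
  obtain ⟨⟨M, hM⟩, -⟩ := H.isBoundedMild (s - 1) (s + 1)
  rw [tendsto_zero_iff_enorm_tendsto_zero]
  have hlim : Tendsto (fun t => B * (C * M * ENNReal.ofReal |t - s|)) (𝓝 s) (𝓝 0) := by
    have hcont : Continuous fun t => (B : ℝ≥0∞) * (C * M * ENNReal.ofReal |t - s|) :=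
      (ENNReal.continuous_const_mul (by finiteness)).comp
        ((ENNReal.continuous_const_mul (by finiteness)).comp
          (ENNReal.continuous_ofReal.comp (by fun_prop)))
    simpa using hcont.tendsto s
  refine tendsto_of_tendsto_of_tendsto_of_le_of_le' tendsto_const_nhds hlim
    (Eventually.of_forall fun _ => zero_le) ?_
  filter_upwards [Icc_mem_nhds (sub_one_lt s) (lt_add_one s)] with t ht
  have hsub : uIcc s t ⊆ uIcc (s - 1) (s + 1) :=
    (uIcc_subset_Icc ⟨by linarith, by linarith⟩ ht).trans Icc_subset_uIcc
  calc ‖∫ z, k (shear t z) * (f t ∘ shear t - f s ∘ shear s) z‖ₑ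
      ≤ ∫⁻ z, ‖k (shear t z) * (f t ∘ shear t - f s ∘ shear s) z‖ₑ :=
        enorm_integral_le_lintegral_enorm _
    _ ≤ B * weightedNorm (f t ∘ shear t - f s ∘ shear s) :=
        lintegral_enorm_mul_le (k := k ∘ shear t) (fun z => hk (shear t z))
          ((H.measurable_shear t).sub (H.measurable_shear s))
    _ ≤ B * (C * M * ENNReal.ofReal |t - s|) := by
        gcongr
        exact H.weightedNorm_comp_shear_sub_le (fun r hr => hM r (hsub hr)) (H.isBoundedMild s t).2

theorem continuous_integral_mul (H : ControlledTransport f C) {B : ℝ≥0} {k : ℝ × ℝ → ℝ}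
    (hkc : Continuous k) (hk : ∀ z, |k z| ≤ B * (1 + z.2 ^ 2)) :
    Continuous fun t => ∫ z, k z * f t z := by
  have hshear : ∀ s t, Integrable fun z => k (shear t z) * f s (shear s z) := fun s t =>
    integrable_mul_of_weightedNorm_lt_top (k := k ∘ shear t) (fun z => hk (shear t z))
      (hkc.comp (continuous_shear t)).measurable (H.measurable_shear s)
      ((weightedNorm_comp_shear s (H.continuous s).measurable).trans_lt (H.weightedNorm_lt_top s))
  refine continuous_iff_continuousAt.2 fun s => ?_
  have hfrozen : Continuous fun t => ∫ z, k (shear t z) * f s (shear s z) := by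
    refine continuous_of_dominated (bound := fun z => |(B * (1 + z.2 ^ 2)) * f s (shear s z)|)
      (fun t => (hshear s t).aestronglyMeasurable)
      (fun t => Eventually.of_forall fun z => ?_) ?_
      (Eventually.of_forall fun z => (hkc.comp (continuous_shear_left z)).mul continuous_const)
    · rw [norm_mul, abs_mul, Real.norm_eq_abs, Real.norm_eq_abs]
      exact mul_le_mul_of_nonneg_right ((hk (shear t z)).trans (le_abs_self _)) (abs_nonneg _)
    · refine (integrable_mul_of_weightedNorm_lt_top (B := B) (fun z => ?_) (by fun_prop)
        (H.measurable_shear s) ?_).abs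
      · rw [abs_of_nonneg (by positivity)]
      · exact (weightedNorm_comp_shear s (H.continuous s).measurable).trans_lt
          (H.weightedNorm_lt_top s)
  have hsum := (H.tendsto_integral_mul_comp_shear_sub hk s).add (hfrozen.tendsto s)
  rw [zero_add, integral_comp_shear s (g := fun z => k z * f s z)
    (hkc.mul (H.continuous s)).measurable] at hsum
  refine hsum.congr fun t => ?_
  simp only [Pi.sub_apply, Function.comp_apply, mul_sub]
  rw [integral_sub (hshear t t) (hshear s t), sub_add_cancel,
    integral_comp_shear t (g := fun z => k z * f t z) (hkc.mul (H.continuous t)).measurable]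

lemma integrable_mul_materialDeriv (H : ControlledTransport f C) {B : ℝ≥0} {ψ : ℝ → ℝ}
    (hψm : Measurable ψ) (hψ : ∀ v, |ψ v| ≤ B * (1 + v ^ 2))
    (hM : ∀ r ∈ uIcc c d, weightedNorm (f r) ≤ M) :
    Integrable (fun p : (ℝ × ℝ) × ℝ => ψ p.1.2 * materialDeriv f p.2 (shear p.2 p.1))
      ((volume : Measure (ℝ × ℝ)).prod (volume.restrict (uIoc c d))) := by
  have hm : Measurable fun p : (ℝ × ℝ) × ℝ => ψ p.1.2 * materialDeriv f p.2 (shear p.2 p.1) :=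
    (hψm.comp measurable_fst.snd).mul (H.measurable_materialDeriv_shear.comp measurable_swap)
  refine ⟨hm.aestronglyMeasurable, ?_⟩
  rw [hasFiniteIntegral_iff_enorm, lintegral_prod _ hm.enorm.aemeasurable]
  calc ∫⁻ z : ℝ × ℝ, ∫⁻ r in uIoc c d, ‖ψ z.2 * materialDeriv f r (shear r z)‖ₑ
      ≤ ∫⁻ z : ℝ × ℝ, B * (velocityWeight z.2 *
          ∫⁻ r in uIoc c d, ‖materialDeriv f r (shear r z)‖ₑ) := by
        refine lintegral_mono fun z => ?_
        simp only [enorm_mul]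
        rw [lintegral_const_mul' _ _ enorm_ne_top, ← mul_assoc]
        gcongr
        exact enorm_le_mul_velocityWeight (hψ z.2)
    _ ≤ B * (C * M * ENNReal.ofReal |d - c|) := by
        rw [lintegral_const_mul' _ _ ENNReal.coe_ne_top]
        gcongr
        exact H.lintegral_lintegral_materialDeriv_le hM
    _ < ⊤ := by finiteness

theorem integral_mul_sub_integral_mul (H : ControlledTransport f C) {B : ℝ≥0} {ψ : ℝ → ℝ}
    (hψm : Measurable ψ) (hψ : ∀ v, |ψ v| ≤ B * (1 + v ^ 2)) (c d : ℝ) :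
    (∫ z, ψ z.2 * f d z) - ∫ z, ψ z.2 * f c z =
      ∫ r in c..d, ∫ z, ψ z.2 * materialDeriv f r z := by
  obtain ⟨⟨M, hM⟩, hmild⟩ := H.isBoundedMild c d
  have hψ₂ : Measurable fun z : ℝ × ℝ => ψ z.2 := hψm.comp measurable_snd
  have hshear : ∀ t, ∫ z, ψ z.2 * f t z = ∫ z, ψ z.2 * f t (shear t z) := fun t =>
    (integral_comp_shear t (g := fun z => ψ z.2 * f t z) (hψ₂.mul (H.continuous t).measurable)).symm
  have hshear' : ∀ t, ∫ z, ψ z.2 * materialDeriv f t z =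
      ∫ z, ψ z.2 * materialDeriv f t (shear t z) := fun t =>
    (integral_comp_shear t (g := fun z => ψ z.2 * materialDeriv f t z)
      (hψ₂.mul H.measurable_materialDeriv.of_uncurry_left)).symm
  have hint : ∀ t, Integrable fun z => ψ z.2 * f t (shear t z) := fun t =>
    (measurePreserving_shear t).integrable_comp_of_integrable
      (integrable_mul_of_weightedNorm_lt_top (fun z => hψ z.2) hψ₂ (H.continuous t).measurable
        (H.weightedNorm_lt_top t))
  calc (∫ z, ψ z.2 * f d z) - ∫ z, ψ z.2 * f c z
      = ∫ z, ∫ r in c..d, ψ z.2 * materialDeriv f r (shear r z) := by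
        rw [hshear, hshear, ← integral_sub (hint d) (hint c)]
        refine integral_congr_ae ?_
        filter_upwards [hmild] with z hz
        rw [intervalIntegral.integral_const_mul, ← hz, mul_sub]
    _ = ∫ r in c..d, ∫ z, ψ z.2 * materialDeriv f r z := by
        simp only [hshear', intervalIntegral.intervalIntegral_eq_integral_uIoc]
        rw [integral_smul, integral_integral_swap (H.integrable_mul_materialDeriv hψm hψ hM)]

theorem hasDerivAt_integral_mul (H : ControlledTransport f C) {B : ℝ≥0} {ψ : ℝ → ℝ}
    (hψm : Measurable ψ) (hψ : ∀ v, |ψ v| ≤ B * (1 + v ^ 2))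
    (hcont : Continuous fun r => ∫ z, ψ z.2 * materialDeriv f r z) (t : ℝ) :
    HasDerivAt (fun s => ∫ z, ψ z.2 * f s z) (∫ z, ψ z.2 * materialDeriv f t z) t := by
  have hbalance : (fun s => ∫ z, ψ z.2 * f s z) = fun s =>
      (∫ z, ψ z.2 * f t z) + ∫ r in t..s, ∫ z, ψ z.2 * materialDeriv f r z := by
    funext s
    rw [← H.integral_mul_sub_integral_mul hψm hψ, add_sub_cancel]
  rw [hbalance]
  exact (intervalIntegral.integral_hasDerivAt_right (hcont.intervalIntegrable _ _)
    (hcont.stronglyMeasurableAtFilter _ _) hcont.continuousAt).const_add _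

end ControlledTransport

end FreeTransport

section FourierModes

/-- The oscillation `e^{2πixq} φ̂(q)` of frequency `q` at `x`, so that `φ` is the superposition of
its modes. -/
noncomputable def fourierMode (φ : 𝓢(ℝ, ℂ)) (x q : ℝ) : ℂ :=
  Complex.exp ((2 * Real.pi * x * q : ℝ) * I) * 𝓕 φ q

lemma norm_fourierMode (φ : 𝓢(ℝ, ℂ)) (x q : ℝ) : ‖fourierMode φ x q‖ = ‖𝓕 φ q‖ := by
  rw [fourierMode, norm_mul, Complex.norm_exp_ofReal_mul_I, one_mul]

lemma continuous_fourierMode (φ : 𝓢(ℝ, ℂ)) (x : ℝ) : Continuous (fourierMode φ x) := by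
  unfold fourierMode
  have := (𝓕 φ).continuous
  fun_prop

lemma integrable_pow_mul_fourierMode (φ : 𝓢(ℝ, ℂ)) (x : ℝ) (n : ℕ) :
    Integrable fun q : ℝ => (q : ℂ) ^ n * fourierMode φ x q := by
  have := continuous_fourierMode φ x
  refine ((𝓕 φ).integrable_pow_mul volume n).mono' (by fun_prop)
    (Eventually.of_forall fun q => ?_)
  rw [norm_mul, norm_fourierMode, norm_pow, Complex.norm_real]

lemma fourierMode_eq_integral (φ : 𝓢(ℝ, ℂ)) (x q : ℝ) :
    fourierMode φ x q = ∫ s, φ (x + s) * Complex.exp ((-(2 * Real.pi * s * q) : ℝ) * I) := by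
  rw [fourierMode, fourier_coe, Real.fourier_real_eq_integral_exp_smul, ← integral_const_mul,
    ← integral_add_left_eq_self _ x]
  refine integral_congr_ae (Eventually.of_forall fun s => ?_)
  simp only [smul_eq_mul]
  rw [← mul_assoc, ← Complex.exp_add, mul_comm]
  push_cast
  ring_nf

lemma integral_fourierMode (φ : 𝓢(ℝ, ℂ)) (x : ℝ) : ∫ q, fourierMode φ x q = φ x := by
  calc ∫ q, fourierMode φ x q = 𝓕⁻ (𝓕 φ) x := by
        rw [fourierInv_coe, Real.fourierInv_eq']
        refine integral_congr_ae (Eventually.of_forall fun q => ?_)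
        simp only [fourierMode, smul_eq_mul, Real.inner_apply]
        ring_nf
    _ = φ x := by rw [FourierTransform.fourierInv_fourier_eq]

lemma fourierMode_derivCLM (φ : 𝓢(ℝ, ℂ)) (x q : ℝ) :
    fourierMode (SchwartzMap.derivCLM ℂ ℂ φ) x q = 2 * Real.pi * I * (q * fourierMode φ x q) := by
  have hderiv : 𝓕 (SchwartzMap.derivCLM ℂ ℂ φ) q = (2 * Real.pi * I * q) • 𝓕 φ q :=
    congrFun (Real.fourier_deriv φ.integrable φ.differentiable
      (SchwartzMap.derivCLM ℂ ℂ φ).integrable) q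
  rw [fourierMode, fourierMode, hderiv, smul_eq_mul]
  ring

lemma integral_mul_fourierMode (φ : 𝓢(ℝ, ℂ)) (x : ℝ) :
    2 * Real.pi * I * ∫ q : ℝ, q * fourierMode φ x q = deriv φ x := by
  simp only [← integral_const_mul, ← fourierMode_derivCLM, integral_fourierMode,
    SchwartzMap.derivCLM_apply]

lemma integral_comp_add_half_mul_cexp (φ : 𝓢(ℝ, ℂ)) (ℏ x p : ℝ) :
    ∫ y : ℝ, φ (x + y / 2) * Complex.exp (I * y * p / ℏ) =
      2 * fourierMode φ x (-(p / (Real.pi * ℏ))) := by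
  have hscale := Measure.integral_comp_div (fun s : ℝ => φ (x + s) *
    Complex.exp ((-(2 * Real.pi * s * -(p / (Real.pi * ℏ))) : ℝ) * I)) 2
  rw [← fourierMode_eq_integral, abs_two, Complex.real_smul, Complex.ofReal_ofNat] at hscale
  rw [← hscale]
  refine integral_congr_ae (Eventually.of_forall fun y => ?_)
  have hphase : 2 * Real.pi * (y / 2) * -(p / (Real.pi * ℏ)) = -(y * p / ℏ) := by
    rw [div_mul_eq_div_div_swap]
    field_simp
  simp only [hphase]
  push_cast
  ring_nf

lemma norm_cexp_I_mul_div (y p ℏ : ℝ) : ‖Complex.exp (I * y * p / ℏ)‖ = 1 := by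
  rw [← Complex.norm_exp_ofReal_mul_I (y * p / ℏ)]
  push_cast
  ring_nf

lemma integrable_comp_add_half {φ : ℝ → ℂ} (hφ : Integrable φ) (x : ℝ) :
    Integrable fun y => φ (x + y / 2) :=
  (hφ.comp_add_left x).comp_div two_ne_zero

lemma integrable_comp_sub_half {φ : ℝ → ℂ} (hφ : Integrable φ) (x : ℝ) :
    Integrable fun y => φ (x - y / 2) :=
  (hφ.comp_sub_left x).comp_div two_ne_zero

end FourierModes

section Kernel

/-- The kernel `(-i)/(2πℏ²) ∫ [φ(x+y/2) - φ(x-y/2)] e^{iyp/ℏ} dy` of the Wigner potential operator,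
which acts on velocity profiles by convolution. -/
noncomputable def wignerKernel (ℏ : ℝ) (φ : ℝ → ℂ) (x p : ℝ) : ℂ :=
  -I / (2 * Real.pi * ℏ ^ 2) *
    ∫ y : ℝ, (φ (x + y / 2) - φ (x - y / 2)) * Complex.exp (I * y * p / ℏ)

lemma wignerKernel_neg (ℏ : ℝ) (φ : ℝ → ℂ) (x p : ℝ) :
    wignerKernel ℏ φ x (-p) = -wignerKernel ℏ φ x p := by
  simp only [wignerKernel]
  rw [← integral_neg_eq_self, ← mul_neg, ← integral_neg]
  congr 2 with y
  push_cast
  ring_nf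

lemma wignerKernel_eq_fourierMode (ℏ : ℝ) (φ : 𝓢(ℝ, ℂ)) (x p : ℝ) :
    wignerKernel ℏ φ x p = -I / (Real.pi * ℏ ^ 2) *
      (fourierMode φ x (-(p / (Real.pi * ℏ))) - fourierMode φ x (p / (Real.pi * ℏ))) := by
  have hmul : ∀ {k : ℝ → ℂ}, Integrable k →
      Integrable fun y : ℝ => k y * Complex.exp (I * y * p / ℏ) := fun hk =>
    hk.mul_bdd (c := 1) (by fun_prop) (Eventually.of_forall fun y => (norm_cexp_I_mul_div y p ℏ).le)
  have hminus : ∫ y : ℝ, φ (x - y / 2) * Complex.exp (I * y * p / ℏ) =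
      2 * fourierMode φ x (p / (Real.pi * ℏ)) := by
    have hplus := integral_comp_add_half_mul_cexp φ ℏ x (-p)
    rw [neg_div, neg_neg, ← integral_neg_eq_self] at hplus
    rw [← hplus]
    congr 1 with y
    push_cast
    ring_nf
  simp only [wignerKernel, sub_mul]
  rw [integral_sub (hmul (integrable_comp_add_half φ.integrable x))
    (hmul (integrable_comp_sub_half φ.integrable x)), integral_comp_add_half_mul_cexp, hminus]
  ring

lemma continuous_wignerKernel (ℏ : ℝ) (φ : 𝓢(ℝ, ℂ)) (x : ℝ) : Continuous (wignerKernel ℏ φ x) := by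
  simp only [funext (wignerKernel_eq_fourierMode ℏ φ x)]
  have := continuous_fourierMode φ x
  fun_prop

lemma integrable_pow_mul_fourierMode_div (φ : 𝓢(ℝ, ℂ)) (x : ℝ) (n : ℕ) {b : ℝ} (hb : b ≠ 0) :
    Integrable fun p : ℝ => (p : ℂ) ^ n * fourierMode φ x (p / b) := by
  refine (((integrable_pow_mul_fourierMode φ x n).comp_div hb).const_mul ((b : ℂ) ^ n)).congr
    (Eventually.of_forall fun p => ?_)
  have hb' : (b : ℂ) ≠ 0 := by exact_mod_cast hb
  simp only
  rw [← mul_assoc, ← mul_pow, Complex.ofReal_div, mul_div_cancel₀ _ hb']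

lemma integrable_pow_mul_wignerKernel {ℏ : ℝ} (hℏ : ℏ ≠ 0) (φ : 𝓢(ℝ, ℂ)) (x : ℝ) (n : ℕ) :
    Integrable fun p : ℝ => (p : ℂ) ^ n * wignerKernel ℏ φ x p := by
  have hb : Real.pi * ℏ ≠ 0 := mul_ne_zero Real.pi_ne_zero hℏ
  refine (((integrable_pow_mul_fourierMode_div φ x n (neg_ne_zero.2 hb)).sub
    (integrable_pow_mul_fourierMode_div φ x n hb)).const_mul (-I / (Real.pi * ℏ ^ 2))).congr
    (Eventually.of_forall fun p => ?_)
  simp only [wignerKernel_eq_fourierMode, Pi.sub_apply, div_neg]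
  ring

lemma integral_wignerKernel (ℏ : ℝ) (φ : ℝ → ℂ) (x : ℝ) : ∫ p, wignerKernel ℏ φ x p = 0 := by
  have hneg := integral_neg_eq_self (wignerKernel ℏ φ x) volume
  simp only [wignerKernel_neg, integral_neg] at hneg
  exact CharZero.neg_eq_self_iff.1 hneg

lemma integral_sq_mul_wignerKernel (ℏ : ℝ) (φ : ℝ → ℂ) (x : ℝ) :
    ∫ p : ℝ, (p : ℂ) ^ 2 * wignerKernel ℏ φ x p = 0 := by
  have hneg := integral_neg_eq_self (fun p : ℝ => (p : ℂ) ^ 2 * wignerKernel ℏ φ x p) volume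
  simp only [wignerKernel_neg, ofReal_neg, neg_sq, mul_neg, integral_neg] at hneg
  exact CharZero.neg_eq_self_iff.1 hneg

lemma integral_mul_fourierMode_div (φ : 𝓢(ℝ, ℂ)) (x : ℝ) {b : ℝ} (hb : 0 < b) :
    ∫ p : ℝ, p * fourierMode φ x (p / b) = b ^ 2 * ∫ q : ℝ, q * fourierMode φ x q := by
  have hscale := Measure.integral_comp_div (fun q : ℝ => q * fourierMode φ x q) b
  rw [abs_of_pos hb, Complex.real_smul] at hscale
  rw [pow_two, mul_assoc, ← hscale, ← integral_const_mul]
  congr 1 with p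
  rw [← mul_assoc, ← Complex.ofReal_mul, mul_div_cancel₀ _ hb.ne']

lemma integral_mul_wignerKernel {ℏ : ℝ} (hℏ : 0 < ℏ) (φ : 𝓢(ℝ, ℂ)) (x : ℝ) :
    ∫ p : ℝ, p * wignerKernel ℏ φ x p = deriv φ x := by
  have hb : 0 < Real.pi * ℏ := mul_pos Real.pi_pos hℏ
  have hpos := integral_mul_fourierMode_div φ x hb
  have hneg : ∫ p : ℝ, p * fourierMode φ x (p / -(Real.pi * ℏ)) =
      -∫ p : ℝ, p * fourierMode φ x (p / (Real.pi * ℏ)) := by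
    rw [← integral_neg_eq_self, ← integral_neg]
    simp only [neg_div_neg_eq, ofReal_neg, neg_mul]
  have hint : ∀ {b : ℝ}, b ≠ 0 → Integrable fun p : ℝ => p * fourierMode φ x (p / b) := fun h => by
    simpa only [pow_one] using integrable_pow_mul_fourierMode_div φ x 1 h
  simp only [wignerKernel_eq_fourierMode, mul_left_comm _ (-I / _), mul_sub (Complex.ofReal _),
    ← div_neg]
  rw [integral_const_mul, integral_sub (hint (neg_ne_zero.2 hb.ne')) (hint hb.ne'), hneg, hpos,
    ← integral_mul_fourierMode]
  have hℏ' : (ℏ : ℂ) ≠ 0 := by exact_mod_cast hℏ.ne'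
  have hπ : (Real.pi : ℂ) ≠ 0 := by exact_mod_cast Real.pi_ne_zero
  push_cast
  field_simp
  ring

lemma enorm_ofReal (r : ℝ) : ‖(r : ℂ)‖ₑ = ‖r‖ₑ := by
  rw [enorm_eq_nnnorm, enorm_eq_nnnorm, Complex.nnnorm_real]

lemma lintegral_velocityWeight_mul_enorm_lt_top {k : ℝ → ℂ} (hk : Integrable k)
    (hk2 : Integrable fun p : ℝ => (p : ℂ) ^ 2 * k p) :
    ∫⁻ p, velocityWeight p * ‖k p‖ₑ < ⊤ := by
  have hsplit : ∀ p : ℝ, velocityWeight p * ‖k p‖ₑ = ‖k p‖ₑ + ‖(p : ℂ) ^ 2 * k p‖ₑ := fun p => by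
    rw [velocityWeight, ENNReal.ofReal_add zero_le_one (sq_nonneg p), ENNReal.ofReal_one, add_mul,
      one_mul, enorm_mul, ← Complex.ofReal_pow, enorm_ofReal, Real.enorm_of_nonneg (sq_nonneg p)]
  simp only [hsplit]
  rw [lintegral_add_left' hk.aestronglyMeasurable.enorm]
  exact ENNReal.add_lt_top.2 ⟨hk.2, hk2.2⟩

lemma lintegral_velocityWeight_mul_enorm_fourierMode_div_lt_top (φ : 𝓢(ℝ, ℂ)) (x : ℝ) {b : ℝ}
    (hb : b ≠ 0) : ∫⁻ p, velocityWeight p * ‖fourierMode φ x (p / b)‖ₑ < ⊤ :=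
  lintegral_velocityWeight_mul_enorm_lt_top
    (by simpa only [pow_zero, one_mul] using integrable_pow_mul_fourierMode_div φ x 0 hb)
    (integrable_pow_mul_fourierMode_div φ x 2 hb)

lemma exists_lintegral_velocityWeight_mul_enorm_wignerKernel_le {ℏ : ℝ} (hℏ : ℏ ≠ 0)
    (φ : 𝓢(ℝ, ℂ)) :
    ∃ C : ℝ≥0, ∀ x, ∫⁻ p, velocityWeight p * ‖wignerKernel ℏ φ x p‖ₑ ≤ C := by
  have hb : Real.pi * ℏ ≠ 0 := mul_ne_zero Real.pi_ne_zero hℏ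
  set c : ℂ := -I / (Real.pi * ℏ ^ 2) with hc
  set A : ℝ → ℝ≥0∞ := fun b => ∫⁻ p, velocityWeight p * ‖fourierMode φ 0 (p / b)‖ₑ with hA
  have hmodes : ∀ x b, ∫⁻ p, velocityWeight p * ‖fourierMode φ x (p / b)‖ₑ = A b := fun x b => by
    simp only [hA, ← ofReal_norm, norm_fourierMode]
  have hfin : ‖c‖ₑ * (A (-(Real.pi * ℏ)) + A (Real.pi * ℏ)) ≠ ⊤ :=
    ENNReal.mul_ne_top enorm_ne_top (ENNReal.add_ne_top.2
      ⟨(lintegral_velocityWeight_mul_enorm_fourierMode_div_lt_top φ 0 (neg_ne_zero.2 hb)).ne,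
        (lintegral_velocityWeight_mul_enorm_fourierMode_div_lt_top φ 0 hb).ne⟩)
  refine ⟨(‖c‖ₑ * (A (-(Real.pi * ℏ)) + A (Real.pi * ℏ))).toNNReal, fun x => ?_⟩
  rw [ENNReal.coe_toNNReal hfin, ← hmodes x, ← hmodes x]
  have hmode := (continuous_fourierMode φ x).measurable
  have hweight := measurable_velocityWeight
  rw [← lintegral_add_left (by fun_prop), ← lintegral_const_mul' _ _ enorm_ne_top]
  refine lintegral_mono fun p => ?_
  rw [wignerKernel_eq_fourierMode, enorm_mul, ← hc, ← div_neg, mul_left_comm, ← mul_add]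
  gcongr
  exact enorm_sub_le

end Kernel

section Convolution

lemma velocityWeight_le_mul (v w : ℝ) :
    velocityWeight v ≤ 2 * velocityWeight w * velocityWeight (v - w) := by
  simp only [velocityWeight]
  rw [← ENNReal.ofReal_ofNat 2, ← ENNReal.ofReal_mul zero_le_two,
    ← ENNReal.ofReal_mul (by positivity)]
  refine ENNReal.ofReal_le_ofReal ?_
  nlinarith [sq_nonneg (v - 2 * w), sq_nonneg (w * (v - w))]

lemma lintegral_velocityWeight_mul_enorm_convolution_le {K g : ℝ → ℂ} (hK : Measurable K)
    (hg : Measurable g) :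
    ∫⁻ v, velocityWeight v * ‖∫ w, g w * K (v - w)‖ₑ ≤
      2 * (∫⁻ p, velocityWeight p * ‖K p‖ₑ) * ∫⁻ w, velocityWeight w * ‖g w‖ₑ := by
  have hweight := measurable_velocityWeight
  calc ∫⁻ v, velocityWeight v * ‖∫ w, g w * K (v - w)‖ₑ
      ≤ ∫⁻ v, ∫⁻ w, 2 * (velocityWeight w * ‖g w‖ₑ) *
          (velocityWeight (v - w) * ‖K (v - w)‖ₑ) := by
        refine lintegral_mono fun v => ?_
        refine (mul_le_mul_right (enorm_integral_le_lintegral_enorm _) _).trans ?_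
        rw [← lintegral_const_mul _ (by fun_prop)]
        refine lintegral_mono fun w => ?_
        rw [enorm_mul]
        refine (mul_le_mul_left (velocityWeight_le_mul v w) _).trans_eq ?_
        ring
    _ = ∫⁻ w, ∫⁻ v, 2 * (velocityWeight w * ‖g w‖ₑ) *
          (velocityWeight (v - w) * ‖K (v - w)‖ₑ) :=
        lintegral_lintegral_swap (by fun_prop)
    _ = ∫⁻ w, 2 * (velocityWeight w * ‖g w‖ₑ) * ∫⁻ p, velocityWeight p * ‖K p‖ₑ := by
        refine lintegral_congr fun w => ?_
        rw [lintegral_const_mul _ (by fun_prop),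
          lintegral_sub_right_eq_self (fun p => velocityWeight p * ‖K p‖ₑ) w]
    _ = _ := by
        rw [lintegral_mul_const _ (by fun_prop), lintegral_const_mul _ (by fun_prop)]
        ring

variable {K g : ℝ → ℂ}

lemma pow_mul_convolution_ae_eq (hK : ∀ n : ℕ, Integrable fun p : ℝ => (p : ℂ) ^ n * K p)
    (hg : ∀ n : ℕ, Integrable fun p : ℝ => (p : ℂ) ^ n * g p) (m : ℕ) :
    (fun v : ℝ => (v : ℂ) ^ m * ∫ w, g w * K (v - w)) =ᵐ[volume] fun v =>
      ∑ n ∈ Finset.range (m + 1), (m.choose n : ℂ) *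
        ((fun w : ℝ => (w : ℂ) ^ n * g w) ⋆[ContinuousLinearMap.mul ℝ ℂ]
          fun p : ℝ => (p : ℂ) ^ (m - n) * K p) v := by
  have hexists := fun n => (hg n).ae_convolution_exists (ContinuousLinearMap.mul ℝ ℂ) (hK (m - n))
  filter_upwards [ae_all_iff.2 hexists] with v hv
  simp only [MeasureTheory.convolution, ← integral_const_mul]
  rw [← integral_finsetSum _ fun n _ => (hv n).integrable.const_mul _]
  refine integral_congr_ae (Eventually.of_forall fun w => ?_)
  have hbinom := add_pow (w : ℂ) (v - w : ℝ) m
  rw [← Complex.ofReal_add, add_sub_cancel] at hbinom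
  simp only [ContinuousLinearMap.mul_apply', hbinom, Finset.sum_mul]
  exact Finset.sum_congr rfl fun n _ => by ring

lemma integrable_pow_mul_convolution (hK : ∀ n : ℕ, Integrable fun p : ℝ => (p : ℂ) ^ n * K p)
    (hg : ∀ n : ℕ, Integrable fun p : ℝ => (p : ℂ) ^ n * g p) (m : ℕ) :
    Integrable fun v : ℝ => (v : ℂ) ^ m * ∫ w, g w * K (v - w) :=
  (integrable_congr (pow_mul_convolution_ae_eq hK hg m)).2 <|
    integrable_finsetSum _ fun n _ => ((hg n).integrable_convolution _ (hK (m - n))).const_mul _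

lemma integral_pow_mul_convolution (hK : ∀ n : ℕ, Integrable fun p : ℝ => (p : ℂ) ^ n * K p)
    (hg : ∀ n : ℕ, Integrable fun p : ℝ => (p : ℂ) ^ n * g p) (m : ℕ) :
    ∫ v : ℝ, (v : ℂ) ^ m * ∫ w, g w * K (v - w) =
      ∑ n ∈ Finset.range (m + 1), (m.choose n : ℂ) *
        ((∫ w : ℝ, (w : ℂ) ^ n * g w) * ∫ p : ℝ, (p : ℂ) ^ (m - n) * K p) := by
  rw [integral_congr_ae (pow_mul_convolution_ae_eq hK hg m),
    integral_finsetSum _ fun n _ => ((hg n).integrable_convolution _ (hK (m - n))).const_mul _]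
  simp only [integral_const_mul, integral_convolution _ (hg _) (hK _),
    ContinuousLinearMap.mul_apply']

end Convolution

section WignerOperator

lemma wignerTheta_eq_integral (ℏ : ℝ) {V : ℝ → ℝ} (hV : Integrable V) {g : ℝ → ℂ}
    (hg : Integrable g) (x v : ℝ) :
    wignerTheta ℏ V g x v = ∫ w, g w * wignerKernel ℏ (fun s => (V s : ℂ)) x (v - w) := by
  have hV' : Integrable fun s => (V s : ℂ) := hV.ofReal
  have hdiff : Integrable fun y => (V (x + y / 2) : ℂ) - V (x - y / 2) :=
    (integrable_comp_add_half hV' x).sub (integrable_comp_sub_half hV' x)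
  let F : ℝ → ℝ → ℂ := fun y w => ((V (x + y / 2) : ℂ) - V (x - y / 2)) * g w *
    Complex.exp (I * y * (v - w : ℝ) / ℏ)
  have hint : Integrable (Function.uncurry F) :=
    (hdiff.mul_prod hg).mul_bdd (c := 1) (by fun_prop)
      (Eventually.of_forall fun z => (norm_cexp_I_mul_div z.1 (v - z.2) ℏ).le)
  have hphase : ∀ y w : ℝ, Complex.exp (I * y * (v - w : ℝ) / ℏ) =
      Complex.exp (I * y * v / ℏ) * Complex.exp (-I * y * w / ℏ) := fun y w => by
    rw [← Complex.exp_add]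
    push_cast
    ring_nf
  calc wignerTheta ℏ V g x v
      = -I / (2 * Real.pi * ℏ ^ 2) * ∫ y, ∫ w, F y w := by
        simp only [wignerTheta, F, ← integral_const_mul]
        congr 2 with y
        congr 1 with w
        rw [hphase, Complex.ofReal_sub]
        ring
    _ = -I / (2 * Real.pi * ℏ ^ 2) * ∫ w, ∫ y, F y w := by rw [integral_integral_swap hint]
    _ = ∫ w, g w * wignerKernel ℏ (fun s => (V s : ℂ)) x (v - w) := by
        simp only [wignerKernel, F, mul_left_comm (g _), mul_right_comm _ (g _),
          integral_const_mul, integral_mul_const, mul_comm (g _)]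

variable {ℏ : ℝ}

theorem exists_lintegral_velocityWeight_mul_enorm_wignerTheta_le (hℏ : ℏ ≠ 0) (V : 𝓢(ℝ, ℝ)) :
    ∃ C : ℝ≥0, ∀ x, ∀ {g : ℝ → ℂ}, Measurable g → Integrable g →
      ∫⁻ v, velocityWeight v * ‖wignerTheta ℏ V g x v‖ₑ ≤
        C * ∫⁻ w, velocityWeight w * ‖g w‖ₑ := by
  let φ : 𝓢(ℝ, ℂ) := SchwartzMap.postcompCLM Complex.ofRealCLM V
  obtain ⟨C, hC⟩ := exists_lintegral_velocityWeight_mul_enorm_wignerKernel_le hℏ φ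
  refine ⟨2 * C, fun x g hgm hg => ?_⟩
  simp only [wignerTheta_eq_integral ℏ V.integrable hg]
  refine (lintegral_velocityWeight_mul_enorm_convolution_le
    (continuous_wignerKernel ℏ φ x).measurable hgm).trans ?_
  push_cast
  gcongr
  exact hC x

lemma integrable_sq_mul_wignerTheta (hℏ : ℏ ≠ 0) (V : 𝓢(ℝ, ℝ)) {g : ℝ → ℂ}
    (hg : ∀ n : ℕ, Integrable fun w : ℝ => (w : ℂ) ^ n * g w) (x : ℝ) :
    Integrable fun v : ℝ => (v : ℂ) ^ 2 * wignerTheta ℏ V g x v := by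
  have hg0 : Integrable g := by simpa only [pow_zero, one_mul] using hg 0
  simp only [wignerTheta_eq_integral ℏ V.integrable hg0]
  exact integrable_pow_mul_convolution (integrable_pow_mul_wignerKernel hℏ
    (SchwartzMap.postcompCLM Complex.ofRealCLM V) x) hg 2

theorem integral_sq_mul_wignerTheta (hℏ : 0 < ℏ) (V : 𝓢(ℝ, ℝ)) {g : ℝ → ℂ}
    (hg : ∀ n : ℕ, Integrable fun w : ℝ => (w : ℂ) ^ n * g w) (x : ℝ) :
    ∫ v : ℝ, (v : ℂ) ^ 2 * wignerTheta ℏ V g x v =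
      2 * (∫ w : ℝ, (w : ℂ) * g w) * deriv V x := by
  let φ : 𝓢(ℝ, ℂ) := SchwartzMap.postcompCLM Complex.ofRealCLM V
  have hg0 : Integrable g := by simpa only [pow_zero, one_mul] using hg 0
  have hφ' : deriv φ x = deriv V x := (V.differentiableAt.hasDerivAt).ofReal_comp.deriv
  simp only [wignerTheta_eq_integral ℏ V.integrable hg0]
  refine (integral_pow_mul_convolution (integrable_pow_mul_wignerKernel hℏ.ne' φ x) hg 2).trans ?_
  simp only [Finset.sum_range_succ, Finset.sum_range_zero, Nat.sub_zero, Nat.sub_self, pow_zero,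
    one_mul, Nat.reduceSub, pow_one, integral_sq_mul_wignerKernel, integral_wignerKernel,
    integral_mul_wignerKernel hℏ φ x, hφ', Nat.choose_one_right]
  push_cast
  ring

end WignerOperator

section Maxwellian

open ProbabilityTheory

/-- The local Maxwellian of density `r`, mean velocity `u` and temperature `T`, the equilibrium
towards which the BGK term relaxes. -/
noncomputable def maxwellian (r u T v : ℝ) : ℝ :=
  r * (Real.sqrt (2 * Real.pi * T))⁻¹ * Real.exp (-(v - u) ^ 2 / (2 * T))

lemma maxwellian_eq_mul_gaussianPDFReal (r u : ℝ) (T : ℝ≥0) (v : ℝ) :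
    maxwellian r u T v = r * gaussianPDFReal u T v := by
  rw [maxwellian, gaussianPDFReal, mul_assoc]

lemma integrable_sq_mul_gaussianPDFReal (u : ℝ) {T : ℝ≥0} (hT : T ≠ 0) :
    Integrable fun v => v ^ 2 * gaussianPDFReal u T v := by
  have hsq : Integrable (fun v : ℝ => v ^ 2) (gaussianReal u T) := by
    simpa only [id_eq] using (memLp_id_gaussianReal 2).integrable_sq
  rw [gaussianReal_of_var_ne_zero u hT, integrable_withDensity_iff_integrable_smul'
    (measurable_gaussianPDF u T) (Eventually.of_forall fun _ => gaussianPDF_lt_top)] at hsq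
  simpa only [toReal_gaussianPDF, smul_eq_mul, mul_comm] using hsq

lemma integral_sq_mul_gaussianPDFReal (u : ℝ) {T : ℝ≥0} (hT : T ≠ 0) :
    ∫ v, v ^ 2 * gaussianPDFReal u T v = u ^ 2 + T := by
  have hvar := variance_eq_sub (memLp_id_gaussianReal (μ := u) (v := T) 2)
  simp only [variance_id_gaussianReal, Pi.pow_apply, id_eq, integral_id_gaussianReal] at hvar
  simp only [integral_gaussianReal_eq_integral_smul hT, smul_eq_mul] at hvar
  simp only [mul_comm (_ ^ 2)]
  linarith

variable {T : ℝ}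

lemma integrable_maxwellian (r u : ℝ) (hT : 0 < T) : Integrable (maxwellian r u T) := by
  lift T to ℝ≥0 using hT.le
  simp only [funext (maxwellian_eq_mul_gaussianPDFReal r u T)]
  exact (integrable_gaussianPDFReal u T).const_mul r

lemma integrable_sq_mul_maxwellian (r u : ℝ) (hT : 0 < T) :
    Integrable fun v => v ^ 2 * maxwellian r u T v := by
  lift T to ℝ≥0 using hT.le
  simp only [maxwellian_eq_mul_gaussianPDFReal, mul_left_comm _ r]
  exact (integrable_sq_mul_gaussianPDFReal u (NNReal.coe_pos.1 hT).ne').const_mul r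

lemma integral_maxwellian (r u : ℝ) (hT : 0 < T) : ∫ v, maxwellian r u T v = r := by
  lift T to ℝ≥0 using hT.le
  simp only [maxwellian_eq_mul_gaussianPDFReal]
  rw [integral_const_mul, integral_gaussianPDFReal_eq_one u (NNReal.coe_pos.1 hT).ne', mul_one]

lemma integral_sq_mul_maxwellian (r u : ℝ) (hT : 0 < T) :
    ∫ v, v ^ 2 * maxwellian r u T v = r * (u ^ 2 + T) := by
  lift T to ℝ≥0 using hT.le
  simp only [maxwellian_eq_mul_gaussianPDFReal, mul_left_comm _ r]
  rw [integral_const_mul, integral_sq_mul_gaussianPDFReal u (NNReal.coe_pos.1 hT).ne']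

lemma abs_maxwellian (r u T v : ℝ) : |maxwellian r u T v| = maxwellian |r| u T v := by
  rw [maxwellian, maxwellian, abs_mul, abs_mul, Real.abs_exp, abs_inv,
    abs_of_nonneg (Real.sqrt_nonneg _)]

lemma lintegral_velocityWeight_mul_enorm_maxwellian (r u : ℝ) (hT : 0 < T) :
    ∫⁻ v, velocityWeight v * ‖maxwellian r u T v‖ₑ = ENNReal.ofReal (|r| * (1 + u ^ 2 + T)) := by
  have h0 := integrable_maxwellian |r| u hT
  have h2 := integrable_sq_mul_maxwellian |r| u hT
  calc ∫⁻ v, velocityWeight v * ‖maxwellian r u T v‖ₑ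
      = ∫⁻ v, ENNReal.ofReal (maxwellian |r| u T v + v ^ 2 * maxwellian |r| u T v) := by
        refine lintegral_congr fun v => ?_
        rw [velocityWeight, Real.enorm_eq_ofReal_abs, abs_maxwellian,
          ← ENNReal.ofReal_mul (by positivity), add_mul, one_mul]
    _ = ENNReal.ofReal (∫ v, (maxwellian |r| u T v + v ^ 2 * maxwellian |r| u T v)) := by
        refine (ofReal_integral_eq_lintegral_ofReal (h0.add h2)
          (Eventually.of_forall fun v => ?_)).symm
        simp only [Pi.zero_apply, Pi.add_apply, ← abs_maxwellian]
        positivity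
    _ = ENNReal.ofReal (|r| * (1 + u ^ 2 + T)) := by
        rw [integral_add h0 h2, integral_maxwellian _ u hT, integral_sq_mul_maxwellian _ u hT]
        ring_nf

end Maxwellian

section FluidMoments

/-- The velocity profile `φ` has finite moments of every order, and its density, momentum and
thermal energy are those of the local Maxwellian `maxwellian r u T`. -/
structure HasFluidMoments (φ : ℝ → ℝ) (r u T : ℝ) : Prop where
  integrable_pow_mul : ∀ n : ℕ, Integrable fun v => v ^ n * φ v
  density : r = ∫ v, φ v
  momentum : r * u = ∫ v, v * φ v
  thermal_energy : r * T = ∫ v, (v - u) ^ 2 * φ v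
  temperature_pos : 0 < T

namespace HasFluidMoments

variable {φ : ℝ → ℝ} {r u T : ℝ}

lemma integrable (h : HasFluidMoments φ r u T) : Integrable φ := by
  simpa only [pow_zero, one_mul] using h.integrable_pow_mul 0

lemma integral_sq_mul (h : HasFluidMoments φ r u T) : ∫ v, v ^ 2 * φ v = r * (u ^ 2 + T) := by
  have h0 : Integrable fun v => u ^ 2 * φ v := h.integrable.const_mul _
  have h1 : Integrable fun v => 2 * u * (v * φ v) := by
    simpa only [pow_one] using (h.integrable_pow_mul 1).const_mul (2 * u)
  have h2 : Integrable fun v => (v - u) ^ 2 * φ v :=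
    (((h.integrable_pow_mul 2).sub h1).add h0).congr
      (Eventually.of_forall fun v => by simp only [Pi.add_apply, Pi.sub_apply]; ring)
  calc ∫ v, v ^ 2 * φ v = ∫ v, ((v - u) ^ 2 * φ v + 2 * u * (v * φ v) - u ^ 2 * φ v) := by
        congr 1 with v
        ring
    _ = r * T + 2 * u * (r * u) - u ^ 2 * r := by
        rw [integral_sub (by exact h2.add h1) h0, integral_add h2 h1, integral_const_mul,
          integral_const_mul, ← h.momentum, ← h.density, ← h.thermal_energy]
    _ = r * (u ^ 2 + T) := by ring

lemma lintegral_velocityWeight_mul_enorm_maxwellian_le (h : HasFluidMoments φ r u T) :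
    ∫⁻ v, velocityWeight v * ‖maxwellian r u T v‖ₑ ≤ ∫⁻ v, velocityWeight v * ‖φ v‖ₑ := by
  have hT := h.temperature_pos
  have hmass : r * (1 + u ^ 2 + T) = ∫ v, (1 + v ^ 2) * φ v := by
    simp only [add_mul, one_mul]
    rw [integral_add h.integrable (h.integrable_pow_mul 2), ← h.density, h.integral_sq_mul]
    ring
  calc ∫⁻ v, velocityWeight v * ‖maxwellian r u T v‖ₑ
      = ‖∫ v, (1 + v ^ 2) * φ v‖ₑ := by
        rw [lintegral_velocityWeight_mul_enorm_maxwellian r u hT, ← hmass,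
          Real.enorm_eq_ofReal_abs, abs_mul, abs_of_pos (by positivity : 0 < 1 + u ^ 2 + T)]
    _ ≤ ∫⁻ v, ‖(1 + v ^ 2) * φ v‖ₑ := enorm_integral_le_lintegral_enorm _
    _ = ∫⁻ v, velocityWeight v * ‖φ v‖ₑ := by
        refine lintegral_congr fun v => ?_
        rw [enorm_mul, Real.enorm_of_nonneg (by positivity), velocityWeight]

end HasFluidMoments

variable {ℏ : ℝ}

theorem exists_lintegral_velocityWeight_mul_enorm_transport_le (hℏ : ℏ ≠ 0) (ν : ℝ)
    (V : 𝓢(ℝ, ℝ)) : ∃ C : ℝ≥0, ∀ {x r u T : ℝ} {φ g : ℝ → ℝ}, Measurable φ →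
      HasFluidMoments φ r u T →
      (∀ v, (g v : ℂ) + wignerTheta ℏ V (fun w => (φ w : ℂ)) x v =
        (ν * (maxwellian r u T v - φ v) : ℝ)) →
      ∫⁻ v, velocityWeight v * ‖g v‖ₑ ≤ C * ∫⁻ v, velocityWeight v * ‖φ v‖ₑ := by
  obtain ⟨C, hC⟩ := exists_lintegral_velocityWeight_mul_enorm_wignerTheta_le hℏ V
  refine ⟨2 * ‖ν‖₊ + C, fun {x r u T φ g} hφm h hg => ?_⟩
  have hweight := measurable_velocityWeight
  have hM : Measurable (maxwellian r u T) := by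
    unfold maxwellian
    fun_prop
  have hΘ := hC x (g := fun w => (φ w : ℂ)) (by fun_prop) h.integrable.ofReal
  simp only [enorm_ofReal] at hΘ
  have hpointwise : ∀ v, ‖g v‖ₑ ≤ ‖ν‖ₑ * (‖maxwellian r u T v‖ₑ + ‖φ v‖ₑ) +
      ‖wignerTheta ℏ V (fun w => (φ w : ℂ)) x v‖ₑ := fun v => by
    rw [← enorm_ofReal (g v), eq_sub_of_add_eq (hg v)]
    refine enorm_sub_le.trans ?_
    rw [enorm_ofReal, enorm_mul]
    gcongr
    exact enorm_sub_le
  calc ∫⁻ v, velocityWeight v * ‖g v‖ₑ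
      ≤ ∫⁻ v, (‖ν‖ₑ * (velocityWeight v * ‖maxwellian r u T v‖ₑ + velocityWeight v * ‖φ v‖ₑ) +
          velocityWeight v * ‖wignerTheta ℏ V (fun w => (φ w : ℂ)) x v‖ₑ) := by
        refine lintegral_mono fun v => (mul_le_mul_right (hpointwise v) _).trans_eq ?_
        ring
    _ = ‖ν‖ₑ * ((∫⁻ v, velocityWeight v * ‖maxwellian r u T v‖ₑ) +
          ∫⁻ v, velocityWeight v * ‖φ v‖ₑ) +
          ∫⁻ v, velocityWeight v * ‖wignerTheta ℏ V (fun w => (φ w : ℂ)) x v‖ₑ := by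
        rw [lintegral_add_left (by fun_prop), lintegral_const_mul _ (by fun_prop),
          lintegral_add_left (by fun_prop)]
    _ ≤ ‖ν‖ₑ * ((∫⁻ v, velocityWeight v * ‖φ v‖ₑ) + ∫⁻ v, velocityWeight v * ‖φ v‖ₑ) +
          C * ∫⁻ v, velocityWeight v * ‖φ v‖ₑ := by
        gcongr ‖ν‖ₑ * (?_ + _) + ?_
        exact h.lintegral_velocityWeight_mul_enorm_maxwellian_le
    _ = (2 * ‖ν‖₊ + C : ℝ≥0) * ∫⁻ v, velocityWeight v * ‖φ v‖ₑ := by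
        rw [enorm_eq_nnnorm]
        push_cast
        ring

theorem HasFluidMoments.integral_sq_mul_transport (hℏ : 0 < ℏ) {ν x r u T : ℝ} {V : 𝓢(ℝ, ℝ)}
    {φ g : ℝ → ℝ} (h : HasFluidMoments φ r u T)
    (hg : ∀ v, (g v : ℂ) + wignerTheta ℏ V (fun w => (φ w : ℂ)) x v =
      (ν * (maxwellian r u T v - φ v) : ℝ)) :
    ∫ v, v ^ 2 * g v = -2 * (r * u * deriv V x) := by
  have hφ : ∀ n : ℕ, Integrable fun w : ℝ => (w : ℂ) ^ n * φ w := fun n => by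
    have hreal : Integrable fun w => ((w ^ n * φ w : ℝ) : ℂ) := (h.integrable_pow_mul n).ofReal
    simpa only [Complex.ofReal_mul, Complex.ofReal_pow] using hreal
  have hM := integrable_sq_mul_maxwellian r u h.temperature_pos
  have hφ2 := h.integrable_pow_mul 2
  have hcollision : Integrable fun v =>
      ((ν * (v ^ 2 * maxwellian r u T v - v ^ 2 * φ v) : ℝ) : ℂ) :=
    ((hM.sub hφ2).const_mul ν).ofReal
  have hcons : ∫ v, ν * (v ^ 2 * maxwellian r u T v - v ^ 2 * φ v) = 0 := by
    rw [integral_const_mul, integral_sub hM hφ2, h.integral_sq_mul,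
      integral_sq_mul_maxwellian r u h.temperature_pos, sub_self, mul_zero]
  have hmomentum : ∫ w : ℝ, (w : ℂ) * φ w = (r * u : ℝ) := by
    rw [h.momentum, ← integral_complex_ofReal]
    simp only [Complex.ofReal_mul]
  have hsplit : ∀ v, ((v ^ 2 * g v : ℝ) : ℂ) =
      (ν * (v ^ 2 * maxwellian r u T v - v ^ 2 * φ v) : ℝ) -
        (v : ℂ) ^ 2 * wignerTheta ℏ V (fun w => (φ w : ℂ)) x v := fun v => by
    rw [Complex.ofReal_mul, eq_sub_of_add_eq (hg v)]
    push_cast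
    ring
  apply Complex.ofReal_injective
  simp only [← integral_complex_ofReal, hsplit]
  rw [integral_sub hcollision (integrable_sq_mul_wignerTheta hℏ.ne' V hφ x),
    integral_complex_ofReal, hcons, integral_sq_mul_wignerTheta hℏ V hφ x, hmomentum]
  push_cast
  ring

end FluidMoments

section SchwartzRegularity

lemma exists_lipschitzWith_schwartz {E F : Type*} [NormedAddCommGroup E] [NormedSpace ℝ E]
    [NormedAddCommGroup F] [NormedSpace ℝ F] (g : 𝓢(E, F)) : ∃ M : ℝ≥0, LipschitzWith M g := by
  let g' : 𝓢(E, E →L[ℝ] F) := SchwartzMap.fderivCLM ℝ E F g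
  exact ⟨(SchwartzMap.seminorm ℝ 0 0 g').toNNReal,
    lipschitzWith_of_nnnorm_fderiv_le (𝕜 := ℝ) g.differentiable fun x =>
      NNReal.le_toNNReal_of_coe_le (SchwartzMap.norm_le_seminorm ℝ g' x)⟩

lemma exists_abs_le_schwartz {E : Type*} [NormedAddCommGroup E] [NormedSpace ℝ E] (g : 𝓢(E, ℝ)) :
    ∃ M : ℝ≥0, ∀ x, |g x| ≤ M :=
  ⟨_, fun x => (SchwartzMap.norm_le_seminorm ℝ g x).trans (Real.le_coe_toNNReal _)⟩

lemma integrable_pow_mul_schwartz_slice (g : 𝓢(ℝ × ℝ, ℝ)) (x : ℝ) (n : ℕ) :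
    Integrable fun v => v ^ n * g (x, v) := by
  have hanti : AntilipschitzWith 1 fun v : ℝ => (x, v) := fun v w => by
    simp [Prod.edist_eq]
  have hgrowth : Function.HasTemperateGrowth fun v : ℝ => (x, v) := by
    simpa only [Pi.add_def, ContinuousLinearMap.inr_apply, Prod.mk_add_mk, add_zero, zero_add]
      using (Function.HasTemperateGrowth.const (E := ℝ) (x, (0 : ℝ))).add
        (ContinuousLinearMap.inr ℝ ℝ ℝ).hasTemperateGrowth
  let slice : 𝓢(ℝ, ℝ) := SchwartzMap.compCLMOfAntilipschitz ℝ hgrowth hanti g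
  have hslice : Continuous fun v => v ^ n * slice v := by
    have := slice.continuous
    fun_prop
  exact (slice.integrable_pow_mul volume n).mono' hslice.aestronglyMeasurable
    (Eventually.of_forall fun v => (norm_mul _ _).trans_le (by rw [norm_pow]; rfl))

lemma weightedNorm_schwartz_lt_top (g : 𝓢(ℝ × ℝ, ℝ)) : weightedNorm g < ⊤ := by
  have hdom := (g.integrable (μ := volume)).norm.add (g.integrable_pow_mul volume 2)
  refine lt_of_le_of_lt (lintegral_mono fun z => ?_) hdom.lintegral_lt_top
  rw [velocityWeight, ← ofReal_norm, ← ENNReal.ofReal_mul (by positivity)]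
  refine ENNReal.ofReal_le_ofReal ?_
  rw [add_mul, one_mul, Pi.add_apply, ← sq_abs]
  gcongr
  exact norm_snd_le z

lemma exists_deriv_eq_slope_add {g : ℝ → ℝ} (hg : Differentiable ℝ g) (x : ℝ) {a : ℝ}
    (ha : a ≠ 0) : ∃ ξ ∈ uIcc x (x + a), deriv g ξ = (g (x + a) - g x) / a := by
  rcases ha.lt_or_gt with h | h
  · obtain ⟨ξ, hξ, hslope⟩ := exists_deriv_eq_slope g (add_lt_of_neg_right x h)
      hg.continuous.continuousOn hg.differentiableOn
    refine ⟨ξ, uIcc_comm x (x + a) ▸ Icc_subset_uIcc (Ioo_subset_Icc_self hξ), hslope.trans ?_⟩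
    rw [← neg_div_neg_eq, neg_sub, neg_sub, add_sub_cancel_left]
  · obtain ⟨ξ, hξ, hslope⟩ := exists_deriv_eq_slope g (lt_add_of_pos_right x h)
      hg.continuous.continuousOn hg.differentiableOn
    exact ⟨ξ, Icc_subset_uIcc (Ioo_subset_Icc_self hξ), by rw [hslope, add_sub_cancel_left]⟩

lemma lipschitzSlopes_of_lipschitzWith_deriv {g : ℝ → ℝ} {M : ℝ≥0} (hg : Differentiable ℝ g)
    (hg' : LipschitzWith M (deriv g)) : LipschitzSlopes M g := by
  intro x a b ha hb
  obtain ⟨ξ, hξ, hξa⟩ := exists_deriv_eq_slope_add hg x ha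
  obtain ⟨η, hη, hηb⟩ := exists_deriv_eq_slope_add hg x hb
  have hξx := abs_sub_left_of_mem_uIcc hξ
  have hηx := abs_sub_left_of_mem_uIcc hη
  rw [add_sub_cancel_left] at hξx hηx
  rw [← hξa, ← hηb, ← Real.dist_eq]
  refine (hg'.dist_le_mul ξ η).trans (mul_le_mul_of_nonneg_left ?_ M.coe_nonneg)
  rw [Real.dist_eq, ← sub_sub_sub_cancel_right ξ η x]
  exact (abs_sub _ _).trans (add_le_add hξx hηx)

lemma hasDerivAt_schwartz_slice (g : 𝓢(ℝ × ℝ, ℝ)) (x v : ℝ) :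
    HasDerivAt (fun y => g (y, v)) (fderiv ℝ g (x, v) (1, 0)) x :=
  g.differentiableAt.hasFDerivAt.comp_hasDerivAt x
    ((hasDerivAt_id x).prodMk (hasDerivAt_const x v))

lemma exists_lipschitzSlopes_schwartz (g : 𝓢(ℝ × ℝ, ℝ)) :
    ∃ n : ℕ, ∀ v, LipschitzSlopes n fun x => g (x, v) := by
  obtain ⟨M, hM⟩ := exists_lipschitzWith_schwartz (LineDeriv.lineDerivOp ((1 : ℝ), (0 : ℝ)) g)
  obtain ⟨n, hn⟩ := exists_nat_ge (M : ℝ)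
  refine ⟨n, fun v => LipschitzSlopes.mono (lipschitzSlopes_of_lipschitzWith_deriv
    (fun x => (hasDerivAt_schwartz_slice g x v).differentiableAt) ?_) hn⟩
  rw [funext fun x => (hasDerivAt_schwartz_slice g x v).deriv]
  exact mul_one M ▸ hM.comp (LipschitzWith.prodMk_right v)

end SchwartzRegularity

section EnergyBalance

lemma abs_sq_le_one_mul (v : ℝ) : |v ^ 2| ≤ (1 : ℝ≥0) * (1 + v ^ 2) := by
  rw [NNReal.coe_one, one_mul, abs_of_nonneg (sq_nonneg _)]
  exact le_add_of_nonneg_left zero_le_one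

/-- `f` is a curve of Schwartz densities solving the Wigner–BGK equation with relaxation rate `ν`,
and `ρ`, `u`, `T` are its density, mean velocity and temperature. The time regularity is pointwise
in phase space. -/
structure IsWignerBGKFlow (ℏ ν : ℝ) (V : 𝓢(ℝ, ℝ)) (f : ℝ → ℝ × ℝ → ℝ) (ρ u T : ℝ → ℝ → ℝ) :
    Prop where
  exists_schwartz : ∀ t, ∃ g : 𝓢(ℝ × ℝ, ℝ), f t = g
  differentiable_time : ∀ z, Differentiable ℝ fun t => f t z
  hasFluidMoments : ∀ t x, HasFluidMoments (fun v => f t (x, v)) (ρ t x) (u t x) (T t x)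
  equation : ∀ t x v, (materialDeriv f t (x, v) : ℂ) +
    wignerTheta ℏ V (fun w => (f t (x, w) : ℂ)) x v =
      (ν * (maxwellian (ρ t x) (u t x) (T t x) v - f t (x, v)) : ℝ)

namespace IsWignerBGKFlow

variable {ℏ ν : ℝ} {V : 𝓢(ℝ, ℝ)} {f : ℝ → ℝ × ℝ → ℝ} {ρ u T : ℝ → ℝ → ℝ}

lemma continuous (h : IsWignerBGKFlow ℏ ν V f ρ u T) (t : ℝ) : Continuous (f t) := by
  obtain ⟨g, hg⟩ := h.exists_schwartz t
  exact hg ▸ g.continuous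

lemma exists_controlledTransport (h : IsWignerBGKFlow ℏ ν V f ρ u T) (hℏ : ℏ ≠ 0) :
    ∃ C : ℝ≥0, ControlledTransport f C := by
  obtain ⟨C, hC⟩ := exists_lintegral_velocityWeight_mul_enorm_transport_le hℏ ν V
  refine ⟨C, h.continuous, h.differentiable_time, fun t v x => ?_, fun t => ?_, fun t => ?_,
    fun t => ?_⟩
  · obtain ⟨g, hg⟩ := h.exists_schwartz t
    exact hg ▸ (hasDerivAt_schwartz_slice g x v).differentiableAt
  · obtain ⟨g, hg⟩ := h.exists_schwartz t
    exact hg ▸ exists_lipschitzSlopes_schwartz g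
  · obtain ⟨g, hg⟩ := h.exists_schwartz t
    exact hg ▸ weightedNorm_schwartz_lt_top g
  · have hslice : ∀ x, Measurable fun v => f t (x, v) := fun x =>
      (h.continuous t).measurable.comp measurable_prodMk_left
    calc weightedNorm (materialDeriv f t)
        ≤ ∫⁻ x, ∫⁻ v, velocityWeight v * ‖materialDeriv f t (x, v)‖ₑ := lintegral_prod_le _
      _ ≤ ∫⁻ x, C * ∫⁻ v, velocityWeight v * ‖f t (x, v)‖ₑ :=
          lintegral_mono fun x => hC (hslice x) (h.hasFluidMoments t x) (h.equation t x)
      _ = C * weightedNorm (f t) := by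
          rw [lintegral_const_mul' _ _ ENNReal.coe_ne_top, weightedNorm, Measure.volume_eq_prod,
            lintegral_prod _ (measurable_weight_mul_enorm (h.continuous t).measurable).aemeasurable]

lemma integral_power (h : IsWignerBGKFlow ℏ ν V f ρ u T) (t : ℝ)
    (hint : Integrable fun z : ℝ × ℝ => z.2 * deriv V z.1 * f t z) :
    ∫ z : ℝ × ℝ, z.2 * deriv V z.1 * f t z = ∫ x, ρ t x * u t x * deriv V x := by
  refine (integral_prod _ hint).trans (integral_congr_ae (Eventually.of_forall fun x => ?_))
  simp only [(h.hasFluidMoments t x).momentum, ← integral_mul_const]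
  congr 1 with v
  ring

lemma integral_sq_mul_materialDeriv (h : IsWignerBGKFlow ℏ ν V f ρ u T) (hℏ : 0 < ℏ) (t : ℝ)
    (hint : Integrable fun z : ℝ × ℝ => z.2 ^ 2 * materialDeriv f t z) :
    ∫ z : ℝ × ℝ, z.2 ^ 2 * materialDeriv f t z = -2 * ∫ x, ρ t x * u t x * deriv V x := by
  rw [← integral_const_mul]
  refine (integral_prod _ hint).trans (integral_congr_ae (Eventually.of_forall fun x => ?_))
  exact (h.hasFluidMoments t x).integral_sq_mul_transport hℏ (h.equation t x)

theorem hasDerivAt_energy (h : IsWignerBGKFlow ℏ ν V f ρ u T) (hℏ : 0 < ℏ) (t : ℝ) :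
    HasDerivAt (fun s => ∫ x, ∫ v, v ^ 2 * f s (x, v))
      (-2 * ∫ x, ρ t x * u t x * deriv V x) t := by
  obtain ⟨C, H⟩ := h.exists_controlledTransport hℏ.ne'
  obtain ⟨B, hB⟩ := exists_abs_le_schwartz (SchwartzMap.derivCLM ℝ ℝ V)
  have hV' : Continuous (deriv V) := (SchwartzMap.derivCLM ℝ ℝ V).continuous
  have hpower_le : ∀ z : ℝ × ℝ, |z.2 * deriv V z.1| ≤ B * (1 + z.2 ^ 2) := fun z => by
    rw [abs_mul, mul_comm]
    gcongr
    · exact hB z.1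
    · nlinarith [sq_nonneg (|z.2| - 1), sq_abs z.2, abs_nonneg z.2]
  have hpower : ∀ s, Integrable fun z : ℝ × ℝ => z.2 * deriv V z.1 * f s z := fun s =>
    integrable_mul_of_weightedNorm_lt_top hpower_le (by fun_prop) (H.continuous s).measurable
      (H.weightedNorm_lt_top s)
  have henergy : ∀ s, ∫ x, ∫ v, v ^ 2 * f s (x, v) = ∫ z : ℝ × ℝ, z.2 ^ 2 * f s z := fun s =>
    (integral_prod _ (integrable_mul_of_weightedNorm_lt_top (fun z => abs_sq_le_one_mul z.2)
      (by fun_prop) (H.continuous s).measurable (H.weightedNorm_lt_top s))).symm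
  have hsource : ∀ s, ∫ z : ℝ × ℝ, z.2 ^ 2 * materialDeriv f s z =
      -2 * ∫ x, ρ s x * u s x * deriv V x := fun s =>
    h.integral_sq_mul_materialDeriv hℏ s <| integrable_mul_of_weightedNorm_lt_top
      (fun z => abs_sq_le_one_mul z.2) (by fun_prop)
      (H.measurable_materialDeriv.comp measurable_prodMk_left)
      ((H.weightedNorm_materialDeriv_le s).trans_lt
        (ENNReal.mul_lt_top ENNReal.coe_lt_top (H.weightedNorm_lt_top s)))
  have hcont : Continuous fun s => ∫ z : ℝ × ℝ, z.2 ^ 2 * materialDeriv f s z := by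
    simp only [hsource, ← h.integral_power _ (hpower _)]
    exact (H.continuous_integral_mul (by fun_prop) hpower_le).const_mul (-2)
  simp only [henergy, ← hsource]
  exact H.hasDerivAt_integral_mul (by fun_prop) abs_sq_le_one_mul hcont t

end IsWignerBGKFlow

end EnergyBalance

end WignerBGK

theorem wignerBGK_energy_balance_general (ℏ ν : ℝ) (hℏ : 0 < ℏ)
    (V : SchwartzMap ℝ ℝ)
    (f ft : ℝ → ℝ → ℝ → ℝ)
    (hfS : ∀ t : ℝ, ∃ g : SchwartzMap (ℝ × ℝ) ℝ, ∀ x v : ℝ, f t x v = g (x, v))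
    (hft : ∀ t x v : ℝ, HasDerivAt (fun s => f s x v) (ft t x v) t)
    (ρ u T : ℝ → ℝ → ℝ)
    (hρ : ∀ t x : ℝ, ρ t x = ∫ v : ℝ, f t x v)
    (hu : ∀ t x : ℝ, ρ t x * u t x = ∫ v : ℝ, v * f t x v)
    (hT : ∀ t x : ℝ, ρ t x * T t x = ∫ v : ℝ, (v - u t x) ^ 2 * f t x v)
    (hTpos : ∀ t x : ℝ, 0 < T t x)
    (hPDE : ∀ t x v : ℝ,
      (ft t x v : ℂ) + (v : ℂ) * ((deriv (fun y => f t y v) x : ℝ) : ℂ) +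
          wignerTheta ℏ V (fun w => (f t x w : ℂ)) x v =
        (ν * (WignerBGK.maxwellian (ρ t x) (u t x) (T t x) v - f t x v) : ℝ)) (t : ℝ) :
    HasDerivAt (fun s => ∫ x : ℝ, ∫ v : ℝ, v ^ 2 * f s x v)
      (-2 * ∫ x : ℝ, ρ t x * u t x * deriv V x) t := by
  have hflow : WignerBGK.IsWignerBGKFlow ℏ ν V (fun t z => f t z.1 z.2) ρ u T :=
    { exists_schwartz := fun t => (hfS t).imp fun g hg => funext fun z => hg z.1 z.2
      differentiable_time := fun z t => (hft t z.1 z.2).differentiableAt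
      hasFluidMoments := fun t x =>
        { integrable_pow_mul := fun n => by
            obtain ⟨g, hg⟩ := hfS t
            simpa only [hg] using WignerBGK.integrable_pow_mul_schwartz_slice g x n
          density := hρ t x
          momentum := hu t x
          thermal_energy := hT t x
          temperature_pos := hTpos t x }
      equation := fun t x v => by
        rw [← hPDE t x v, WignerBGK.materialDeriv, (hft t x v).deriv]
        push_cast
        rfl }
  exact hflow.hasDerivAt_energy hℏ t

/-- Energy balance for the 1D Wigner–BGK equation: along a continuously differentiable
curve `t ↦ f(t)` of Schwartz functions of `(x,v)` solving
`∂f/∂t + v ∂f/∂x + Θ[V]f = (f_eq - f)/τ`, one has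
`d/dt ∫∫ v² f dx dv = -2 ∫ ρ u V' dx`. -/
theorem wignerBGK_energy_balance (ℏ τ : ℝ) (hℏ : 0 < ℏ) (hτ : 0 < τ)
    (V : SchwartzMap ℝ ℝ)
    (f ft : ℝ → ℝ → ℝ → ℝ)
    (hfS : ∀ t : ℝ, ∃ g : SchwartzMap (ℝ × ℝ) ℝ, ∀ x v : ℝ, f t x v = g (x, v))
    (hftS : ∀ t : ℝ, ∃ g : SchwartzMap (ℝ × ℝ) ℝ, ∀ x v : ℝ, ft t x v = g (x, v))
    (hft : ∀ t x v : ℝ, HasDerivAt (fun s => f s x v) (ft t x v) t)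
    (hftc : ∀ x v : ℝ, Continuous fun t => ft t x v)
    (ρ u T : ℝ → ℝ → ℝ)
    (hρ : ∀ t x : ℝ, ρ t x = ∫ v : ℝ, f t x v)
    (hρpos : ∀ t x : ℝ, 0 < ρ t x)
    (hu : ∀ t x : ℝ, ρ t x * u t x = ∫ v : ℝ, v * f t x v)
    (hT : ∀ t x : ℝ, ρ t x * T t x = ∫ v : ℝ, (v - u t x) ^ 2 * f t x v)
    (hTpos : ∀ t x : ℝ, 0 < T t x)
    (feq : ℝ → ℝ → ℝ → ℝ)
    (hfeq : ∀ t x v : ℝ, feq t x v =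
      ρ t x * (Real.sqrt (2 * Real.pi * T t x))⁻¹ *
        Real.exp (-(v - u t x) ^ 2 / (2 * T t x)))
    (hPDE : ∀ t x v : ℝ,
      ((ft t x v : ℝ) : ℂ) + (v : ℂ) * ((deriv (fun y => f t y v) x : ℝ) : ℂ) +
          wignerTheta ℏ (⇑V) (fun w => ((f t x w : ℝ) : ℂ)) x v =
        (((feq t x v - f t x v) / τ : ℝ) : ℂ)) :
    ∀ t : ℝ, HasDerivAt (fun s => ∫ x : ℝ, ∫ v : ℝ, v ^ 2 * f s x v)
      (-2 * ∫ x : ℝ, ρ t x * u t x * deriv (⇑V) x) t := by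
  exact wignerBGK_energy_balance_general ℏ τ⁻¹ hℏ V f ft hfS hft ρ u T hρ hu hT hTpos
    fun t x v => by rw [hPDE, hfeq, div_eq_inv_mul, WignerBGK.maxwellian]
end

section
/- Equivalence of the integral and differential forms of the Wigner potential operator for polynomial potentials: let ħ > 0, x ∈ ℝ, let V : ℝ → ℝ be a polynomial of degree D, and let f : ℝ → ℂ be a Schwartz function. Then for every v ∈ ℝ the iterated integral defining (Θ[V]f)(x,v) converges and (Θ[V]f)(x,v) = - Σ_{λ odd, 1 ≤ λ ≤ D} ( (ħ/(2i))^{λ-1} / λ! ) V^{(λ)}(x) f^{(λ)}(v), where f^{(λ)} is the λ-th derivative of f and the sum runs over odd integers λ. -/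
open MeasureTheory Complex Polynomial Finset

/-!
Taylor's formula at `x` turns `V (x + y / 2) - V (x - y / 2)` into the sum of twice its odd terms,
a polynomial in `y`. The exponentials in `Θ[V]` form a Fourier transform followed by its inverse,
both at scale `ℏ`, and on the Fourier side multiplication by `y` is the derivation `(ℏ / i) d/dv`.
Fourier inversion therefore replaces each `y ^ l` by `(ℏ / i) ^ l` times the `l`-th derivative
of `f` at `v`.
-/

open scoped Real FourierTransform

section Taylor

variable {R : Type*} [CommRing R]

lemma eval_add_eq_sum_hasseDeriv (V : R[X]) (x h : R) :
    V.eval (x + h) = ∑ l ∈ range (V.natDegree + 1), (hasseDeriv l V).eval x * h ^ l := by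
  rw [add_comm, ← taylor_eval, eval_eq_sum_range, natDegree_taylor]
  simp only [taylor_coeff]

lemma eval_add_sub_eval_sub_eq_sum_odd (V : R[X]) (x h : R) :
    V.eval (x + h) - V.eval (x - h) =
      ∑ l ∈ range (V.natDegree + 1) with Odd l, 2 * (hasseDeriv l V).eval x * h ^ l := by
  rw [sub_eq_add_neg x, eval_add_eq_sum_hasseDeriv, eval_add_eq_sum_hasseDeriv,
    ← sum_sub_distrib, sum_filter]
  refine sum_congr rfl fun l _ => ?_
  split_ifs with hl
  · rw [hl.neg_pow]; ring
  · rw [(Nat.not_odd_iff_even.mp hl).neg_pow, sub_self]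

lemma eval_iterate_derivative_eq_factorial_mul (V : R[X]) (l : ℕ) (x : R) :
    (derivative^[l] V).eval x = (l.factorial : R) * (hasseDeriv l V).eval x := by
  rw [← factorial_smul_hasseDeriv, LinearMap.smul_apply, eval_smul, nsmul_eq_mul]

end Taylor

section Schwartz

variable {F : Type*} [NormedAddCommGroup F]

lemma coe_iterate_derivCLM [NormedSpace ℝ F] (f : SchwartzMap ℝ F) (l : ℕ) :
    ⇑((SchwartzMap.derivCLM ℝ F)^[l] f) = iteratedDeriv l f := by
  induction l with
  | zero => exact iteratedDeriv_zero.symm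
  | succ l ih =>
    rw [Function.iterate_succ_apply', iteratedDeriv_succ, ← ih]
    rfl

lemma integrable_iteratedDeriv_schwartz [NormedSpace ℝ F] (f : SchwartzMap ℝ F) (l : ℕ) :
    Integrable (iteratedDeriv l f) :=
  coe_iterate_derivCLM f l ▸ SchwartzMap.integrable _

lemma integrable_fourier_iteratedDeriv_schwartz [NormedSpace ℂ F] (f : SchwartzMap ℝ F) (l : ℕ) :
    Integrable (𝓕 (iteratedDeriv l f)) := by
  rw [← coe_iterate_derivCLM, ← SchwartzMap.fourier_coe]
  exact SchwartzMap.integrable _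

end Schwartz

/-- The Fourier transform at scale `ℏ`, with the unnormalized kernel `e^{-iyw/ℏ}` that occurs in
`wignerTheta`; its inverse therefore carries the factor `1 / (2πℏ)`. -/
noncomputable def semiclassicalFourier (ℏ : ℝ) (f : ℝ → ℂ) (y : ℝ) : ℂ :=
  ∫ w : ℝ, f w * exp (-I * y * w / ℏ)

lemma semiclassicalFourier_eq_fourier (ℏ : ℝ) (f : ℝ → ℂ) (y : ℝ) :
    semiclassicalFourier ℏ f y = 𝓕 f (y / (2 * π * ℏ)) := by
  rw [semiclassicalFourier, Real.fourier_real_eq_integral_exp_smul]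
  refine integral_congr_ae (.of_forall fun w => ?_)
  have hπ : (π : ℂ) ≠ 0 := ofReal_ne_zero.mpr Real.pi_ne_zero
  simp only [smul_eq_mul, mul_comm (f w)]
  congr 2
  push_cast
  field_simp

section SemiclassicalFourier

variable {ℏ : ℝ} {f : ℝ → ℂ} {n l : ℕ}

lemma semiclassicalFourier_iteratedDeriv (hf : ContDiff ℝ n f)
    (hf_int : ∀ k ≤ n, Integrable (iteratedDeriv k f)) (hl : l ≤ n) (y : ℝ) :
    semiclassicalFourier ℏ (iteratedDeriv l f) y =
      (I * y / ℏ) ^ l * semiclassicalFourier ℏ f y := by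
  have hπ : (π : ℂ) ≠ 0 := ofReal_ne_zero.mpr Real.pi_ne_zero
  simp only [semiclassicalFourier_eq_fourier]
  rw [Real.fourier_iteratedDeriv (N := n) hf (fun k hk => hf_int k (by exact_mod_cast hk))
    (by exact_mod_cast hl)]
  simp only [smul_eq_mul]
  congr 2
  push_cast
  field_simp

lemma integrable_exp_mul_semiclassicalFourier (hℏ : ℏ ≠ 0) (hf : Integrable (𝓕 f)) (v : ℝ) :
    Integrable fun y : ℝ => exp (I * y * v / ℏ) * semiclassicalFourier ℏ f y := by
  simp only [semiclassicalFourier_eq_fourier]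
  refine (hf.comp_div (by positivity)).bdd_mul (c := 1) (by fun_prop) (.of_forall fun y => ?_)
  rw [show I * y * v / ℏ = ((y * v / ℏ : ℝ) : ℂ) * I by push_cast; ring, norm_exp_ofReal_mul_I]

lemma integral_exp_mul_semiclassicalFourier (hf : Integrable f) (hf_fourier : Integrable (𝓕 f))
    {v : ℝ} (hv : ContinuousAt f v) :
    ∫ y : ℝ, exp (I * y * v / ℏ) * semiclassicalFourier ℏ f y = 2 * π * |ℏ| * f v := by
  have hπ : (π : ℂ) ≠ 0 := ofReal_ne_zero.mpr Real.pi_ne_zero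
  calc ∫ y : ℝ, exp (I * y * v / ℏ) * semiclassicalFourier ℏ f y
      = ∫ y : ℝ, (fun ξ : ℝ => exp (↑(2 * π * (v * ξ)) * I) • 𝓕 f ξ) (y / (2 * π * ℏ)) := by
        refine integral_congr_ae (.of_forall fun y => ?_)
        simp only [semiclassicalFourier_eq_fourier, smul_eq_mul]
        congr 2
        push_cast
        field_simp
    _ = |2 * π * ℏ| • 𝓕⁻ (𝓕 f) v := by
        rw [Measure.integral_comp_div
          (fun ξ : ℝ => exp (↑(2 * π * (v * ξ)) * I) • 𝓕 f ξ), Real.fourierInv_eq']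
        simp only [RCLike.inner_apply, conj_trivial]
    _ = 2 * π * |ℏ| * f v := by
        rw [hf.fourierInv_fourier_eq hf_fourier hv, abs_mul, abs_of_pos Real.two_pi_pos, real_smul,
          ofReal_mul, ofReal_mul, ofReal_ofNat]

lemma pow_mul_exp_mul_semiclassicalFourier (hℏ : ℏ ≠ 0) (hf : ContDiff ℝ n f)
    (hf_int : ∀ k ≤ n, Integrable (iteratedDeriv k f)) (hl : l ≤ n) (v y : ℝ) :
    (y : ℂ) ^ l * (exp (I * y * v / ℏ) * semiclassicalFourier ℏ f y) =
      (ℏ / I) ^ l * (exp (I * y * v / ℏ) * semiclassicalFourier ℏ (iteratedDeriv l f) y) := by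
  have hℏ' : (ℏ : ℂ) ≠ 0 := ofReal_ne_zero.mpr hℏ
  have hy : (y : ℂ) = ℏ / I * (I * y / ℏ) := by field_simp
  rw [semiclassicalFourier_iteratedDeriv hf hf_int hl]
  nth_rw 1 [hy]
  rw [mul_pow]
  ring

lemma integrable_pow_mul_exp_mul_semiclassicalFourier (hℏ : ℏ ≠ 0) (hf : ContDiff ℝ n f)
    (hf_int : ∀ k ≤ n, Integrable (iteratedDeriv k f)) (hl : l ≤ n)
    (hf_fourier : Integrable (𝓕 (iteratedDeriv l f))) (v : ℝ) :
    Integrable fun y : ℝ =>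
      (y : ℂ) ^ l * (exp (I * y * v / ℏ) * semiclassicalFourier ℏ f y) := by
  simp only [pow_mul_exp_mul_semiclassicalFourier hℏ hf hf_int hl]
  exact (integrable_exp_mul_semiclassicalFourier hℏ hf_fourier v).const_mul _

lemma integral_pow_mul_exp_mul_semiclassicalFourier (hℏ : ℏ ≠ 0) (hf : ContDiff ℝ n f)
    (hf_int : ∀ k ≤ n, Integrable (iteratedDeriv k f)) (hl : l ≤ n)
    (hf_fourier : Integrable (𝓕 (iteratedDeriv l f))) (v : ℝ) :
    ∫ y : ℝ, (y : ℂ) ^ l * (exp (I * y * v / ℏ) * semiclassicalFourier ℏ f y) =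
      2 * π * |ℏ| * ((ℏ / I) ^ l * iteratedDeriv l f v) := by
  have hcont : Continuous (iteratedDeriv l f) :=
    hf.continuous_iteratedDeriv l (by exact_mod_cast hl)
  simp only [pow_mul_exp_mul_semiclassicalFourier hℏ hf hf_int hl]
  rw [integral_const_mul, integral_exp_mul_semiclassicalFourier (hf_int l hl) hf_fourier
    hcont.continuousAt]
  ring

end SemiclassicalFourier

lemma wignerTheta_eq_integral_semiclassicalFourier (ℏ : ℝ) (V : ℝ → ℝ) (f : ℝ → ℂ) (x v : ℝ) :
    wignerTheta ℏ V f x v = -I / (2 * π * ℏ ^ 2) *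
      ∫ y : ℝ, ((V (x + y / 2) - V (x - y / 2) : ℝ) : ℂ) * exp (I * y * v / ℏ) *
        semiclassicalFourier ℏ f y :=
  rfl

lemma wignerTheta_integrand_eq_sum (ℏ : ℝ) (V : ℝ[X]) (f : ℝ → ℂ) (x v y : ℝ) :
    ((V.eval (x + y / 2) - V.eval (x - y / 2) : ℝ) : ℂ) * exp (I * y * v / ℏ) *
        semiclassicalFourier ℏ f y =
      ∑ l ∈ range (V.natDegree + 1) with Odd l, ((2 * (hasseDeriv l V).eval x / 2 ^ l : ℝ) : ℂ) *
        ((y : ℂ) ^ l * (exp (I * y * v / ℏ) * semiclassicalFourier ℏ f y)) := by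
  rw [eval_add_sub_eval_sub_eq_sum_odd, mul_assoc, ofReal_sum, sum_mul]
  refine sum_congr rfl fun l _ => ?_
  push_cast
  rw [div_pow]
  ring

lemma wignerTheta_term_eq {ℏ : ℝ} (hℏ : ℏ ≠ 0) (V : ℝ[X]) (x : ℝ) {l : ℕ} (hl : l ≠ 0)
    (z : ℂ) :
    -I / (2 * π * ℏ ^ 2) * (((2 * (hasseDeriv l V).eval x / 2 ^ l : ℝ) : ℂ) *
        (2 * π * ℏ * ((ℏ / I) ^ l * z))) =
      -((ℏ / (2 * I)) ^ (l - 1) / (l.factorial : ℂ) *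
        (((derivative^[l] V).eval x : ℝ) : ℂ) * z) := by
  have hℏ' : (ℏ : ℂ) ≠ 0 := ofReal_ne_zero.mpr hℏ
  have hπ : (π : ℂ) ≠ 0 := ofReal_ne_zero.mpr Real.pi_ne_zero
  have hfac : (l.factorial : ℂ) ≠ 0 := Nat.cast_ne_zero.mpr l.factorial_ne_zero
  obtain ⟨k, rfl⟩ := Nat.exists_eq_succ_of_ne_zero hl
  rw [eval_iterate_derivative_eq_factorial_mul, Nat.succ_eq_add_one, Nat.add_sub_cancel]
  push_cast
  simp only [div_pow, mul_pow, pow_succ]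
  field_simp

theorem wignerTheta_eq_differential_form_general {ℏ : ℝ} (hℏ : 0 < ℏ) (x : ℝ) (V : ℝ[X])
    {f : ℝ → ℂ} (hf : ContDiff ℝ V.natDegree f)
    (hf_int : ∀ l ≤ V.natDegree, Integrable (iteratedDeriv l f))
    (hf_fourier : ∀ l ≤ V.natDegree, Integrable (𝓕 (iteratedDeriv l f))) (v : ℝ) :
    Integrable (fun y : ℝ => ((V.eval (x + y / 2) - V.eval (x - y / 2) : ℝ) : ℂ) *
      exp (I * y * v / ℏ) * semiclassicalFourier ℏ f y) ∧
    wignerTheta ℏ (fun y => V.eval y) f x v =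
      -∑ l ∈ range (V.natDegree + 1),
        if Odd l then
          ((ℏ : ℂ) / (2 * I)) ^ (l - 1) / (l.factorial : ℂ) *
            (((derivative^[l] V).eval x : ℝ) : ℂ) * iteratedDeriv l f v
        else 0 := by
  have hle {l : ℕ} (hl : l ∈ {l ∈ range (V.natDegree + 1) | Odd l}) : l ≤ V.natDegree :=
    Nat.lt_succ_iff.mp (mem_range.mp (mem_filter.mp hl).1)
  have hterm (l : ℕ) (hl : l ∈ {l ∈ range (V.natDegree + 1) | Odd l}) :=
    (integrable_pow_mul_exp_mul_semiclassicalFourier hℏ.ne' hf hf_int (hle hl)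
      (hf_fourier l (hle hl)) v).const_mul ((2 * (hasseDeriv l V).eval x / 2 ^ l : ℝ) : ℂ)
  simp only [wignerTheta_eq_integral_semiclassicalFourier, wignerTheta_integrand_eq_sum]
  refine ⟨integrable_finsetSum _ hterm, ?_⟩
  rw [integral_finsetSum _ hterm, mul_sum, ← sum_filter, ← sum_neg_distrib]
  refine sum_congr rfl fun l hl => ?_
  rw [integral_const_mul, integral_pow_mul_exp_mul_semiclassicalFourier hℏ.ne' hf hf_int (hle hl)
    (hf_fourier l (hle hl)), abs_of_pos hℏ,
    wignerTheta_term_eq hℏ.ne' V x (mem_filter.mp hl).2.pos.ne']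

/-- For a polynomial potential `V` of degree `D` and a Schwartz function `f`, the iterated
integral defining `(Θ[V]f)(x,v)` converges and
`(Θ[V]f)(x,v) = - Σ_{λ odd, 1 ≤ λ ≤ D} ((ℏ/(2i))^{λ-1}/λ!) V^{(λ)}(x) f^{(λ)}(v)`. -/
theorem wignerTheta_eq_differential_form (ℏ : ℝ) (hℏ : 0 < ℏ) (x : ℝ)
    (V : Polynomial ℝ) (D : ℕ) (hD : V.natDegree = D) (f : SchwartzMap ℝ ℂ) (v : ℝ) :
    Integrable (fun y : ℝ =>
      ((V.eval (x + y / 2) - V.eval (x - y / 2) : ℝ) : ℂ) *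
        Complex.exp (Complex.I * y * v / ℏ) *
        ∫ w : ℝ, f w * Complex.exp (-Complex.I * y * w / ℏ)) ∧
    wignerTheta ℏ (fun y => V.eval y) (⇑f) x v =
      -∑ l ∈ Finset.range (D + 1),
        if Odd l then
          (((ℏ : ℂ) / (2 * Complex.I)) ^ (l - 1) / (l.factorial : ℂ)) *
            (((Polynomial.derivative^[l] V).eval x : ℝ) : ℂ) * iteratedDeriv l (⇑f) v
        else 0 := by
  subst hD
  exact wignerTheta_eq_differential_form_general hℏ x V (f.smooth _)
    (fun l _ => integrable_iteratedDeriv_schwartz f l)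
    (fun l _ => integrable_fourier_iteratedDeriv_schwartz f l) v
end

section
/- Hermite-expansion representation of the nonlocal Wigner potential term: let ħ > 0, T > 0, u ∈ ℝ, x ∈ ℝ, N ∈ ℕ, let V : ℝ → ℝ be a polynomial of degree D, and let f(v) = Σ_{n=0}^{N} f_n H_{T,n}((v-u)/√T) with real coefficients f_n. Then for all v ∈ ℝ, - Σ_{λ odd, 1 ≤ λ ≤ D} ( (ħ/(2i))^{λ-1} / λ! ) V^{(λ)}(x) f^{(λ)}(v) = Σ_{n=0}^{N+D} g_n H_{T,n}((v-u)/√T), where g_n = Σ_{λ odd, 1 ≤ λ ≤ min(n,D)} ( (ħ/(2i))^{λ-1} / λ! ) V^{(λ)}(x) f_{n-λ} (with f_m := 0 for m > N). -/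
open MeasureTheory Polynomial Finset

/-- The scaled Hermite basis function `H_{T,n}(ξ) = (2π)^{-1/2} T^{-(n+1)/2} He_n(ξ) e^{-ξ²/2}`,
where `He_n` is the probabilists' Hermite polynomial. -/
noncomputable def hermiteBasis (T : ℝ) (n : ℕ) (ξ : ℝ) : ℝ :=
  (Real.sqrt (2 * Real.pi))⁻¹ * T ^ (-(((n : ℝ) + 1) / 2)) *
    (Polynomial.aeval ξ) (Polynomial.hermite n) * Real.exp (-ξ ^ 2 / 2)

/-!
Since `He_{n+1} = X He_n - He_n'`, differentiating `He_n(ξ) e^{-ξ²/2}` gives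
`-He_{n+1}(ξ) e^{-ξ²/2}`, and the powers of `T` in `H_{T,n}` are chosen so that
`φ_n(v) = H_{T,n}((v-u)/√T)` satisfies `φ_n' = -φ_{n+1}` without further constants. Hence the
`l`-th derivative shifts the index by `l` and multiplies by `(-1)^l`, so a constant-coefficient
differential operator acts on expansions in `φ_n` by convolution of coefficients. In the Wigner
potential term only odd `l` occur, and `(-1)^l = -1` cancels the sign in front of the sum.
-/

lemma sum_range_sum_range_eq_sum_range_add {M : Type*} [AddCommMonoid M] (N D : ℕ)
    (F : ℕ → ℕ → M) :
    ∑ l ∈ range (D + 1), ∑ n ∈ range (N + 1), F l n =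
      ∑ m ∈ range (N + D + 1), ∑ l ∈ range (min m D + 1),
        if m - l ≤ N then F l (m - l) else 0 := by
  calc ∑ l ∈ range (D + 1), ∑ n ∈ range (N + 1), F l n
      = ∑ l ∈ range (D + 1), ∑ m ∈ Ico l (l + (N + 1)), F l (m - l) := by
        simp only [sum_Ico_eq_sum_range, Nat.add_sub_cancel_left]
    _ = ∑ m ∈ range (N + D + 1), ∑ l ∈ range (min m D + 1) with m - l ≤ N, F l (m - l) :=
        sum_comm' fun l m => by simp only [mem_range, mem_Ico, mem_filter]; omega
    _ = _ := by simp only [sum_filter]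

section DerivativeLadder

variable {𝕜 F : Type*} [NontriviallyNormedField 𝕜] [NormedAddCommGroup F] [NormedSpace 𝕜 F]
  {φ : ℕ → 𝕜 → F}

lemma iteratedDeriv_of_hasDerivAt_neg_succ (hφ : ∀ n x, HasDerivAt (φ n) (-φ (n + 1) x) x)
    (l n : ℕ) (x : 𝕜) : iteratedDeriv l (φ n) x = (-1 : 𝕜) ^ l • φ (n + l) x := by
  induction l generalizing x with
  | zero => simp only [iteratedDeriv_zero, pow_zero, one_smul, add_zero]
  | succ l ih =>
    rw [iteratedDeriv_succ, funext ih, ((hφ (n + l) x).fun_const_smul _).deriv, smul_neg,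
      ← neg_smul, pow_succ, mul_neg_one, add_assoc]

lemma iteratedDeriv_sum_smul_of_hasDerivAt_neg_succ
    (hφ : ∀ n x, HasDerivAt (φ n) (-φ (n + 1) x) x) (s : Finset ℕ) (c : ℕ → 𝕜) (l : ℕ) (x : 𝕜) :
    iteratedDeriv l (fun y => ∑ n ∈ s, c n • φ n y) x =
      (-1 : 𝕜) ^ l • ∑ n ∈ s, c n • φ (n + l) x := by
  -- The sums `∑ c n • φ (n + k)`, indexed by `k`, form a sequence of the same kind as `φ`.
  have hsum : ∀ k y, HasDerivAt (fun z => ∑ n ∈ s, c n • φ (n + k) z)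
      (-∑ n ∈ s, c n • φ (n + (k + 1)) y) y := fun k y => by
    simpa only [← sum_neg_distrib, ← smul_neg, ← add_assoc] using
      HasDerivAt.fun_sum fun n _ => (hφ (n + k) y).fun_const_smul (c n)
  simpa only [add_zero, zero_add] using iteratedDeriv_of_hasDerivAt_neg_succ hsum l 0 x

lemma sum_smul_iteratedDeriv_of_hasDerivAt_neg_succ
    (hφ : ∀ n x, HasDerivAt (φ n) (-φ (n + 1) x) x) (N D : ℕ) (a c : ℕ → 𝕜) (x : 𝕜) :
    ∑ l ∈ range (D + 1), a l • iteratedDeriv l (fun y => ∑ n ∈ range (N + 1), c n • φ n y) x =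
      ∑ m ∈ range (N + D + 1), (∑ l ∈ range (min m D + 1),
        (-1) ^ l * a l * if m - l ≤ N then c (m - l) else 0) • φ m x := by
  calc _ = ∑ l ∈ range (D + 1), ∑ n ∈ range (N + 1), ((-1) ^ l * a l * c n) • φ (n + l) x := by
        simp only [iteratedDeriv_sum_smul_of_hasDerivAt_neg_succ hφ, smul_sum, smul_smul,
          mul_comm, mul_left_comm]
    _ = ∑ m ∈ range (N + D + 1), ∑ l ∈ range (min m D + 1),
          if m - l ≤ N then ((-1) ^ l * a l * c (m - l)) • φ (m - l + l) x else 0 :=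
        sum_range_sum_range_eq_sum_range_add N D _
    _ = _ := by
        refine sum_congr rfl fun m _ => ?_
        rw [sum_smul]
        refine sum_congr rfl fun l hl => ?_
        have hlm : l ≤ m := by rw [mem_range] at hl; omega
        rw [Nat.sub_add_cancel hlm, mul_ite, mul_zero, ite_smul, zero_smul]

end DerivativeLadder

lemma hasDerivAt_exp_neg_sq_div_two (x : ℝ) :
    HasDerivAt (fun y : ℝ => Real.exp (-y ^ 2 / 2)) (-x * Real.exp (-x ^ 2 / 2)) x := by
  have hexponent : HasDerivAt (fun y : ℝ => -y ^ 2 / 2) (-x) x :=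
    ((hasDerivAt_pow 2 x).fun_neg.div_const 2).congr_deriv (by push_cast; ring)
  simpa only [mul_comm] using hexponent.exp

lemma hasDerivAt_hermite_mul_exp_neg_sq_div_two (n : ℕ) (x : ℝ) :
    HasDerivAt (fun y : ℝ => aeval y (hermite n) * Real.exp (-y ^ 2 / 2))
      (-(aeval x (hermite (n + 1)) * Real.exp (-x ^ 2 / 2))) x := by
  refine (((hermite n).hasDerivAt_aeval x).mul (hasDerivAt_exp_neg_sq_div_two x)).congr_deriv ?_
  rw [hermite_succ, map_sub, map_mul, aeval_X]
  ring

lemma rpow_neg_half_eq_sqrt_mul {T : ℝ} (hT : 0 < T) (s : ℝ) :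
    T ^ (-(s / 2)) = √T * T ^ (-((s + 1) / 2)) := by
  rw [Real.sqrt_eq_rpow, ← Real.rpow_add hT]
  ring_nf

lemma hasDerivAt_hermiteBasis {T : ℝ} (hT : 0 < T) (n : ℕ) (ξ : ℝ) :
    HasDerivAt (hermiteBasis T n) (-(√T * hermiteBasis T (n + 1) ξ)) ξ := by
  have hfactor : hermiteBasis T n = fun y => ((√(2 * Real.pi))⁻¹ * T ^ (-(((n : ℝ) + 1) / 2))) *
      (aeval y (hermite n) * Real.exp (-y ^ 2 / 2)) :=
    funext fun y => mul_assoc _ _ _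
  rw [hfactor]
  refine ((hasDerivAt_hermite_mul_exp_neg_sq_div_two n ξ).const_mul _).congr_deriv ?_
  rw [hermiteBasis, rpow_neg_half_eq_sqrt_mul hT, Nat.cast_succ]
  ring

lemma hasDerivAt_hermiteBasis_sub_div_sqrt {T : ℝ} (hT : 0 < T) (u : ℝ) (n : ℕ) (v : ℝ) :
    HasDerivAt (fun w => hermiteBasis T n ((w - u) / √T))
      (-hermiteBasis T (n + 1) ((v - u) / √T)) v := by
  have hsqrt : √T ≠ 0 := (Real.sqrt_pos.2 hT).ne'
  have hrescale : HasDerivAt (fun w => (w - u) / √T) (1 / √T) v :=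
    ((hasDerivAt_id v).sub_const u).div_const _
  refine ((hasDerivAt_hermiteBasis hT n _).comp v hrescale).congr_deriv ?_
  field_simp

theorem wigner_potential_hermite_expansion_general {T : ℝ} (hT : 0 < T) (u : ℝ) (N D : ℕ)
    (a c : ℕ → ℝ) (v : ℝ) :
    -(∑ l ∈ range (D + 1), if Odd l then
        a l * iteratedDeriv l
          (fun w => ∑ n ∈ range (N + 1), c n * hermiteBasis T n ((w - u) / √T)) v
      else 0) =
      ∑ n ∈ range (N + D + 1), (∑ l ∈ range (min n D + 1), if Odd l then
          a l * (if n - l ≤ N then c (n - l) else 0)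
        else 0) * hermiteBasis T n ((v - u) / √T) := by
  have hneg (l : ℕ) (y : ℝ) :
      -(if Odd l then a l * y else 0) = (if Odd l then -a l else 0) * y := by
    rw [ite_mul, zero_mul, neg_mul, apply_ite Neg.neg, neg_zero]
  have hsign (l : ℕ) (y : ℝ) :
      (-1) ^ l * (if Odd l then -a l else 0) * y = if Odd l then a l * y else 0 := by
    split_ifs with hl
    · rw [hl.neg_one_pow, neg_one_mul, neg_neg]
    · rw [mul_zero, zero_mul]
  simpa only [← sum_neg_distrib, hneg, hsign, smul_eq_mul] using
    sum_smul_iteratedDeriv_of_hasDerivAt_neg_succ (hasDerivAt_hermiteBasis_sub_div_sqrt hT u) N D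
      (fun l => if Odd l then -a l else 0) c v

/-- Hermite-expansion representation of the nonlocal Wigner potential term: for a polynomial
potential `V` of degree `D` and `f(v) = Σ_{n=0}^N f_n H_{T,n}((v-u)/√T)`,
`- Σ_{λ odd, 1 ≤ λ ≤ D} ((-ℏ²/4)^{(λ-1)/2}/λ!) V^{(λ)}(x) f^{(λ)}(v)
  = Σ_{n=0}^{N+D} g_n H_{T,n}((v-u)/√T)` with
`g_n = Σ_{λ odd, 1 ≤ λ ≤ min(n,D)} ((-ℏ²/4)^{(λ-1)/2}/λ!) V^{(λ)}(x) f_{n-λ}`. -/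
theorem wigner_potential_hermite_expansion (ℏ T u x : ℝ) (hℏ : 0 < ℏ) (hT : 0 < T)
    (N : ℕ) (V : Polynomial ℝ) (D : ℕ) (hD : V.natDegree = D) (c : ℕ → ℝ) (f : ℝ → ℝ)
    (hf : ∀ v : ℝ, f v = ∑ n ∈ Finset.range (N + 1),
      c n * hermiteBasis T n ((v - u) / Real.sqrt T))
    (g : ℕ → ℝ)
    (hg : ∀ n : ℕ, g n = ∑ l ∈ Finset.range (min n D + 1),
      if Odd l then
        ((-ℏ ^ 2 / 4) ^ ((l - 1) / 2) / (l.factorial : ℝ)) *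
          (Polynomial.derivative^[l] V).eval x * (if n - l ≤ N then c (n - l) else 0)
      else 0) :
    ∀ v : ℝ,
      -(∑ l ∈ Finset.range (D + 1),
          if Odd l then
            ((-ℏ ^ 2 / 4) ^ ((l - 1) / 2) / (l.factorial : ℝ)) *
              (Polynomial.derivative^[l] V).eval x * iteratedDeriv l f v
          else 0) =
        ∑ n ∈ Finset.range (N + D + 1), g n * hermiteBasis T n ((v - u) / Real.sqrt T) := by
  rw [funext hf, funext hg]
  exact wigner_potential_hermite_expansion_general hT u N D _ c
end

section
/- Global hyperbolicity of the regularized M=3 moment system in 1D: let ρ > 0, P > 0, u ∈ ℝ, f₃ ∈ ℝ, and set T = P/ρ. Let M be the 4×4 real matrix (the coefficient matrix of the quasi-linear system in the variables (ρ, u, P/2, f₃)) with rows [u, ρ, 0, 0], [0, u, 2/ρ, 0], [0, (3/2)P, u, 3], [-P²/(2ρ²), 0, P/ρ, u]. Then the characteristic polynomial of M is (λ-u)⁴ - 6T(λ-u)² + 3T² = T² He₄((λ-u)/√T); consequently M has four distinct real eigenvalues u + c√T with c ∈ { √(3+√6), -√(3+√6), √(3-√6), -√(3-√6) } (the roots of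 He₄), and M is diagonalizable over ℝ. -/
open Matrix Polynomial

/-! In units of the thermal speed `√T` around the mean velocity `u`, the coefficient matrix has
characteristic polynomial `He₄`. Since `He₄(x) = (x² - 3)² - 6` and `0 < √6 < 3`, it has four
distinct real roots. A matrix with as many distinct eigenvalues as rows is diagonalizable, because
eigenvectors of distinct eigenvalues are linearly independent; so no explicit eigenvectors are
needed. -/

theorem exists_inv_mul_mul_eq_diagonal_of_isRoot_charpoly {K n : Type*} [Field K] [Fintype n]
    [DecidableEq n] (A : Matrix n n K) {μ : n → K} (hμ : Function.Injective μ)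
    (hroot : ∀ i, A.charpoly.IsRoot (μ i)) :
    ∃ Q : Matrix n n K, IsUnit Q.det ∧ Q⁻¹ * A * Q = diagonal μ := by
  have heigenvalue : ∀ i, Module.End.HasEigenvalue (toLin' A) (μ i) := fun i => by
    rw [Module.End.hasEigenvalue_iff_isRoot_charpoly, charpoly_toLin']
    exact hroot i
  choose v hv using fun i => (heigenvalue i).exists_hasEigenvector
  have hlin : LinearIndependent K v :=
    Module.End.eigenvectors_linearIndependent' (toLin' A) μ hμ v hv
  let Q : Matrix n n K := (of v)ᵀ
  have hQ : IsUnit Q.det :=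
    (isUnit_iff_isUnit_det Q).mp (linearIndependent_cols_iff_isUnit.mp hlin)
  have hAQ : A * Q = Q * diagonal μ := by
    ext i j
    have hcol : (A *ᵥ v j) i = μ j * v j i := congrFun (hv j).apply_eq_smul i
    rw [mul_diagonal, mul_comm]
    exact hcol
  exact ⟨Q, hQ, by rw [mul_assoc, hAQ, nonsing_inv_mul_cancel_left _ _ hQ]⟩

section HermiteFour

theorem hermite_four : hermite 4 = X ^ 4 - 6 * X ^ 2 + 3 := by
  simp only [hermite_succ, hermite_zero, map_one, derivative_X, derivative_zero, derivative_one,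
    derivative_mul, derivative_sub, derivative_add]
  ring

theorem aeval_hermite_four {R : Type*} [CommRing R] (x : R) :
    aeval x (hermite 4) = x ^ 4 - 6 * x ^ 2 + 3 := by
  rw [hermite_four]
  simp [map_ofNat]

theorem aeval_hermite_four_eq_zero_iff {R : Type*} [CommRing R] {x : R} :
    aeval x (hermite 4) = 0 ↔ (x ^ 2 - 3) ^ 2 = 6 := by
  have hsquare : x ^ 4 - 6 * x ^ 2 + 3 = (x ^ 2 - 3) ^ 2 - 6 := by ring
  rw [aeval_hermite_four, hsquare, sub_eq_zero]

theorem sq_mul_aeval_div_hermite_four {K : Type*} [Field K] {s T : K} (hs : s ≠ 0)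
    (hsT : s ^ 2 = T) (x : K) :
    T ^ 2 * aeval (x / s) (hermite 4) = x ^ 4 - 6 * T * x ^ 2 + 3 * T ^ 2 := by
  rw [aeval_hermite_four, ← hsT]
  field_simp

/-- The four real roots `±√(3 ± √6)` of the Hermite polynomial `He₄`: the wave speeds of the
moment system relative to `u`, in units of `√T`. -/
noncomputable def hermiteFourRoot : Fin 4 → ℝ :=
  ![√(3 + √6), -√(3 + √6), √(3 - √6), -√(3 - √6)]

theorem sqrt_six_lt_three : √6 < 3 := by
  rw [Real.sqrt_lt' three_pos]
  norm_num

theorem aeval_hermiteFourRoot (i : Fin 4) : aeval (hermiteFourRoot i) (hermite 4) = 0 := by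
  have hsq_add : √(3 + √6) ^ 2 = 3 + √6 := Real.sq_sqrt (by positivity)
  have hsq_sub : √(3 - √6) ^ 2 = 3 - √6 := Real.sq_sqrt (sub_nonneg.mpr sqrt_six_lt_three.le)
  rw [aeval_hermite_four_eq_zero_iff]
  fin_cases i <;> simp [hermiteFourRoot, hsq_add, hsq_sub]

theorem injective_vecCons_neg {α : Type*} [AddCommGroup α] [LinearOrder α] [IsOrderedAddMonoid α]
    {a b : α} (hb : 0 < b) (hba : b < a) : Function.Injective ![a, -a, b, -b] := by
  have hmono : StrictMono ![-a, -b, b, a] := by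
    simp [Fin.strictMono_iff_lt_succ, Fin.forall_fin_succ, hba, neg_lt_self hb]
  have hperm : ![a, -a, b, -b] = ![-a, -b, b, a] ∘ ![3, 0, 2, 1] := by
    ext i
    fin_cases i <;> rfl
  rw [hperm]
  exact hmono.injective.comp (by decide)

theorem hermiteFourRoot_injective : Function.Injective hermiteFourRoot := by
  have hsub : 0 < 3 - √6 := sub_pos.mpr sqrt_six_lt_three
  have hsqrt6 : 0 < √6 := by positivity
  exact injective_vecCons_neg (Real.sqrt_pos.mpr hsub)
    (Real.sqrt_lt_sqrt hsub.le (by linarith))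

end HermiteFour

theorem charpoly_fin_four_of_sparse {R : Type*} [CommRing R] (u a b c d e f : R) :
    (!![u, a, 0, 0; 0, u, b, 0; 0, c, u, d; e, 0, f, u] : Matrix (Fin 4) (Fin 4) R).charpoly =
      (X - C u) ^ 4 - C (b * c + d * f) * (X - C u) ^ 2 - C (a * b * d * e) := by
  have hcharmatrix :
      charmatrix !![u, a, 0, 0; 0, u, b, 0; 0, c, u, d; e, 0, f, u] =
        !![X - C u, -C a, 0, 0;
           0, X - C u, -C b, 0;
           0, -C c, X - C u, -C d;
           -C e, 0, -C f, X - C u] := by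
    ext1 i j
    fin_cases i <;> fin_cases j <;> simp
  rw [charpoly, hcharmatrix, det_succ_row_zero]
  simp only [Fin.sum_univ_four, det_fin_three, submatrix_apply, of_apply, cons_val, Fin.succAbove,
    Fin.reduceSucc, Fin.reduceCastSucc, Fin.reduceLT, Fin.coe_ofNat_eq_mod, ↓reduceIte, map_add,
    map_mul]
  ring

section MomentSystem

variable {K : Type*} [Field K]

/-- The coefficient matrix of the one-dimensional regularized quantum hydrodynamic moment system
truncated at order three, in the variables `(ρ, u, P/2, f₃)`; its entries do not involve `f₃`. -/
def regularizedMomentMatrix (ρ P u : K) : Matrix (Fin 4) (Fin 4) K :=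
  !![u, ρ, 0, 0;
     0, u, 2 / ρ, 0;
     0, (3 / 2) * P, u, 3;
     -P ^ 2 / (2 * ρ ^ 2), 0, P / ρ, u]

variable [NeZero (2 : K)] {ρ : K} (P u : K)

theorem charpoly_regularizedMomentMatrix (hρ : ρ ≠ 0) :
    (regularizedMomentMatrix ρ P u).charpoly =
      (X - C u) ^ 4 - C (6 * (P / ρ)) * (X - C u) ^ 2 + C (3 * (P / ρ) ^ 2) := by
  have hquad : 2 / ρ * (3 / 2 * P) + 3 * (P / ρ) = 6 * (P / ρ) := by field_simp; ring
  have hconst : ρ * (2 / ρ) * 3 * (-P ^ 2 / (2 * ρ ^ 2)) = -(3 * (P / ρ) ^ 2) := by field_simp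
  rw [regularizedMomentMatrix, charpoly_fin_four_of_sparse, hquad, hconst, C_neg, sub_neg_eq_add]

theorem isRoot_charpoly_regularizedMomentMatrix (hρ : ρ ≠ 0) {s x : K} (hs : s ^ 2 = P / ρ)
    (hx : aeval x (hermite 4) = 0) :
    (regularizedMomentMatrix ρ P u).charpoly.IsRoot (u + x * s) := by
  rw [aeval_hermite_four] at hx
  simp only [charpoly_regularizedMomentMatrix P u hρ, ← hs, IsRoot.def, eval_add, eval_sub,
    eval_mul, eval_pow, eval_X, eval_C]
  linear_combination s ^ 4 * hx

end MomentSystem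

/-- Global hyperbolicity of the regularized `M = 3` moment system in 1D: the coefficient
matrix of the quasi-linear system in `(ρ, u, P/2, f₃)` has characteristic polynomial
`(λ-u)⁴ - 6T(λ-u)² + 3T² = T² He₄((λ-u)/√T)`, four distinct real eigenvalues `u + c√T`
with `c` the roots `±√(3±√6)` of `He₄`, and is diagonalizable over `ℝ`. -/
theorem regularized_M3_hyperbolic (ρ P u f₃ : ℝ) (hρ : 0 < ρ) (hP : 0 < P)
    (T : ℝ) (hT : T = P / ρ)
    (M : Matrix (Fin 4) (Fin 4) ℝ)
    (hM : M = !![u, ρ, 0, 0;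
                 0, u, 2 / ρ, 0;
                 0, (3 / 2) * P, u, 3;
                 -P ^ 2 / (2 * ρ ^ 2), 0, P / ρ, u])
    (c : Fin 4 → ℝ)
    (hc : c = ![Real.sqrt (3 + Real.sqrt 6), -Real.sqrt (3 + Real.sqrt 6),
                Real.sqrt (3 - Real.sqrt 6), -Real.sqrt (3 - Real.sqrt 6)]) :
    (∀ l : ℝ,
      Matrix.det (l • (1 : Matrix (Fin 4) (Fin 4) ℝ) - M) =
          (l - u) ^ 4 - 6 * T * (l - u) ^ 2 + 3 * T ^ 2 ∧
        (l - u) ^ 4 - 6 * T * (l - u) ^ 2 + 3 * T ^ 2 =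
          T ^ 2 * (Polynomial.aeval ((l - u) / Real.sqrt T)) (Polynomial.hermite 4)) ∧
    (∀ i : Fin 4, (Polynomial.aeval (c i)) (Polynomial.hermite 4) = 0) ∧
    Function.Injective (fun i : Fin 4 => u + c i * Real.sqrt T) ∧
    ∃ Q : Matrix (Fin 4) (Fin 4) ℝ, IsUnit Q.det ∧
      Q⁻¹ * M * Q = Matrix.diagonal (fun i => u + c i * Real.sqrt T) := by
  obtain rfl : M = regularizedMomentMatrix ρ P u := hM
  obtain rfl : c = hermiteFourRoot := hc
  have hTpos : 0 < T := hT ▸ div_pos hP hρ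
  have hsq : √T ^ 2 = T := Real.sq_sqrt hTpos.le
  have hsqrt : √T ≠ 0 := (Real.sqrt_pos.mpr hTpos).ne'
  have hinj : Function.Injective fun i => u + hermiteFourRoot i * √T :=
    (add_right_injective u).comp ((mul_left_injective₀ hsqrt).comp hermiteFourRoot_injective)
  refine ⟨fun l => ⟨?_, (sq_mul_aeval_div_hermite_four hsqrt hsq (l - u)).symm⟩,
    aeval_hermiteFourRoot, hinj,
    exists_inv_mul_mul_eq_diagonal_of_isRoot_charpoly _ hinj fun i =>
      isRoot_charpoly_regularizedMomentMatrix P u hρ.ne' (hsq.trans hT) (aeval_hermiteFourRoot i)⟩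
  rw [smul_one_eq_diagonal, ← scalar_apply, ← eval_charpoly,
    charpoly_regularizedMomentMatrix P u hρ.ne', ← hT]
  simp
end

section
/- Global hyperbolicity of the regularized M=4 moment system in 1D: let ρ > 0, P > 0, u ∈ ℝ, f₃, f₄ ∈ ℝ, and set T = P/ρ. Let M be the 5×5 real matrix (the coefficient matrix of the quasi-linear system in the variables (ρ, u, P/2, f₃, f₄)) with rows [u, ρ, 0, 0, 0], [0, u, 2/ρ, 0, 0], [0, (3/2)P, u, 3, 0], [-P²/(2ρ²), 4f₃, P/ρ, u, 4], [0, 0, -2f₃/ρ, P/ρ, u]. Then the characteristic polynomial of M is (λ-u)⁵ - 10T(λ-u)³ + 15T²(λ-u) = T^{5/2} He₅((λ-u)/√T); in particular it does not depend on f₃ or f₄, M has five distinct real eigenvalues u and u ± √((5±√10) T) (i.e. u + c√T for the roots c of He₅), and M is diagonalizable over ℝ. -/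
open Matrix Polynomial

/-!
Write `T = P / ρ` and expand `det (λ - M)` over the cycles of the graph of off-diagonal entries.
The three 2-cycles contribute `-(3T + 3T + 4T) (λ - u)³`, and the only pair of disjoint 2-cycles
together with the only 4-cycle contribute `(12T² + 3T²) (λ - u)`. The entries `4f₃` and `-2f₃/ρ`
each close exactly one 3-cycle, of weights `24f₃/ρ` and `-24f₃/ρ`, so `f₃` cancels. What is left is
the rescaled Hermite polynomial; as `He₅(x) = x ((x² - 5)² - 10)` has five distinct real roots, so
has the characteristic polynomial of `M`, and eigenvectors for distinct eigenvalues form a basis.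
-/

section Diagonalization

variable {K n : Type*} [Field K] [Fintype n] [DecidableEq n]

theorem exists_inv_mul_mul_eq_diagonal (A : Matrix n n K) {μ : n → K}
    (hμ : Function.Injective μ) (hdet : ∀ i, (μ i • (1 : Matrix n n K) - A).det = 0) :
    ∃ Q : Matrix n n K, IsUnit Q.det ∧ Q⁻¹ * A * Q = diagonal μ := by
  choose v hv_ne hv_ker using fun i ↦ exists_mulVec_eq_zero_iff.mpr (hdet i)
  have hv (i : n) : A *ᵥ v i = μ i • v i := by
    simpa only [sub_mulVec, smul_mulVec, one_mulVec, sub_eq_zero, eq_comm] using hv_ker i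
  have hv_indep : LinearIndependent K v :=
    Module.End.eigenvectors_linearIndependent' A.toLin' μ hμ v fun i ↦
      ⟨Module.End.mem_eigenspace_iff.mpr (hv i), hv_ne i⟩
  let Q : Matrix n n K := (of v)ᵀ
  have hQ : IsUnit Q.det :=
    (isUnit_iff_isUnit_det Q).mp (linearIndependent_cols_iff_isUnit.mp hv_indep)
  have hAQ : A * Q = Q * diagonal μ := by
    ext i j
    rw [mul_diagonal, mul_comm]
    exact congrFun (hv j) i
  exact ⟨Q, hQ, by rw [Matrix.mul_assoc, hAQ, nonsing_inv_mul_cancel_left _ _ hQ]⟩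

end Diagonalization

section HermiteFive

theorem aeval_hermite_five {R : Type*} [CommRing R] (x : R) :
    aeval x (hermite 5) = x ^ 5 - 10 * x ^ 3 + 15 * x := by
  simp only [hermite_succ, hermite_zero, mul_one, derivative_one, sub_zero, derivative_X,
    derivative_sub, derivative_mul, one_mul, add_zero, aeval_sub, map_mul, aeval_X, map_one,
    map_add]
  ring

theorem pow_five_mul_aeval_div_hermite_five {K : Type*} [Field K] {s : K} (hs : s ≠ 0) (x : K) :
    s ^ 5 * aeval (x / s) (hermite 5) = x ^ 5 - 10 * s ^ 2 * x ^ 3 + 15 * (s ^ 2) ^ 2 * x := by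
  rw [aeval_hermite_five]
  field_simp

theorem aeval_hermite_five_eq_zero_of_sq_eq {R : Type*} [CommRing R] {x t : R}
    (hx : x ^ 2 = 5 + t) (ht : t ^ 2 = 10) : aeval x (hermite 5) = 0 :=
  calc
    aeval x (hermite 5) = x * ((x ^ 2 - 5) ^ 2 - 10) := by rw [aeval_hermite_five]; ring
    _ = 0 := by rw [hx, add_sub_cancel_left, ht, sub_self, mul_zero]

/-- The roots `0, ±√(5 + √10), ±√(5 - √10)` of `He₅`, listed in the order of the vector `c` of
`regularized_M4_hyperbolic`. -/
noncomputable def hermiteFiveRoot : Fin 5 → ℝ :=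
  ![0, √(5 + √10), -√(5 + √10), √(5 - √10), -√(5 - √10)]

theorem sqrt_ten_lt_five : √10 < 5 := by
  rw [Real.sqrt_lt' (by norm_num)]
  norm_num

theorem aeval_hermiteFiveRoot (i : Fin 5) : aeval (hermiteFiveRoot i) (hermite 5) = 0 := by
  have h10 : √10 ^ 2 = 10 := Real.sq_sqrt (by norm_num)
  have hplus : √(5 + √10) ^ 2 = 5 + √10 := Real.sq_sqrt (by positivity)
  have hminus : √(5 - √10) ^ 2 = 5 + -√10 := Real.sq_sqrt (sub_nonneg.mpr sqrt_ten_lt_five.le)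
  have h10' : (-√10) ^ 2 = 10 := by rw [neg_sq, h10]
  fin_cases i
  · exact (aeval_hermite_five 0).trans (by norm_num)
  · exact aeval_hermite_five_eq_zero_of_sq_eq hplus h10
  · exact aeval_hermite_five_eq_zero_of_sq_eq ((neg_sq _).trans hplus) h10
  · exact aeval_hermite_five_eq_zero_of_sq_eq hminus h10'
  · exact aeval_hermite_five_eq_zero_of_sq_eq ((neg_sq _).trans hminus) h10'

theorem injective_zero_neg_pairs {R : Type*} [AddCommGroup R] [LinearOrder R] [IsOrderedAddMonoid R]
    {a b : R} (hb : 0 < b) (hba : b < a) : Function.Injective ![0, a, -a, b, -b] := by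
  have sorted : StrictMono ![-a, -b, 0, b, a] := by simp [hb, hba]
  have reorder : ![0, a, -a, b, -b] = ![-a, -b, 0, b, a] ∘ ![2, 4, 0, 3, 1] := by
    ext i
    fin_cases i <;> rfl
  rw [reorder]
  exact sorted.injective.comp (by decide)

theorem hermiteFiveRoot_injective : Function.Injective hermiteFiveRoot := by
  have h10 : 0 < √(10 : ℝ) := by positivity
  exact injective_zero_neg_pairs (Real.sqrt_pos.mpr (sub_pos.mpr sqrt_ten_lt_five))
    (Real.sqrt_lt_sqrt (sub_nonneg.mpr sqrt_ten_lt_five.le) (by linarith))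

end HermiteFive

section MomentMatrix

/-- In `det (x - A)`, each cycle of off-diagonal entries contributes minus its weight, and disjoint
cycles multiply. -/
theorem det_smul_one_sub_sparseHessenberg {R : Type*} [CommRing R] (l u a b p q r s t w v z : R) :
    (l • (1 : Matrix (Fin 5) (Fin 5) R) -
      !![u, a, 0, 0, 0;
         0, u, b, 0, 0;
         0, p, u, q, 0;
         r, s, t, u, w;
         0, 0, v, z, u]).det =
      (l - u) ^ 5 - (b * p + q * t + w * z) * (l - u) ^ 3 - (b * q * s + q * w * v) * (l - u) ^ 2 +
        (b * p * (w * z) - a * b * q * r) * (l - u) := by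
  have entries : l • (1 : Matrix (Fin 5) (Fin 5) R) -
      !![u, a, 0, 0, 0; 0, u, b, 0, 0; 0, p, u, q, 0; r, s, t, u, w; 0, 0, v, z, u] =
        !![l - u, -a, 0, 0, 0;
           0, l - u, -b, 0, 0;
           0, -p, l - u, -q, 0;
           -r, -s, -t, l - u, -w;
           0, 0, -v, -z, l - u] := by
    ext i j
    fin_cases i <;> fin_cases j <;> simp
  rw [entries]
  eval_det
  ring

variable {K : Type*} [Field K]

/-- The coefficient matrix of the regularized moment system truncated at `M = 4`, in the variables
`(ρ, u, P/2, f₃, f₄)`. -/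
def momentMatrix (ρ P u f₃ : K) : Matrix (Fin 5) (Fin 5) K :=
  !![u, ρ, 0, 0, 0;
     0, u, 2 / ρ, 0, 0;
     0, (3 / 2) * P, u, 3, 0;
     -P ^ 2 / (2 * ρ ^ 2), 4 * f₃, P / ρ, u, 4;
     0, 0, -2 * f₃ / ρ, P / ρ, u]

theorem det_smul_one_sub_momentMatrix [NeZero (2 : K)] {ρ : K} (hρ : ρ ≠ 0) (P u f₃ l : K) :
    (l • (1 : Matrix (Fin 5) (Fin 5) K) - momentMatrix ρ P u f₃).det =
      (l - u) ^ 5 - 10 * (P / ρ) * (l - u) ^ 3 + 15 * (P / ρ) ^ 2 * (l - u) := by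
  have two_cycles : 2 / ρ * (3 / 2 * P) + 3 * (P / ρ) + 4 * (P / ρ) = 10 * (P / ρ) := by
    field_simp
    ring
  have three_cycles : 2 / ρ * 3 * (4 * f₃) + 3 * 4 * (-2 * f₃ / ρ) = 0 := by ring
  have disjoint_pair_and_four_cycle : 2 / ρ * (3 / 2 * P) * (4 * (P / ρ)) -
      ρ * (2 / ρ) * 3 * (-P ^ 2 / (2 * ρ ^ 2)) = 15 * (P / ρ) ^ 2 := by
    field_simp
    ring
  rw [momentMatrix, det_smul_one_sub_sparseHessenberg, two_cycles, three_cycles,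
    disjoint_pair_and_four_cycle, zero_mul, sub_zero]

end MomentMatrix

/-- Global hyperbolicity of the regularized `M = 4` moment system in 1D: the coefficient
matrix of the quasi-linear system in `(ρ, u, P/2, f₃, f₄)` has characteristic polynomial
`(λ-u)⁵ - 10T(λ-u)³ + 15T²(λ-u) = T^{5/2} He₅((λ-u)/√T)` (independent of `f₃, f₄`),
five distinct real eigenvalues `u + c√T` with `c` the roots `0, ±√(5±√10)` of `He₅`,
and is diagonalizable over `ℝ`. -/
theorem regularized_M4_hyperbolic (ρ P u f₃ f₄ : ℝ) (hρ : 0 < ρ) (hP : 0 < P)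
    (T : ℝ) (hT : T = P / ρ)
    (M : Matrix (Fin 5) (Fin 5) ℝ)
    (hM : M = !![u, ρ, 0, 0, 0;
                 0, u, 2 / ρ, 0, 0;
                 0, (3 / 2) * P, u, 3, 0;
                 -P ^ 2 / (2 * ρ ^ 2), 4 * f₃, P / ρ, u, 4;
                 0, 0, -2 * f₃ / ρ, P / ρ, u])
    (c : Fin 5 → ℝ)
    (hc : c = ![0, Real.sqrt (5 + Real.sqrt 10), -Real.sqrt (5 + Real.sqrt 10),
                Real.sqrt (5 - Real.sqrt 10), -Real.sqrt (5 - Real.sqrt 10)]) :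
    (∀ l : ℝ,
      Matrix.det (l • (1 : Matrix (Fin 5) (Fin 5) ℝ) - M) =
          (l - u) ^ 5 - 10 * T * (l - u) ^ 3 + 15 * T ^ 2 * (l - u) ∧
        (l - u) ^ 5 - 10 * T * (l - u) ^ 3 + 15 * T ^ 2 * (l - u) =
          Real.sqrt T ^ 5 * (Polynomial.aeval ((l - u) / Real.sqrt T)) (Polynomial.hermite 5)) ∧
    (∀ i : Fin 5, (Polynomial.aeval (c i)) (Polynomial.hermite 5) = 0) ∧
    Function.Injective (fun i : Fin 5 => u + c i * Real.sqrt T) ∧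
    ∃ Q : Matrix (Fin 5) (Fin 5) ℝ, IsUnit Q.det ∧
      Q⁻¹ * M * Q = Matrix.diagonal (fun i => u + c i * Real.sqrt T) := by
  have hT_pos : 0 < T := hT ▸ div_pos hP hρ
  have hs_ne : √T ≠ 0 := (Real.sqrt_pos.mpr hT_pos).ne'
  have hdet (l : ℝ) : det (l • (1 : Matrix (Fin 5) (Fin 5) ℝ) - M) =
      (l - u) ^ 5 - 10 * T * (l - u) ^ 3 + 15 * T ^ 2 * (l - u) := by
    rw [hM, hT]
    exact det_smul_one_sub_momentMatrix hρ.ne' P u f₃ l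
  have hscale (l : ℝ) : (l - u) ^ 5 - 10 * T * (l - u) ^ 3 + 15 * T ^ 2 * (l - u) =
      √T ^ 5 * aeval ((l - u) / √T) (hermite 5) := by
    rw [pow_five_mul_aeval_div_hermite_five hs_ne, Real.sq_sqrt hT_pos.le]
  have hroot (i : Fin 5) : aeval (c i) (hermite 5) = 0 := hc ▸ aeval_hermiteFiveRoot i
  have hinj : Function.Injective fun i ↦ u + c i * √T :=
    (add_right_injective u).comp
      ((mul_left_injective₀ hs_ne).comp (hc ▸ hermiteFiveRoot_injective))
  refine ⟨fun l ↦ ⟨hdet l, hscale l⟩, hroot, hinj, exists_inv_mul_mul_eq_diagonal M hinj fun i ↦ ?_⟩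
  rw [hdet, hscale, add_sub_cancel_left, mul_div_cancel_right₀ _ hs_ne, hroot, mul_zero]
end

section
/- Second-order initial change of the pressure due to the quantum correction: let V : ℝ → ℝ be smooth, ħ > 0, τ > 0, and let (ρ, u, P, f₃) be smooth real fields on ℝ × ℝ with ρ > 0 and P > 0, solving the M=3 quantum hydrodynamic system for all (t,x), with initial data ρ(0,x) = P(0,x) = e^{-V(x)}, u(0,x) = 0, f₃(0,x) = 0. Then ∂P/∂t(0,x) = 0 and ∂²P/∂t²(0,x) = -(ħ²/4) d/dx [ V'''(x) e^{-V(x)} ] for all x. -/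
/-!
At time `0` the fluid is an isothermal hydrostatic equilibrium (`∂ₓP = -ρ V'`, `u = 0`), so
`∂ₜu = 0`, and the classical terms of the heat-flux equation cancel because `P / ρ` is constant:
only the quantum term survives, `∂ₜf₃ = (ℏ² / 24) V''' ρ`. Solved for `∂ₜP`, the energy equation
reads `∂ₜP = -u ∂ₓP - 3 P ∂ₓu - 6 ∂ₓf₃`. This vanishes at time `0`, and so does every term of its
time derivative except `-6 ∂ₜ∂ₓf₃ = -6 ∂ₓ∂ₜf₃`.
-/

open Filter Function Topology

section PartialDerivatives

variable {𝕜 E F : Type*} [NontriviallyNormedField 𝕜] [NormedAddCommGroup E] [NormedSpace 𝕜 E]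
  [NormedAddCommGroup F] [NormedSpace 𝕜 F]

lemma hasDerivAt_comp_prodMk_left {f : 𝕜 × E → F} {f' : 𝕜 × E →L[𝕜] F} {t : 𝕜} {x : E}
    (hf : HasFDerivAt f f' (t, x)) : HasDerivAt (fun s => f (s, x)) (f' (1, 0)) t :=
  hf.comp_hasDerivAt t ((hasDerivAt_id t).prodMk (hasDerivAt_const t x))

lemma hasDerivAt_comp_prodMk_right {f : E × 𝕜 → F} {f' : E × 𝕜 →L[𝕜] F} {t : E} {x : 𝕜}
    (hf : HasFDerivAt f f' (t, x)) : HasDerivAt (fun y => f (t, y)) (f' (0, 1)) x :=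
  hf.comp_hasDerivAt x ((hasDerivAt_const x t).prodMk (hasDerivAt_id x))

theorem hasDerivAt_deriv_prodMk_comm {f : 𝕜 × 𝕜 → F} {t x : 𝕜} {n : WithTop ℕ∞}
    (hf : ContDiffAt 𝕜 n f (t, x)) (hn : minSmoothness 𝕜 2 ≤ n) :
    HasDerivAt (fun s => deriv (fun y => f (s, y)) x)
      (deriv (fun y => deriv (fun s => f (s, y)) t) x) t := by
  have h2n : 2 ≤ n := le_minSmoothness.trans hn
  have hfd : ∀ᶠ p in 𝓝 (t, x), HasFDerivAt f (fderiv 𝕜 f p) p :=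
    ((hf.of_le h2n).eventually (by simp)).mono fun p hp =>
      (hp.differentiableAt two_ne_zero).hasFDerivAt
  have hx : (fun s => deriv (fun y => f (s, y)) x) =ᶠ[𝓝 t] fun s => fderiv 𝕜 f (s, x) (0, 1) :=
    ((Continuous.prodMk_left x).tendsto t |>.eventually hfd).mono fun s hs =>
      (hasDerivAt_comp_prodMk_right hs).deriv
  have ht : (fun y => deriv (fun s => f (s, y)) t) =ᶠ[𝓝 x] fun y => fderiv 𝕜 f (t, y) (1, 0) :=
    ((Continuous.prodMk_right t).tendsto x |>.eventually hfd).mono fun y hy =>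
      (hasDerivAt_comp_prodMk_left hy).deriv
  have hf' : HasFDerivAt (fderiv 𝕜 f) (fderiv 𝕜 (fderiv 𝕜 f) (t, x)) (t, x) :=
    ((hf.fderiv_right (m := 1) h2n).differentiableAt one_ne_zero).hasFDerivAt
  have htx : HasDerivAt (fun s => fderiv 𝕜 f (s, x) (0, 1))
      (fderiv 𝕜 (fderiv 𝕜 f) (t, x) (1, 0) (0, 1)) t := by
    simpa using (hasDerivAt_comp_prodMk_left hf').clm_apply (hasDerivAt_const t (0, 1))
  have hxt : HasDerivAt (fun y => fderiv 𝕜 f (t, y) (1, 0))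
      (fderiv 𝕜 (fderiv 𝕜 f) (t, x) (0, 1) (1, 0)) x := by
    simpa using (hasDerivAt_comp_prodMk_right hf').clm_apply (hasDerivAt_const x (1, 0))
  rw [ht.deriv_eq, hxt.deriv, ← (hf.isSymmSndFDerivAt hn).eq (1, 0) (0, 1)]
  exact htx.congr_of_eventuallyEq hx

end PartialDerivatives

section BalanceLaws

/-- The momentum equation of the `M = 3` quantum hydrodynamic system, at the point `(t, x)`. -/
def MomentumBalanceAt (V : ℝ → ℝ) (ρ u P : ℝ → ℝ → ℝ) (t x : ℝ) : Prop :=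
  ρ t x * deriv (fun s => u s x) t + ρ t x * u t x * deriv (fun y => u t y) x +
    deriv (fun y => P t y) x = -(ρ t x) * deriv V x

/-- The energy equation of the `M = 3` quantum hydrodynamic system, at the point `(t, x)`;
`P / 2` is the internal energy density. -/
def EnergyBalanceAt (u P f₃ : ℝ → ℝ → ℝ) (t x : ℝ) : Prop :=
  deriv (fun s => P s x / 2) t + u t x * deriv (fun y => P t y / 2) x +
    (3 / 2) * P t x * deriv (fun y => u t y) x + 3 * deriv (fun y => f₃ t y) x = 0

/-- The equation for the heat flux `f₃` in the `M = 3` quantum hydrodynamic system, at the point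
`(t, x)`. The collision term `-f₃ / τ` is written `-ν f₃` with the relaxation rate `ν = 1 / τ`, so
that `ν = 0` is the collisionless system. -/
def HeatFluxBalanceAt (ℏ ν : ℝ) (V : ℝ → ℝ) (ρ u P f₃ : ℝ → ℝ → ℝ) (t x : ℝ) : Prop :=
  deriv (fun s => f₃ s x) t - (P t x) ^ 2 / (2 * (ρ t x) ^ 2) * deriv (fun y => ρ t y) x +
    P t x / (2 * ρ t x) * deriv (fun y => P t y) x + u t x * deriv (fun y => f₃ t y) x =
    -(ν * f₃ t x) + (ℏ ^ 2 / 24) * iteratedDeriv 3 V x * ρ t x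

variable {ℏ ν : ℝ} {V : ℝ → ℝ} {ρ u P f₃ : ℝ → ℝ → ℝ} {t x : ℝ}

theorem MomentumBalanceAt.deriv_velocity_eq_zero (h : MomentumBalanceAt V ρ u P t x)
    (hρ : ρ t x ≠ 0) (hu : u t x = 0)
    (hydrostatic : deriv (fun y => P t y) x = -(ρ t x) * deriv V x) :
    deriv (fun s => u s x) t = 0 := by
  simpa [MomentumBalanceAt, hydrostatic, hu, hρ] using h

theorem HeatFluxBalanceAt.deriv_heatFlux_of_isothermal
    (h : HeatFluxBalanceAt ℏ ν V ρ u P f₃ t x) (hu : u t x = 0) (hf₃ : f₃ t x = 0)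
    {T : ℝ} (isothermal : ∀ y, P t y = T * ρ t y) :
    deriv (fun s => f₃ s x) t = (ℏ ^ 2 / 24) * (iteratedDeriv 3 V x * ρ t x) := by
  have classical_terms_cancel :
      (T * ρ t x) ^ 2 / (2 * ρ t x ^ 2) * deriv (fun y => ρ t y) x =
        T * ρ t x / (2 * ρ t x) * (T * deriv (fun y => ρ t y) x) := by
    field_simp
  simp only [HeatFluxBalanceAt, isothermal, deriv_const_mul_field, hu, hf₃] at h
  linear_combination h + classical_terms_cancel

theorem EnergyBalanceAt.deriv_pressure (h : EnergyBalanceAt u P f₃ t x) :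
    deriv (fun s => P s x) t = -(u t x * deriv (fun y => P t y) x) -
      3 * (P t x * deriv (fun y => u t y) x) - 6 * deriv (fun y => f₃ t y) x := by
  simp only [EnergyBalanceAt, deriv_div_const] at h
  linear_combination 2 * h

theorem iteratedDeriv_two_pressure_of_energyBalanceAt
    (h : ∀ᶠ s in 𝓝 t, EnergyBalanceAt u P f₃ s x) (huC : ContDiffAt ℝ 2 (uncurry u) (t, x))
    (hPC : ContDiffAt ℝ 2 (uncurry P) (t, x)) (hf₃C : ContDiffAt ℝ 2 (uncurry f₃) (t, x))
    (hu : ∀ y, u t y = 0) (hut : ∀ y, deriv (fun s => u s y) t = 0) :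
    iteratedDeriv 2 (fun s => P s x) t =
      -6 * deriv (fun y => deriv (fun s => f₃ s y) t) x := by
  have dt {g : ℝ → ℝ → ℝ} (hg : ContDiffAt ℝ 2 (uncurry g) (t, x)) :
      HasDerivAt (fun s => g s x) (deriv (fun s => g s x) t) t :=
    (hasDerivAt_comp_prodMk_left
      (hg.differentiableAt two_ne_zero).hasFDerivAt).differentiableAt.hasDerivAt
  have dtdx {g : ℝ → ℝ → ℝ} (hg : ContDiffAt ℝ 2 (uncurry g) (t, x)) :
      HasDerivAt (fun s => deriv (fun y => g s y) x)
        (deriv (fun y => deriv (fun s => g s y) t) x) t :=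
    hasDerivAt_deriv_prodMk_comm hg (by simp)
  have hPt : deriv (fun s => P s x) =ᶠ[𝓝 t] fun s => -(u s x * deriv (fun y => P s y) x) -
      3 * (P s x * deriv (fun y => u s y) x) - 6 * deriv (fun y => f₃ s y) x :=
    h.mono fun s hs => hs.deriv_pressure
  have hPtt := (((dt huC).mul (dtdx hPC)).neg.sub
    (((dt hPC).mul (dtdx huC)).const_mul 3)).sub ((dtdx hf₃C).const_mul 6)
  rw [iteratedDeriv_succ, iteratedDeriv_one, hPt.deriv_eq]
  refine hPtt.deriv.trans ?_
  simp [hu, hut]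

theorem quantum_M3_pressure_initial_change_general {T c : ℝ} (hT : T ≠ 0) (hc : c ≠ 0)
    (hV : ContDiff ℝ 3 V) (huC : ContDiff ℝ 2 (uncurry u)) (hPC : ContDiff ℝ 2 (uncurry P))
    (hf₃C : ContDiff ℝ 2 (uncurry f₃))
    (momentum : ∀ x, MomentumBalanceAt V ρ u P 0 x)
    (energy : ∀ x, ∀ᶠ t in 𝓝 0, EnergyBalanceAt u P f₃ t x)
    (heatFlux : ∀ x, HeatFluxBalanceAt ℏ ν V ρ u P f₃ 0 x)
    (hρ0 : ∀ x, ρ 0 x = c * Real.exp (-V x / T)) (hP0 : ∀ x, P 0 x = T * ρ 0 x)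
    (hu0 : ∀ x, u 0 x = 0) (hf₃0 : ∀ x, f₃ 0 x = 0) (x : ℝ) :
    deriv (fun s => P s x) 0 = 0 ∧
      iteratedDeriv 2 (fun s => P s x) 0 =
        -(ℏ ^ 2 / 4) * deriv (fun y => iteratedDeriv 3 V y * ρ 0 y) x := by
  have hρ_ne (y : ℝ) : ρ 0 y ≠ 0 := by simp [hρ0, hc]
  have hydrostatic (y : ℝ) : deriv (fun z => P 0 z) y = -(ρ 0 y) * deriv V y := by
    have hV' : HasDerivAt V (deriv V y) y := (hV.differentiable three_ne_zero y).hasDerivAt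
    have hρ' : HasDerivAt (fun z => ρ 0 z) (ρ 0 y * (-deriv V y / T)) y := by
      simpa only [hρ0, mul_assoc] using! (hV'.neg.div_const T).exp.const_mul c
    simp only [hP0, deriv_const_mul_field, hρ'.deriv]
    field_simp
  have hut (y : ℝ) : deriv (fun s => u s y) 0 = 0 :=
    (momentum y).deriv_velocity_eq_zero (hρ_ne y) (hu0 y) (hydrostatic y)
  have hf₃t (y : ℝ) :
      deriv (fun s => f₃ s y) 0 = (ℏ ^ 2 / 24) * (iteratedDeriv 3 V y * ρ 0 y) :=
    (heatFlux y).deriv_heatFlux_of_isothermal (hu0 y) (hf₃0 y) hP0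
  refine ⟨by simp [(energy x).self_of_nhds.deriv_pressure, hu0, hf₃0], ?_⟩
  rw [iteratedDeriv_two_pressure_of_energyBalanceAt (energy x) huC.contDiffAt hPC.contDiffAt
    hf₃C.contDiffAt hu0 hut]
  simp only [hf₃t, deriv_const_mul_field]
  ring

end BalanceLaws

/-- Second-order initial change of the pressure due to the quantum correction: for smooth
fields solving the `M = 3` quantum hydrodynamic system with initial data
`rho(0,.) = P(0,.) = exp(-V)`, `u(0,.) = 0`, `f3(0,.) = 0`, one has `dP/dt(0,x) = 0` and
`d2P/dt2(0,x) = -(h^2/4) d/dx[V3(x) exp(-V(x))]`. -/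
theorem quantum_M3_pressure_initial_change (V : ℝ → ℝ) (hV : ContDiff ℝ (⊤ : ℕ∞) V)
    (ℏ τ : ℝ) (hℏ : 0 < ℏ) (hτ : 0 < τ)
    (ρ u P f₃ : ℝ → ℝ → ℝ)
    (hρS : ContDiff ℝ (⊤ : ℕ∞) (Function.uncurry ρ))
    (huS : ContDiff ℝ (⊤ : ℕ∞) (Function.uncurry u))
    (hPS : ContDiff ℝ (⊤ : ℕ∞) (Function.uncurry P))
    (hf₃S : ContDiff ℝ (⊤ : ℕ∞) (Function.uncurry f₃))
    (hρpos : ∀ t x : ℝ, 0 < ρ t x) (hPpos : ∀ t x : ℝ, 0 < P t x)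
    (heq1 : ∀ t x : ℝ, deriv (fun s => ρ s x) t + u t x * deriv (fun y => ρ t y) x +
      ρ t x * deriv (fun y => u t y) x = 0)
    (heq2 : ∀ t x : ℝ, ρ t x * deriv (fun s => u s x) t +
      ρ t x * u t x * deriv (fun y => u t y) x + deriv (fun y => P t y) x =
      -(ρ t x) * deriv V x)
    (heq3 : ∀ t x : ℝ, deriv (fun s => P s x / 2) t + u t x * deriv (fun y => P t y / 2) x +
      (3 / 2) * P t x * deriv (fun y => u t y) x + 3 * deriv (fun y => f₃ t y) x = 0)
    (heq4 : ∀ t x : ℝ, deriv (fun s => f₃ s x) t -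
      (P t x) ^ 2 / (2 * (ρ t x) ^ 2) * deriv (fun y => ρ t y) x +
      P t x / (2 * ρ t x) * deriv (fun y => P t y) x + u t x * deriv (fun y => f₃ t y) x =
      -(f₃ t x) / τ + (ℏ ^ 2 / 24) * iteratedDeriv 3 V x * ρ t x)
    (hρ0 : ∀ x : ℝ, ρ 0 x = Real.exp (-V x))
    (hP0 : ∀ x : ℝ, P 0 x = Real.exp (-V x))
    (hu0 : ∀ x : ℝ, u 0 x = 0)
    (hf₃0 : ∀ x : ℝ, f₃ 0 x = 0) :
    ∀ x : ℝ, deriv (fun s => P s x) 0 = 0 ∧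
      iteratedDeriv 2 (fun s => P s x) 0 =
        -(ℏ ^ 2 / 4) * deriv (fun y => iteratedDeriv 3 V y * Real.exp (-V y)) x := by
  simpa [hρ0] using quantum_M3_pressure_initial_change_general (T := 1) (c := 1) (ν := τ⁻¹)
    one_ne_zero one_ne_zero (contDiff_infty.1 hV 3) (contDiff_infty.1 huS 2)
    (contDiff_infty.1 hPS 2) (contDiff_infty.1 hf₃S 2) (heq2 0)
    (fun x => .of_forall fun t => heq3 t x)
    (fun x => by simpa [HeatFluxBalanceAt, neg_div, div_eq_inv_mul] using heq4 0 x)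
    (by simpa using hρ0) (by simp [hρ0, hP0]) hu0 hf₃0
end
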